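/- Suppose 1 < H₀ < H and y₀ < y ≤ exp(log H/(c·log log H)) with c = 1.4·10⁴ and y₀ a sufficiently large absolute constant, and let ν be an integer with 0 ≤ ν ≤ exp((log y)^{1/4}). Then for any real T and any real α < β, one has ∫_T^{T+H} χ_{α,β}(V_y(t)) dt = (H/√(2π))·Σ_{n=0}^{ν} (Φ_n/(2σ)ⁿ)·∫_{−∞}^{+∞} e^{−u²/2} H_{2n}(u)·χ_{a,b}(u) du + O(H·Δ), where a = α·√(2/σ), b = β·√(2/σ), Δ = (log y)^{−1/2}/(log log y) + (log y/log H)^{1/2} + (1/(ν+1))·((log log(ν+2)+1)/σ)^{ν+1}, and the implied O-constant is absolute. -/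

import Mathlib

open MeasureTheory Real Complex Filter

/-- The set of primes `p ≤ y`. -/
noncomputable def primesLe (y : ℝ) : Finset ℕ :=
  (Finset.range (⌊y⌋₊ + 1)).filter Nat.Prime

/-- `V_y(t) = ∑_{p ≤ y} sin(t log p)/√p`. -/
noncomputable def Vy (y t : ℝ) : ℝ :=
  ∑ p ∈ primesLe y, Real.sin (t * Real.log p) / Real.sqrt p

/-- `σ = σ(y) = ∑_{p ≤ y} 1/p`. -/
noncomputable def sigmay (y : ℝ) : ℝ := ∑ p ∈ primesLe y, (1 : ℝ) / p

/-- `J0twoISqrt w = J₀(2i√w) = ∑_{n≥0} wⁿ/(n!)²`, where `J₀` is the Bessel function of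
the first kind of order 0. -/
noncomputable def J0twoISqrt (w : ℂ) : ℂ := ∑' n : ℕ, w ^ n / ((n.factorial : ℂ)) ^ 2

/-- `G(z) = ∏_{p ≤ y} J₀(2i√(z/p))`. -/
noncomputable def Gfun (y : ℝ) (z : ℂ) : ℂ := ∏ p ∈ primesLe y, J0twoISqrt (z / (p : ℂ))

/-- `φ(z) = e^{-z} J₀(2i√z)`. -/
noncomputable def phifun (z : ℂ) : ℂ := Complex.exp (-z) * J0twoISqrt z

/-- `Φ(z) = ∏_{p ≤ y} φ(z/p)`. -/
noncomputable def Phifun (y : ℝ) (z : ℂ) : ℂ := ∏ p ∈ primesLe y, phifun (z / (p : ℂ))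

/-- The `n`-th Taylor coefficient of `Φ` at `0`. -/
noncomputable def PhiCoef (y : ℝ) (n : ℕ) : ℂ := iteratedDeriv n (Phifun y) 0 / (n.factorial : ℂ)

/-- Evaluation of the (probabilists') Hermite polynomial
`H_n(x) = (-1)ⁿ e^{x²/2} (d/dx)ⁿ e^{-x²/2}`. -/
noncomputable def hermiteEval (n : ℕ) (x : ℝ) : ℝ := Polynomial.aeval x (Polynomial.hermite n)

/-- The `n`-th Taylor coefficient `Φ_n` of `Φ` at `0` (a real number). -/
noncomputable def PhiCoefR (y : ℝ) (n : ℕ) : ℝ := (PhiCoef y n).re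

/-!
By unique factorization the numbers `log p` are linearly independent over `ℤ`, with quantitative
lower bounds for integer combinations. The moments of `V_y` over `[T, T + H]` are therefore close
to those of `∑ sin(θ_p)/√p` with independent uniform phases `θ_p`, and so are the characteristic
functions. The one of the random model at `√(2/σ) ξ` is
`G(-ξ²/(2σ)) = e^{-ξ²/2} Φ(-ξ²/(2σ))`, and truncating the power series of `Φ` after the term of
order `ν` turns it into the Fourier transform of
`e^{-u²/2} ∑_{n ≤ ν} Φ_n/(2σ)ⁿ H_{2n}(u) / √(2π)`. The truncation error is controlled by
`n! |Φ_n| ≤ C (log log(n + 1) + 1)ⁿ`. An Esseen-type smoothing inequality with the Fejér kernel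
converts the closeness of the two Fourier transforms on `|ξ| ≤ Λ` into closeness of the masses of
intervals up to `O(1/Λ)`. With `N = log H / log y` one may take for `Λ` the smaller of `√N / 16` and
`√(log y) log log y`, which produces the first two terms of `Δ`.
-/

/-! ### Mertens' estimates -/

lemma log_factorial_eq_sum_primesLE (n : ℕ) :
    Real.log n.factorial =
      ∑ p ∈ Nat.primesLE n, (n.factorial.factorization p : ℝ) * Real.log p := by
  have hprod : n.factorial = ∏ p ∈ Nat.primesLE n, p ^ n.factorial.factorization p := by
    conv_lhs => rw [← Nat.prod_factorization_pow_eq_self n.factorial_ne_zero]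
    refine Finset.prod_subset (fun p hp ↦ ?_) fun p _ hp ↦ ?_
    · rw [Nat.support_factorization, Nat.mem_primeFactors] at hp
      exact Nat.mem_primesLE.2 ⟨hp.1.dvd_factorial.1 hp.2.1, hp.1⟩
    · simp only [Finsupp.notMem_support_iff.1 hp, pow_zero]
  conv_lhs => rw [hprod]
  push_cast
  rw [Real.log_prod fun p hp ↦
    pow_ne_zero _ (Nat.cast_ne_zero.2 (Nat.prime_of_mem_primesLE hp).ne_zero)]
  simp only [Real.log_pow]

lemma div_le_factorization_factorial {p : ℕ} (hp : p.Prime) (n : ℕ) :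
    n / p ≤ n.factorial.factorization p := by
  rw [Nat.factorization_factorial hp (b := Nat.log p n + 2) (by omega)]
  simpa using Finset.single_le_sum (f := fun i ↦ n / p ^ i) (fun _ _ ↦ Nat.zero_le _)
    (Finset.mem_Ico.2 ⟨le_rfl, by omega⟩ : 1 ∈ Finset.Ico 1 (Nat.log p n + 2))

lemma sum_primesLE_log_div_le (n : ℕ) :
    ∑ p ∈ Nat.primesLE n, Real.log p / p ≤ Real.log n + Real.log 4 := by
  rcases n.eq_zero_or_pos with rfl | hn
  · simp [Real.log_nonneg]
  have hn0 : (0 : ℝ) < n := Nat.cast_pos.2 hn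
  have hterm : ∀ p ∈ Nat.primesLE n,
      n * (Real.log p / p) - Real.log p ≤ (n.factorial.factorization p : ℝ) * Real.log p := by
    intro p hp
    have hfloor : (n : ℝ) / p - 1 ≤ n.factorial.factorization p := by
      have hlt := Nat.lt_floor_add_one ((n : ℝ) / p)
      rw [Nat.floor_div_eq_div] at hlt
      have hle : ((n / p : ℕ) : ℝ) ≤ n.factorial.factorization p :=
        mod_cast div_le_factorization_factorial (Nat.prime_of_mem_primesLE hp) n
      linarith
    calc n * (Real.log p / p) - Real.log p = (n / p - 1) * Real.log p := by ring
      _ ≤ _ := mul_le_mul_of_nonneg_right hfloor (Real.log_natCast_nonneg p)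
  have hsum := Finset.sum_le_sum hterm
  rw [← log_factorial_eq_sum_primesLE, Finset.sum_sub_distrib, ← Finset.mul_sum,
    ← Chebyshev.theta_eq_sum_primesLE_log] at hsum
  have hfact : Real.log n.factorial ≤ n * Real.log n := by
    rw [← Real.log_pow]
    exact Real.log_le_log (by positivity) (mod_cast n.factorial_le_pow)
  have htheta := Chebyshev.theta_le_log4_mul_x hn0.le
  refine le_of_mul_le_mul_left ?_ hn0
  linarith

lemma tsum_one_div_rpow_le {s : ℝ} (hs : 1 < s) :
    ∑' n : ℕ, 1 / (n + 1 : ℝ) ^ s ≤ 1 + 1 / (s - 1) := by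
  have hzeta := ZetaAsymptotics.zeta_limit_aux1 hs
  have hterm : 0 ≤ ZetaAsymptotics.termTSum s :=
    tsum_nonneg fun n ↦ ZetaAsymptotics.term_nonneg _ _
  nlinarith

/-- The completely multiplicative function `n ↦ n ^ (-s)`, bundled so that Mathlib's finite Euler
products apply to it. -/
noncomputable def rpowNegHom (s : ℝ) : ℕ →* ℝ where
  toFun n := (n : ℝ) ^ (-s)
  map_one' := by simp
  map_mul' a b := by rw [Nat.cast_mul, Real.mul_rpow a.cast_nonneg b.cast_nonneg]

lemma rpow_neg_lt_one_of_mem_primesLE {s : ℝ} (hs : 0 < s) {p N : ℕ} (hp : p ∈ Nat.primesLE N) :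
    (p : ℝ) ^ (-s) < 1 :=
  Real.rpow_lt_one_of_one_lt_of_neg (mod_cast Nat.one_lt_of_mem_primesLE hp) (neg_neg_of_pos hs)

lemma hasSum_smoothNumbers_rpow_neg {s : ℝ} (hs : 0 < s) (N : ℕ) :
    HasSum (fun m : (N + 1).smoothNumbers ↦ ((m : ℕ) : ℝ) ^ (-s))
      (∏ p ∈ Nat.primesLE N, (1 - (p : ℝ) ^ (-s))⁻¹) :=
  (EulerProduct.summable_and_hasSum_smoothNumbers_prod_primesBelow_geometric (f := rpowNegHom s)
    (fun {p} hp ↦ by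
      simpa [rpowNegHom, abs_of_nonneg (Real.rpow_nonneg p.cast_nonneg (-s))] using
        rpow_neg_lt_one_of_mem_primesLE hs (Nat.mem_primesLE.2 ⟨le_rfl, hp⟩)) (N + 1)).2

lemma log_prod_primesLE_inv {s : ℝ} (hs : 0 < s) (N : ℕ) :
    Real.log (∏ p ∈ Nat.primesLE N, (1 - (p : ℝ) ^ (-s))⁻¹) =
      ∑ p ∈ Nat.primesLE N, -Real.log (1 - (p : ℝ) ^ (-s)) := by
  rw [Real.log_prod fun p hp ↦
    inv_ne_zero (sub_pos.2 (rpow_neg_lt_one_of_mem_primesLE hs hp)).ne']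
  simp only [Real.log_inv]

lemma sum_primesLE_neg_log_one_sub_le {s : ℝ} (hs : 1 < s) (N : ℕ) :
    ∑ p ∈ Nat.primesLE N, -Real.log (1 - (p : ℝ) ^ (-s)) ≤ Real.log (1 + 1 / (s - 1)) := by
  have hs0 : 0 < s := by linarith
  have hsum : Summable fun n : ℕ ↦ (n : ℝ) ^ (-s) := Real.summable_nat_rpow.2 (by linarith)
  rw [← log_prod_primesLE_inv hs0]
  refine Real.log_le_log (Finset.prod_pos fun p hp ↦
    inv_pos.2 (sub_pos.2 (rpow_neg_lt_one_of_mem_primesLE hs0 hp))) ?_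
  calc ∏ p ∈ Nat.primesLE N, (1 - (p : ℝ) ^ (-s))⁻¹
      = ∑' m : (N + 1).smoothNumbers, ((m : ℕ) : ℝ) ^ (-s) :=
        (hasSum_smoothNumbers_rpow_neg hs0 N).tsum_eq.symm
    _ ≤ ∑' n : ℕ, (n : ℝ) ^ (-s) :=
        hsum.tsum_subtype_le _ ((N + 1).smoothNumbers : Set ℕ) fun n ↦ by positivity
    _ = ∑' n : ℕ, 1 / (n + 1 : ℝ) ^ s := by
        rw [hsum.tsum_eq_zero_add, Nat.cast_zero, Real.zero_rpow (by linarith), zero_add]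
        refine tsum_congr fun n ↦ ?_
        rw [Real.rpow_neg (by positivity), one_div, Nat.cast_succ]
    _ ≤ 1 + 1 / (s - 1) := tsum_one_div_rpow_le hs

lemma add_sq_div_two_le_neg_log_one_sub {u : ℝ} (hu0 : 0 ≤ u) (hu1 : u < 1) :
    u + u ^ 2 / 2 ≤ -Real.log (1 - u) := by
  have hlog := Real.hasSum_pow_div_log_of_abs_lt_one (x := u) (by rwa [abs_of_nonneg hu0])
  have hle := sum_le_hasSum (Finset.range 2) (fun i _ ↦ by positivity) hlog
  norm_num [Finset.sum_range_succ] at hle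
  linarith

lemma one_div_le_rpow_neg_add {s x : ℝ} (hx : 0 < x) :
    1 / x ≤ x ^ (-s) + (s - 1) * (Real.log x / x) := by
  have hexp : x ^ (-s) = 1 / x * Real.exp (-(s - 1) * Real.log x) := by
    rw [Real.rpow_def_of_pos hx, one_div, ← Real.exp_log (inv_pos.2 hx), ← Real.exp_add,
      Real.log_inv]
    ring_nf
  have hle := mul_le_mul_of_nonneg_left (Real.add_one_le_exp (-(s - 1) * Real.log x))
    (one_div_pos.2 hx).le
  rw [hexp]
  calc 1 / x = 1 / x * (-(s - 1) * Real.log x + 1) + (s - 1) * (Real.log x / x) := by ring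
    _ ≤ _ := by linarith

-- The square of the term `p = 2` is kept: it is what brings the constant in
-- `eventually_sum_primesLE_one_div_le` below `1`.
lemma sum_primesLE_one_div_add_le {s : ℝ} (hs : 1 < s) {N : ℕ} (hN : 2 ≤ N) :
    ∑ p ∈ Nat.primesLE N, (1 : ℝ) / p + ((2 : ℝ) ^ (-s)) ^ 2 / 2 ≤
      Real.log (1 + 1 / (s - 1)) + (s - 1) * (Real.log N + Real.log 4) := by
  have hfirst : ∑ p ∈ Nat.primesLE N, (1 : ℝ) / p ≤
      ∑ p ∈ Nat.primesLE N, (p : ℝ) ^ (-s) +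
        (s - 1) * ∑ p ∈ Nat.primesLE N, Real.log p / p := by
    rw [Finset.mul_sum, ← Finset.sum_add_distrib]
    exact Finset.sum_le_sum fun p hp ↦
      one_div_le_rpow_neg_add (Nat.cast_pos.2 (Nat.prime_of_mem_primesLE hp).pos)
  have htwo : ((2 : ℝ) ^ (-s)) ^ 2 / 2 ≤ ∑ p ∈ Nat.primesLE N, ((p : ℝ) ^ (-s)) ^ 2 / 2 := by
    simpa using Finset.single_le_sum (f := fun p : ℕ ↦ ((p : ℝ) ^ (-s)) ^ 2 / 2)
      (fun p _ ↦ by positivity) (Nat.mem_primesLE.2 ⟨hN, Nat.prime_two⟩)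
  have heuler : ∑ p ∈ Nat.primesLE N, (p : ℝ) ^ (-s) +
      ∑ p ∈ Nat.primesLE N, ((p : ℝ) ^ (-s)) ^ 2 / 2 ≤ Real.log (1 + 1 / (s - 1)) := by
    rw [← Finset.sum_add_distrib]
    refine (Finset.sum_le_sum fun p hp ↦ ?_).trans (sum_primesLE_neg_log_one_sub_le hs N)
    exact add_sq_div_two_le_neg_log_one_sub (by positivity)
      (rpow_neg_lt_one_of_mem_primesLE (by linarith) hp)
  have hlog := mul_le_mul_of_nonneg_left (sum_primesLE_log_div_le N) (sub_nonneg.2 hs.le)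
  linarith

lemma eventually_sum_primesLE_one_div_le :
    ∀ᶠ N : ℕ in atTop,
      ∑ p ∈ Nat.primesLE N, (1 : ℝ) / p ≤ Real.log (Real.log N) + 9 / 10 := by
  have hlog : Tendsto (fun N : ℕ ↦ Real.log N) atTop atTop :=
    Real.tendsto_log_atTop.comp tendsto_natCast_atTop_atTop
  filter_upwards [hlog.eventually_ge_atTop 300, eventually_ge_atTop 2] with N hL hN
  set L := Real.log N
  have hL0 : 0 < L := by linarith
  have hinv : 1 / L ≤ 1 / 300 := one_div_le_one_div_of_le (by norm_num) hL
  have hlog2 := Real.log_two_lt_d9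
  have hlog4 : Real.log 4 ≤ 2 := by
    rw [show (4 : ℝ) = 2 ^ 2 by norm_num, Real.log_pow]
    push_cast
    linarith
  have hrpow : (49 / 100 : ℝ) ≤ 2 ^ (-(1 + 1 / L)) := by
    have hle := Real.add_one_le_exp (-(Real.log 2 * (1 / L)))
    have hsplit : (2 : ℝ) ^ (-(1 + 1 / L)) = 1 / 2 * Real.exp (-(Real.log 2 * (1 / L))) := by
      rw [Real.rpow_def_of_pos two_pos, mul_neg, mul_add, mul_one, neg_add, Real.exp_add,
        Real.exp_neg, Real.exp_log two_pos, inv_eq_one_div]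
    have hprod : Real.log 2 * (1 / L) ≤ 1 * (1 / 300) := by gcongr; linarith
    rw [hsplit]
    linarith
  have hone : Real.log (1 + L) ≤ Real.log L + 1 / L := by
    have hle := Real.log_le_sub_one_of_pos (x := 1 + 1 / L) (by positivity)
    rw [show 1 + L = L * (1 + 1 / L) by field_simp; ring,
      Real.log_mul hL0.ne' (by positivity)]
    linarith
  have hmain := sum_primesLE_one_div_add_le (s := 1 + 1 / L) (by simpa using hL0) hN
  rw [add_sub_cancel_left, one_div_one_div, mul_add, one_div_mul_cancel hL0.ne'] at hmain
  have hprod : 1 / L * Real.log 4 ≤ 1 / 300 * 2 := by gcongr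
  nlinarith

lemma log_add_one_le_prod_primesLE_inv (N : ℕ) :
    Real.log (N + 1) ≤ ∏ p ∈ Nat.primesLE N, (1 - (p : ℝ) ^ (-1 : ℝ))⁻¹ := by
  have hmem : ∀ m ∈ Finset.Icc 1 N, m ∈ (N + 1).smoothNumbers := fun m hm ↦ by
    rw [Finset.mem_Icc] at hm
    exact Nat.mem_smoothNumbers_iff_forall_le.2 ⟨by omega, fun p hp _ _ ↦ by omega⟩
  calc Real.log (N + 1) ≤ (harmonic N : ℝ) := mod_cast log_add_one_le_harmonic N
    _ = ∑ m ∈ Finset.Icc 1 N, (m : ℝ) ^ (-1 : ℝ) := by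
        simp [harmonic_eq_sum_Icc, Real.rpow_neg_one]
    _ = ∑ m ∈ (Finset.Icc 1 N).subtype (· ∈ (N + 1).smoothNumbers),
          ((m : ℕ) : ℝ) ^ (-1 : ℝ) := by
        rw [Finset.sum_subtype_of_mem (fun m : ℕ ↦ (m : ℝ) ^ (-1 : ℝ)) hmem]
    _ ≤ _ := sum_le_hasSum _ (fun m _ ↦ by positivity)
        (hasSum_smoothNumbers_rpow_neg one_pos N)

lemma sum_primesLE_telescope_le (N : ℕ) :
    ∑ p ∈ Nat.primesLE N, (1 / ((p : ℝ) - 1) - 1 / p) ≤ 1 := by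
  calc ∑ p ∈ Nat.primesLE N, (1 / ((p : ℝ) - 1) - 1 / p)
      ≤ ∑ p ∈ Finset.Ico 2 (N + 2), (1 / ((p : ℝ) - 1) - 1 / p) := by
        refine Finset.sum_le_sum_of_subset_of_nonneg (fun p hp ↦ ?_) fun p hp _ ↦ ?_
        · have := Nat.two_le_of_mem_primesLE hp
          have := Nat.le_of_mem_primesLE hp
          exact Finset.mem_Ico.2 ⟨by omega, by omega⟩
        · have hp2 : (2 : ℝ) ≤ p := mod_cast (Finset.mem_Ico.1 hp).1
          exact sub_nonneg.2 (one_div_le_one_div_of_le (by linarith) (by linarith))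
    _ = ∑ i ∈ Finset.range N, (1 / ((i : ℝ) + 1) - 1 / ((i + 1 : ℕ) + 1)) := by
        rw [Finset.sum_Ico_eq_sum_range]
        refine Finset.sum_congr (by simp) fun i _ ↦ ?_
        push_cast
        ring_nf
    _ = 1 - 1 / ((N : ℝ) + 1) := by
        rw [Finset.sum_range_sub' fun i : ℕ ↦ 1 / ((i : ℝ) + 1)]
        norm_num
    _ ≤ 1 := sub_le_self _ (by positivity)

lemma log_log_sub_one_le_sum_primesLE {N : ℕ} (hN : 1 ≤ N) :
    Real.log (Real.log (N + 1)) - 1 ≤ ∑ p ∈ Nat.primesLE N, (1 : ℝ) / p := by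
  have hlog : 0 < Real.log (N + 1) := Real.log_pos (by
    have : (1 : ℝ) ≤ N := mod_cast hN
    linarith)
  have hterm : ∀ p ∈ Nat.primesLE N, -Real.log (1 - (p : ℝ) ^ (-1 : ℝ)) ≤
      1 / p + (1 / ((p : ℝ) - 1) - 1 / p) := by
    intro p hp
    have hp1 : (1 : ℝ) < p := mod_cast Nat.one_lt_of_mem_primesLE hp
    have hp0 : 0 < (p : ℝ) - 1 := sub_pos.2 hp1
    have hinv : (1 - (p : ℝ) ^ (-1 : ℝ))⁻¹ = 1 + 1 / ((p : ℝ) - 1) := by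
      rw [Real.rpow_neg_one]
      field_simp
      ring
    rw [← Real.log_inv, hinv]
    linarith [Real.log_le_sub_one_of_pos (x := 1 + 1 / ((p : ℝ) - 1)) (by positivity)]
  have hprod := Real.log_le_log hlog (log_add_one_le_prod_primesLE_inv N)
  rw [log_prod_primesLE_inv one_pos] at hprod
  have hsum := hprod.trans (Finset.sum_le_sum hterm)
  rw [Finset.sum_add_distrib] at hsum
  linarith [sum_primesLE_telescope_le N]

/-! ### Laguerre coefficients of `φ` -/

/-- The value at `1` of the `k`-th Laguerre polynomial: up to the factor `(-1)ᵏ / k!`, the `k`-th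
Taylor coefficient of `φ`. -/
noncomputable def laguerreOne (k : ℕ) : ℝ :=
  ∑ j ∈ Finset.range (k + 1), (k.choose j : ℝ) * (-1) ^ j / j.factorial

/-- The value at `1` of the derivative of the `k`-th Laguerre polynomial. -/
noncomputable def derivLaguerreOne (k : ℕ) : ℝ :=
  ∑ j ∈ Finset.range k, (k.choose (j + 1) : ℝ) * (-1) ^ (j + 1) / j.factorial

lemma laguerreOne_zero : laguerreOne 0 = 1 := by norm_num [laguerreOne]

lemma laguerreOne_one : laguerreOne 1 = 0 := by norm_num [laguerreOne, Finset.sum_range_succ]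

lemma derivLaguerreOne_succ (k : ℕ) :
    derivLaguerreOne (k + 1) = derivLaguerreOne k - laguerreOne k := by
  have hk : derivLaguerreOne k =
      ∑ j ∈ Finset.range (k + 1), (k.choose (j + 1) : ℝ) * (-1) ^ (j + 1) / j.factorial := by
    simp [Finset.sum_range_succ, derivLaguerreOne]
  rw [hk, derivLaguerreOne, laguerreOne, ← Finset.sum_sub_distrib]
  refine Finset.sum_congr rfl fun j _ ↦ ?_
  rw [Nat.choose_succ_succ]
  push_cast
  ring

lemma succ_mul_laguerreOne_succ_sub (k : ℕ) :
    (k + 1) * (laguerreOne (k + 1) - laguerreOne k) = derivLaguerreOne (k + 1) := by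
  have hk : laguerreOne k =
      ∑ j ∈ Finset.range (k + 2), (k.choose j : ℝ) * (-1) ^ j / j.factorial := by
    rw [Finset.sum_range_succ]
    simp [laguerreOne]
  rw [hk, laguerreOne, derivLaguerreOne, ← Finset.sum_sub_distrib, Finset.sum_range_succ']
  simp only [Nat.choose_zero_right, sub_self, add_zero]
  rw [Finset.mul_sum]
  refine Finset.sum_congr rfl fun j _ ↦ ?_
  have hmul : ((k + 1).choose (j + 1) : ℝ) * (j + 1) = (k + 1) * k.choose j :=
    mod_cast (Nat.add_one_mul_choose_eq k j).symm
  have hadd : ((k + 1).choose (j + 1) : ℝ) = k.choose j + k.choose (j + 1) :=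
    mod_cast Nat.choose_succ_succ k j
  rw [Nat.factorial_succ, ← sub_div, ← sub_mul, hadd, add_sub_cancel_right]
  rw [hadd] at hmul
  push_cast
  field_simp
  linear_combination -hmul

-- By the recurrences, the ratio of the two sides is nonincreasing in `k`.
lemma laguerreOne_energy_le (k : ℕ) :
    laguerreOne (k + 2) ^ 2 + derivLaguerreOne (k + 2) ^ 2 * (k + 1) / (k + 2) ^ 2
      ≤ (k + 1) / (k + 2) := by
  induction k with
  | zero =>
    norm_num [laguerreOne, derivLaguerreOne, Finset.sum_range_succ, Nat.choose, Nat.factorial]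
  | succ k ih =>
    have hE := derivLaguerreOne_succ (k + 2)
    have hL := succ_mul_laguerreOne_succ_sub (k + 2)
    rw [show k + 1 + 2 = k + 2 + 1 by ring, hE]
    generalize laguerreOne (k + 2) = a, derivLaguerreOne (k + 2) = b at *
    have hL' : laguerreOne (k + 2 + 1) = a + (b - a) / (k + 3) := by
      rw [hE] at hL
      push_cast at hL
      field_simp
      linarith
    rw [hL']
    push_cast
    have hab : a ^ 2 + b ^ 2 / (k + 2) ≤ 1 := calc
      a ^ 2 + b ^ 2 / (k + 2) ≤ a ^ 2 + b ^ 2 / (k + 2) + a ^ 2 / (k + 1) :=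
        le_add_of_nonneg_right (by positivity)
      _ = (k + 2) / (k + 1) * (a ^ 2 + b ^ 2 * (k + 1) / (k + 2) ^ 2) := by
        field_simp
        ring
      _ ≤ (k + 2) / (k + 1) * ((k + 1) / (k + 2)) := by gcongr
      _ = 1 := by field_simp
    calc (a + (b - a) / (k + 3)) ^ 2 + (b - a) ^ 2 * (k + 1 + 1) / ((k : ℝ) + 1 + 2) ^ 2
        = (k + 2) / (k + 3) * (a ^ 2 + b ^ 2 / (k + 2)) := by
          field_simp
          ring
      _ ≤ ((k : ℝ) + 2) / (k + 3) * 1 := by gcongr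
      _ = (k + 1 + 1) / (k + 1 + 2) := by ring

lemma abs_laguerreOne_le_one : ∀ k : ℕ, |laguerreOne k| ≤ 1
  | 0 => by simp [laguerreOne_zero]
  | 1 => by simp [laguerreOne_one]
  | k + 2 => by
    have henergy := laguerreOne_energy_le k
    have hle : ((k : ℝ) + 1) / (k + 2) ≤ 1 := by
      rw [div_le_one (by positivity)]
      linarith
    have hnonneg : 0 ≤ derivLaguerreOne (k + 2) ^ 2 * ((k : ℝ) + 1) / (k + 2) ^ 2 := by
      positivity
    rw [← sq_le_one_iff_abs_le_one]
    linarith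

lemma norm_pow_div_factorial_sq_le (w : ℂ) (n : ℕ) :
    ‖w ^ n / (n.factorial : ℂ) ^ 2‖ ≤ ‖w‖ ^ n / n.factorial := by
  have hfact : (1 : ℝ) ≤ n.factorial := Nat.one_le_cast.2 n.factorial_pos
  rw [norm_div, norm_pow, norm_pow, Complex.norm_natCast]
  gcongr
  exact le_self_pow₀ hfact two_ne_zero

lemma summable_norm_pow_div_factorial_sq (w : ℂ) :
    Summable fun n : ℕ ↦ ‖w ^ n / (n.factorial : ℂ) ^ 2‖ :=
  (Real.summable_pow_div_factorial ‖w‖).of_nonneg_of_le (fun _ ↦ norm_nonneg _)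
    (norm_pow_div_factorial_sq_le w)

lemma phifun_eq_tsum (z : ℂ) :
    phifun z = ∑' k : ℕ, ((-1) ^ k * laguerreOne k / k.factorial : ℝ) * z ^ k := by
  have hexp : Complex.exp (-z) = ∑' n : ℕ, (-z) ^ n / n.factorial := by
    rw [Complex.exp_eq_exp_ℂ, NormedSpace.exp_eq_tsum_div]
  rw [phifun, J0twoISqrt, hexp, mul_comm,
    tsum_mul_tsum_eq_tsum_sum_antidiagonal_of_summable_norm (summable_norm_pow_div_factorial_sq z)
      (NormedSpace.norm_expSeries_div_summable (-z))]
  refine tsum_congr fun k ↦ ?_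
  rw [Finset.Nat.sum_antidiagonal_eq_sum_range_succ_mk, laguerreOne]
  push_cast
  rw [Finset.mul_sum, Finset.sum_div, Finset.sum_mul]
  refine Finset.sum_congr rfl fun j hj ↦ ?_
  obtain ⟨m, rfl⟩ := Nat.exists_eq_add_of_le (Finset.mem_range_succ_iff.1 hj)
  have hchoose : ((j + m).choose j : ℂ) * j.factorial * m.factorial = (j + m).factorial := by
    have h := Nat.choose_mul_factorial_mul_factorial (Nat.le_add_right j m)
    rw [Nat.add_sub_cancel_left] at h
    exact_mod_cast h
  have hj0 : (j.factorial : ℂ) ≠ 0 := mod_cast j.factorial_ne_zero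
  have hm0 : (m.factorial : ℂ) ≠ 0 := mod_cast m.factorial_ne_zero
  have hc0 : ((j + m).choose j : ℂ) ≠ 0 := mod_cast (Nat.choose_pos (Nat.le_add_right j m)).ne'
  have hsign : (-1 : ℂ) ^ j * (-1) ^ j = 1 := by rw [← mul_pow]; norm_num
  rw [Nat.add_sub_cancel_left, neg_pow, ← hchoose]
  field_simp
  rw [pow_add, pow_add]
  linear_combination (-(z ^ j * z ^ m * (-1) ^ m)) * hsign

lemma norm_phifun_le_exp_sub (z : ℂ) : ‖phifun z‖ ≤ Real.exp ‖z‖ - ‖z‖ := by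
  have hterm : ∀ k : ℕ, ‖(((-1) ^ k * laguerreOne k / k.factorial : ℝ) : ℂ) * z ^ k‖ ≤
      ‖z‖ ^ k / k.factorial - if k = 1 then ‖z‖ else 0 := by
    intro k
    rw [norm_mul, norm_pow, Complex.norm_real, Real.norm_eq_abs, abs_div, abs_mul, abs_pow,
      abs_neg, abs_one, one_pow, one_mul, Nat.abs_cast, div_mul_eq_mul_div]
    split_ifs with hk
    · simp [hk, laguerreOne_one]
    · rw [sub_zero]
      gcongr
      exact mul_le_of_le_one_left (by positivity) (abs_laguerreOne_le_one k)
  have hsum : HasSum (fun k : ℕ ↦ ‖z‖ ^ k / k.factorial - if k = 1 then ‖z‖ else 0)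
      (Real.exp ‖z‖ - ‖z‖) := by
    rw [Real.exp_eq_exp_ℝ]
    exact (NormedSpace.expSeries_div_hasSum_exp ‖z‖).sub (hasSum_ite_eq 1 ‖z‖)
  rw [phifun_eq_tsum]
  exact tsum_of_norm_bounded hsum hterm

lemma norm_phifun_le_exp (z : ℂ) : ‖phifun z‖ ≤ Real.exp ‖z‖ :=
  (norm_phifun_le_exp_sub z).trans (sub_le_self _ (norm_nonneg z))

lemma norm_phifun_le_exp_sq (z : ℂ) : ‖phifun z‖ ≤ Real.exp (‖z‖ ^ 2) := by
  rcases le_total ‖z‖ 1 with hz | hz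
  · have hexp := Real.exp_bound' (norm_nonneg z) hz (n := 2) two_pos
    norm_num [Finset.sum_range_succ, Nat.factorial] at hexp
    nlinarith [norm_phifun_le_exp_sub z, Real.add_one_le_exp (‖z‖ ^ 2), norm_nonneg z]
  · exact (norm_phifun_le_exp z).trans (Real.exp_le_exp.2 (le_self_pow₀ hz two_ne_zero))

lemma differentiable_J0twoISqrt : Differentiable ℂ J0twoISqrt := by
  intro w
  have hball : DifferentiableOn ℂ J0twoISqrt (Metric.ball 0 (‖w‖ + 1)) := by
    refine Complex.differentiableOn_tsum_of_summable_norm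
      (Real.summable_pow_div_factorial (‖w‖ + 1)) (fun n ↦ by fun_prop) Metric.isOpen_ball
      fun n z hz ↦ (norm_pow_div_factorial_sq_le z n).trans ?_
    gcongr
    exact (mem_ball_zero_iff.1 hz).le
  exact (hball w (by simp)).differentiableAt (Metric.isOpen_ball.mem_nhds (by simp))

lemma differentiable_phifun : Differentiable ℂ phifun :=
  (Complex.differentiable_exp.comp differentiable_neg).mul differentiable_J0twoISqrt

lemma differentiable_Phifun (y : ℝ) : Differentiable ℂ (Phifun y) :=
  Differentiable.fun_finsetProd fun _ _ ↦ differentiable_phifun.comp (differentiable_id.div_const _)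

lemma phifun_ofReal (x : ℝ) :
    phifun x = ↑(∑' k : ℕ, (-1) ^ k * laguerreOne k / k.factorial * x ^ k) := by
  rw [phifun_eq_tsum, Complex.ofReal_tsum]
  push_cast
  rfl

lemma ofReal_re_Phifun (y x : ℝ) : ((Phifun y x).re : ℂ) = Phifun y x := by
  have hreal : ∀ p : ℕ, (starRingEnd ℂ) (phifun (x / p)) = phifun (x / p) := fun p ↦ by
    rw [← Complex.ofReal_natCast, ← Complex.ofReal_div, phifun_ofReal, Complex.conj_ofReal]
  rw [← Complex.conj_eq_iff_re, Phifun, map_prod]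
  exact Finset.prod_congr rfl fun p _ ↦ hreal p

/-! ### Taylor coefficients of `Φ` -/

lemma sum_one_div_sq_le_of_forall_lt {M : ℕ} (hM : M ≠ 0) {s : Finset ℕ} (hs : ∀ n ∈ s, M < n) :
    ∑ n ∈ s, (1 : ℝ) / (n : ℝ) ^ 2 ≤ 1 / M := by
  obtain ⟨N, hN⟩ := s.exists_nat_subset_range
  have hsub : s ⊆ Finset.Ioc M (M + N) := fun n hn ↦ by
    have := hs n hn
    have := Finset.mem_range.1 (hN hn)
    exact Finset.mem_Ioc.2 ⟨by lia, by lia⟩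
  simp only [one_div]
  calc ∑ n ∈ s, ((n : ℝ) ^ 2)⁻¹ ≤ ∑ n ∈ Finset.Ioc M (M + N), ((n : ℝ) ^ 2)⁻¹ :=
        Finset.sum_le_sum_of_subset_of_nonneg hsub fun _ _ _ ↦ by positivity
    _ ≤ (M : ℝ)⁻¹ - ((M + N : ℕ) : ℝ)⁻¹ := sum_Ioc_inv_sq_le_sub hM (Nat.le_add_right M N)
    _ ≤ (M : ℝ)⁻¹ := sub_le_self _ (by positivity)

lemma prime_of_mem_primesLe {y : ℝ} {p : ℕ} (hp : p ∈ primesLe y) : p.Prime :=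
  (Finset.mem_filter.1 hp).2

-- The linear bound for `φ` is used at the primes up to `M`, the quadratic one beyond.
lemma norm_Phifun_le_exp (y : ℝ) {M : ℕ} (hM : M ≠ 0) (z : ℂ) :
    ‖Phifun y z‖ ≤
      Real.exp (‖z‖ * ∑ p ∈ Nat.primesLE M, (1 : ℝ) / p + ‖z‖ ^ 2 * (1 / M)) := by
  have hfactor : ∀ p ∈ primesLe y, ‖phifun (z / p)‖ ≤
      Real.exp (if p ≤ M then ‖z‖ * (1 / (p : ℝ)) else ‖z‖ ^ 2 * (1 / (p : ℝ) ^ 2)) := by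
    intro p _
    have hnorm : ‖z / p‖ = ‖z‖ * (1 / (p : ℝ)) := by
      rw [norm_div, Complex.norm_natCast, mul_one_div]
    split_ifs
    · rw [← hnorm]
      exact norm_phifun_le_exp _
    · rw [← one_div_pow, ← mul_pow, ← hnorm]
      exact norm_phifun_le_exp_sq _
  have hsmall : ∑ p ∈ (primesLe y).filter (· ≤ M), 1 / (p : ℝ) ≤
      ∑ p ∈ Nat.primesLE M, (1 : ℝ) / p := by
    refine Finset.sum_le_sum_of_subset_of_nonneg (fun p hp ↦ ?_) fun _ _ _ ↦ by positivity
    rw [Finset.mem_filter] at hp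
    exact Nat.mem_primesLE.2 ⟨hp.2, prime_of_mem_primesLe hp.1⟩
  have hlarge : ∑ p ∈ (primesLe y).filter (¬· ≤ M), 1 / (p : ℝ) ^ 2 ≤ (1 / M : ℝ) :=
    sum_one_div_sq_le_of_forall_lt hM fun p hp ↦ not_le.1 (Finset.mem_filter.1 hp).2
  rw [Phifun, norm_prod]
  refine (Finset.prod_le_prod (fun _ _ ↦ norm_nonneg _) hfactor).trans ?_
  rw [← Real.exp_sum, Real.exp_le_exp, Finset.sum_ite, ← Finset.mul_sum, ← Finset.mul_sum]
  gcongr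

lemma norm_Phifun_le_exp_sigmay (y : ℝ) (z : ℂ) : ‖Phifun y z‖ ≤ Real.exp (‖z‖ * sigmay y) := by
  rw [Phifun, sigmay, norm_prod, Finset.mul_sum, Real.exp_sum]
  refine Finset.prod_le_prod (fun _ _ ↦ norm_nonneg _) fun p _ ↦
    (norm_phifun_le_exp _).trans_eq ?_
  rw [norm_div, Complex.norm_natCast, mul_one_div]

lemma abs_PhiCoefR_le_div_pow {y R B : ℝ} (hR : 0 < R) (hB : ∀ z : ℂ, ‖z‖ = R → ‖Phifun y z‖ ≤ B)
    (n : ℕ) : |PhiCoefR y n| ≤ B / R ^ n := by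
  have hcauchy := Complex.norm_iteratedDeriv_le_of_forall_mem_sphere_norm_le (c := 0) n hR
    (differentiable_Phifun y).diffContOnCl fun z hz ↦ hB z (by simpa using hz)
  refine (Complex.abs_re_le_norm _).trans ?_
  rw [PhiCoef, norm_div, Complex.norm_natCast, div_le_iff₀ (by positivity)]
  exact hcauchy.trans_eq (by ring)

lemma PhiCoefR_zero (y : ℝ) : PhiCoefR y 0 = 1 := by
  have hJ : (∑' n : ℕ, (0 : ℂ) ^ n / (n.factorial : ℂ) ^ 2) = 1 := by
    rw [tsum_eq_single 0 fun n hn ↦ by simp [hn]]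
    simp
  simp [PhiCoefR, PhiCoef, Phifun, phifun, J0twoISqrt, hJ]

lemma hasSum_PhiCoefR (y x : ℝ) : HasSum (fun n ↦ PhiCoefR y n * x ^ n) (Phifun y x).re := by
  have hre := Complex.hasSum_re
    (Complex.hasSum_taylorSeries_of_entire (differentiable_Phifun y) 0 x)
  convert hre using 2 with n
  have hterm : (n.factorial : ℂ)⁻¹ • ((x : ℂ) - 0) ^ n • iteratedDeriv n (Phifun y) 0 =
      ((x ^ n : ℝ) : ℂ) * PhiCoef y n := by
    rw [PhiCoef, sub_zero, smul_eq_mul, smul_eq_mul]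
    push_cast
    ring
  rw [hterm, Complex.re_ofReal_mul, PhiCoefR, mul_comm]

/-- `log log (n + 1) + 1`, the growth rate of the coefficients of `Φ`: `n! |Φ_n|` is at most a
constant times its `n`-th power. For `n = 0` this is the junk value `1`. -/
noncomputable def logLogAddOne (n : ℕ) : ℝ := Real.log (Real.log (n + 1)) + 1

lemma logLogAddOne_le_logLogAddOne {m n : ℕ} (hm : 1 ≤ m) (hmn : m ≤ n) :
    logLogAddOne m ≤ logLogAddOne n := by
  have hm0 : (1 : ℝ) ≤ m := Nat.one_le_cast.2 hm
  have hlog : 0 < Real.log ((m : ℝ) + 1) := Real.log_pos (by linarith)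
  unfold logLogAddOne
  gcongr

lemma half_le_logLogAddOne {n : ℕ} (hn : 1 ≤ n) : 1 / 2 ≤ logLogAddOne n := by
  refine le_trans ?_ (logLogAddOne_le_logLogAddOne le_rfl hn)
  have hlog := Real.log_two_gt_d9
  have hloglog := Real.one_sub_inv_le_log_of_pos (x := Real.log 2) (by linarith)
  have hinv : (Real.log 2)⁻¹ ≤ 3 / 2 := by
    rw [inv_le_comm₀ (by linarith) (by norm_num)]
    norm_num
    linarith
  norm_num [logLogAddOne]
  linarith

lemma logLogAddOne_pos {n : ℕ} (hn : 1 ≤ n) : 0 < logLogAddOne n :=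
  one_half_pos.trans_le (half_le_logLogAddOne hn)

lemma tendsto_logLogAddOne : Tendsto logLogAddOne atTop atTop :=
  tendsto_atTop_add_const_right _ _ <| Real.tendsto_log_atTop.comp <| Real.tendsto_log_atTop.comp <|
    tendsto_atTop_add_const_right _ _ tendsto_natCast_atTop_atTop

lemma log_log_add_one_le_logLogAddOne {n : ℕ} (hn : 2 ≤ n) :
    Real.log (Real.log n) + 1 ≤ logLogAddOne n := by
  have hn2 : (2 : ℝ) ≤ n := mod_cast hn
  have hlog : 0 < Real.log n := Real.log_pos (by linarith)
  unfold logLogAddOne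
  gcongr
  linarith

lemma logLogAddOne_le_two_mul_log {n : ℕ} (hn : 2 ≤ n) : logLogAddOne n ≤ 2 * Real.log n := by
  have hn2 : (2 : ℝ) ≤ n := mod_cast hn
  have hloglog := Real.log_le_sub_one_of_pos (Real.log_pos (by linarith : 1 < (n : ℝ) + 1))
  have hsq : Real.log ((n : ℝ) + 1) ≤ Real.log ((n : ℝ) ^ 2) :=
    Real.log_le_log (by linarith) (by nlinarith)
  rw [Real.log_pow] at hsq
  push_cast at hsq
  unfold logLogAddOne
  linarith

lemma eventually_log_le_div_logLogAddOne :
    ∀ᶠ n : ℕ in atTop, Real.log n ≤ 1 / 20 * (n / logLogAddOne n) := by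
  have hlogsq : ∀ᶠ n : ℕ in atTop, 40 * Real.log n ^ 2 ≤ n := by
    have hbound := (isLittleO_pow_log_id_atTop (n := 2)).bound (c := 1 / 40) (by norm_num)
    filter_upwards [tendsto_natCast_atTop_atTop.eventually hbound] with n hn
    simp only [norm_pow, Real.norm_eq_abs, sq_abs, id_eq, Nat.abs_cast] at hn
    linarith
  filter_upwards [hlogsq, eventually_ge_atTop 2] with n hn hn2
  have hpos := logLogAddOne_pos (one_le_two.trans hn2)
  have hlog : 0 ≤ Real.log n := Real.log_natCast_nonneg n
  rw [← mul_div_assoc, le_div_iff₀ hpos]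
  nlinarith [logLogAddOne_le_two_mul_log hn2]

lemma factorial_le_mul_exp_one_mul_pow {n : ℕ} (hn : n ≠ 0) :
    (n.factorial : ℝ) ≤ n * Real.exp 1 * (n / Real.exp 1) ^ n := by
  obtain ⟨m, rfl⟩ := Nat.exists_eq_succ_of_ne_zero hn
  have hanti : Stirling.stirlingSeq m.succ ≤ Stirling.stirlingSeq 1 :=
    Stirling.stirlingSeq'_antitone m.zero_le
  have hsqrt : √(m.succ : ℝ) ≤ m.succ := Real.sqrt_le_iff.2
    ⟨by positivity, le_self_pow₀ (mod_cast m.succ_pos) two_ne_zero⟩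
  rw [Stirling.stirlingSeq_one, Stirling.stirlingSeq, div_le_iff₀ (by positivity),
    Real.sqrt_mul two_pos.le] at hanti
  calc (m.succ.factorial : ℝ)
      ≤ Real.exp 1 / √2 * (√2 * √(m.succ : ℝ) * (m.succ / Real.exp 1) ^ m.succ) := hanti
    _ = √(m.succ : ℝ) * Real.exp 1 * (m.succ / Real.exp 1) ^ m.succ := by field_simp
    _ ≤ _ := by gcongr

-- By Mertens, `∑_{p ≤ n} 1 / p` falls short of `logLogAddOne n` by at least `1 / 10`.
lemma eventually_norm_Phifun_le_exp :
    ∀ᶠ n : ℕ in atTop, ∀ (y : ℝ) (z : ℂ), ‖z‖ = n / logLogAddOne n →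
      ‖Phifun y z‖ ≤ Real.exp (n - 1 / 20 * (n / logLogAddOne n)) := by
  filter_upwards [eventually_sum_primesLE_one_div_le,
    tendsto_logLogAddOne.eventually_ge_atTop 20, eventually_ge_atTop 2]
    with n hmertens hlarge hn y z hz
  have hn0 : (n : ℝ) ≠ 0 := Nat.cast_ne_zero.2 (by lia)
  have hsum : ∑ p ∈ Nat.primesLE n, (1 : ℝ) / p ≤ logLogAddOne n - 1 / 10 := by
    linarith [log_log_add_one_le_logLogAddOne hn]
  have : 0 < logLogAddOne n := by linarith
  have hinv : 1 / logLogAddOne n ≤ 1 / 20 := by gcongr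
  refine (norm_Phifun_le_exp y (by lia : n ≠ 0) z).trans (Real.exp_le_exp.2 ?_)
  calc ‖z‖ * ∑ p ∈ Nat.primesLE n, (1 : ℝ) / p + ‖z‖ ^ 2 * (1 / n)
      = ‖z‖ * ∑ p ∈ Nat.primesLE n, (1 : ℝ) / p + ‖z‖ * (1 / logLogAddOne n) := by
        rw [hz]
        field_simp
    _ ≤ ‖z‖ * (logLogAddOne n - 1 / 10) + ‖z‖ * (1 / 20) := by gcongr
    _ = n - 1 / 20 * (n / logLogAddOne n) := by
        rw [hz]
        field_simp
        ring

-- Cauchy's estimate on the circle of radius `n / logLogAddOne n`.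
lemma eventually_factorial_mul_abs_PhiCoefR_le :
    ∀ᶠ n : ℕ in atTop, ∀ y : ℝ,
      (n.factorial : ℝ) * |PhiCoefR y n| ≤ Real.exp 1 * logLogAddOne n ^ n := by
  filter_upwards [eventually_norm_Phifun_le_exp, eventually_log_le_div_logLogAddOne,
    eventually_ge_atTop 1] with n hPhi hlog hn y
  have hn0 : (0 : ℝ) < n := Nat.cast_pos.2 hn
  have := logLogAddOne_pos hn
  set R := n / logLogAddOne n with hR
  have hexp : n * Real.exp (-(1 / 20 * R)) ≤ 1 := by
    rw [Real.exp_neg, ← div_eq_mul_inv, div_le_one (Real.exp_pos _)]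
    exact (Real.log_le_iff_le_exp hn0).1 hlog
  calc (n.factorial : ℝ) * |PhiCoefR y n|
      ≤ (n * Real.exp 1 * (n / Real.exp 1) ^ n) * (Real.exp (n - 1 / 20 * R) / R ^ n) := by
        gcongr
        · exact factorial_le_mul_exp_one_mul_pow (by lia)
        · exact abs_PhiCoefR_le_div_pow (by positivity) (hPhi y) n
    _ = Real.exp 1 * logLogAddOne n ^ n * (n * Real.exp (-(1 / 20 * R))) := by
        rw [sub_eq_add_neg, Real.exp_add, div_pow, hR, div_pow, ← Real.exp_nat_mul, mul_one]
        field_simp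
    _ ≤ Real.exp 1 * logLogAddOne n ^ n :=
        mul_le_of_le_one_right (by positivity) hexp

lemma exists_factorial_mul_abs_PhiCoefR_le :
    ∃ C : ℝ, 0 < C ∧ ∀ n : ℕ, 1 ≤ n → ∀ y : ℝ,
      (n.factorial : ℝ) * |PhiCoefR y n| ≤ C * logLogAddOne n ^ n := by
  obtain ⟨N, hN⟩ := eventually_atTop.1 eventually_factorial_mul_abs_PhiCoefR_le
  refine ⟨Real.exp 1 * (N.factorial * 2 ^ N + 1), by positivity, fun n hn y ↦ ?_⟩
  have hhalf := half_le_logLogAddOne hn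
  have := logLogAddOne_pos hn
  rcases le_or_gt N n with hNn | hnN
  · refine (hN n hNn y).trans ?_
    gcongr
    exact le_mul_of_one_le_right (by positivity) (le_add_of_nonneg_left (by positivity))
  · have hcoef : |PhiCoefR y n| ≤ Real.exp 1 := by
      have hPhi : ∀ z : ℂ, ‖z‖ = 1 → ‖Phifun y z‖ ≤ Real.exp 1 := fun z hz ↦ by
        simpa [hz] using norm_Phifun_le_exp y one_ne_zero z
      simpa using abs_PhiCoefR_le_div_pow one_pos hPhi n
    have hpow : 1 ≤ 2 ^ N * logLogAddOne n ^ n := calc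
      (1 : ℝ) ≤ (2 * logLogAddOne n) ^ n := one_le_pow₀ (by linarith)
      _ = 2 ^ n * logLogAddOne n ^ n := mul_pow _ _ _
      _ ≤ 2 ^ N * logLogAddOne n ^ n := by
        gcongr
        exact one_le_two
    calc (n.factorial : ℝ) * |PhiCoefR y n| ≤ N.factorial * Real.exp 1 := by gcongr
      _ ≤ N.factorial * Real.exp 1 * (2 ^ N * logLogAddOne n ^ n) :=
        le_mul_of_one_le_right (by positivity) hpow
      _ ≤ Real.exp 1 * (N.factorial * 2 ^ N + 1) * logLogAddOne n ^ n := by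
        have : 0 ≤ Real.exp 1 * logLogAddOne n ^ n := by positivity
        linarith

/-! ### Hermite functions -/

/-- The Hermite function `e^{-u²/2} H_m(u)`. -/
noncomputable def hermiteFun (m : ℕ) (u : ℝ) : ℝ := Real.exp (-u ^ 2 / 2) * hermiteEval m u

lemma hasDerivAt_hermiteFun (m : ℕ) (u : ℝ) :
    HasDerivAt (hermiteFun m) (-hermiteFun (m + 1) u) u := by
  have hquad : HasDerivAt (fun u : ℝ ↦ -u ^ 2 / 2) (-u) u :=
    (((hasDerivAt_pow 2 u).fun_neg).div_const 2).congr_deriv (by push_cast; ring)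
  refine (hquad.exp.fun_mul
    (Polynomial.hasDerivAt_aeval (Polynomial.hermite m) u)).congr_deriv ?_
  simp only [hermiteFun, hermiteEval, Polynomial.hermite_succ, map_sub, map_mul,
    Polynomial.aeval_X]
  ring

lemma hermiteFun_zero (u : ℝ) : hermiteFun 0 u = Real.exp (-u ^ 2 / 2) := by
  simp [hermiteFun, hermiteEval]

lemma integrable_pow_mul_exp_neg_sq_div_two (m : ℕ) :
    Integrable fun u : ℝ ↦ u ^ m * Real.exp (-u ^ 2 / 2) := by
  have h := integrable_rpow_mul_exp_neg_mul_sq (b := 1 / 2) (by norm_num) (s := m)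
    (by linarith [Nat.cast_nonneg (α := ℝ) m])
  refine h.congr (ae_of_all _ fun u ↦ ?_)
  simp only [Real.rpow_natCast]
  congr 2
  ring

lemma integrable_hermiteFun (m : ℕ) : Integrable (hermiteFun m) := by
  set P := (Polynomial.hermite m).map (Int.castRingHom ℝ) with hP
  have hexpand : hermiteFun m = fun u ↦ ∑ i ∈ Finset.range (P.natDegree + 1),
      P.coeff i * (u ^ i * Real.exp (-u ^ 2 / 2)) := by
    funext u
    rw [hermiteFun, hermiteEval, Polynomial.aeval_def, algebraMap_int_eq,
      ← Polynomial.eval_map, ← hP, Polynomial.eval_eq_sum_range, Finset.mul_sum]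
    exact Finset.sum_congr rfl fun i _ ↦ by ring
  rw [hexpand]
  exact integrable_finsetSum _ fun i _ ↦
    (integrable_pow_mul_exp_neg_sq_div_two i).const_mul _

lemma norm_exp_mul_mul_I (a b : ℝ) : ‖Complex.exp (a * b * I)‖ = 1 := by
  rw [← Complex.ofReal_mul, Complex.norm_exp_ofReal_mul_I]

lemma integrable_exp_mul_mul_I_mul {μ : Measure ℝ} {q : ℝ → ℂ} (hq : Integrable q μ) (ξ : ℝ) :
    Integrable (fun u : ℝ ↦ Complex.exp (ξ * u * I) * q u) μ :=
  hq.bdd_mul (c := 1) (Continuous.aestronglyMeasurable (by fun_prop))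
    (ae_of_all _ fun u ↦ (norm_exp_mul_mul_I ξ u).le)

lemma integral_exp_mul_mul_I_mul_exp_neg_sq_div_two (ξ : ℝ) :
    ∫ u : ℝ, Complex.exp (ξ * u * I) * (Real.exp (-u ^ 2 / 2) : ℂ) =
      √(2 * π) * Real.exp (-ξ ^ 2 / 2) := by
  have hconst : ((π : ℂ) / (1 / 2)) ^ (1 / 2 : ℂ) = (√(2 * π) : ℂ) := by
    rw [show (π : ℂ) / (1 / 2) = ((2 * π : ℝ) : ℂ) by push_cast; ring,
      show (1 / 2 : ℂ) = ((1 / 2 : ℝ) : ℂ) by norm_num,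
      ← Complex.ofReal_cpow (by positivity), Real.sqrt_eq_rpow]
  calc ∫ u : ℝ, Complex.exp (ξ * u * I) * (Real.exp (-u ^ 2 / 2) : ℂ)
      = ∫ u : ℝ, Complex.exp (I * ξ * u) * Complex.exp (-(1 / 2) * u ^ 2) := by
        congr 1 with u
        push_cast
        ring_nf
    _ = √(2 * π) * Real.exp (-ξ ^ 2 / 2) := by
        rw [fourierIntegral_gaussian (by norm_num), hconst]
        push_cast
        ring_nf

lemma integral_exp_mul_mul_I_mul_hermiteFun (m : ℕ) (ξ : ℝ) :
    ∫ u : ℝ, Complex.exp (ξ * u * I) * (hermiteFun m u : ℂ) =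
      √(2 * π) * (ξ * I) ^ m * Real.exp (-ξ ^ 2 / 2) := by
  have hint (m : ℕ) := integrable_exp_mul_mul_I_mul (integrable_hermiteFun m).ofReal ξ
  induction m with
  | zero => simp_rw [hermiteFun_zero, integral_exp_mul_mul_I_mul_exp_neg_sq_div_two]; simp
  | succ m ih =>
    have hexp (u : ℝ) : HasDerivAt (fun u : ℝ ↦ Complex.exp (ξ * u * I))
        (Complex.exp (ξ * u * I) * (ξ * I)) u := by
      have : HasDerivAt (fun u : ℝ ↦ (ξ : ℂ) * u * I) (ξ * I) u := by
        simpa using (Complex.ofRealCLM.hasDerivAt.const_mul (ξ : ℂ)).mul_const I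
      exact this.cexp
    have hparts := integral_mul_deriv_eq_deriv_mul_of_integrable
      (fun u _ ↦ hexp u) (fun u _ ↦ (hasDerivAt_hermiteFun m u).ofReal_comp)
      ((hint (m + 1)).neg.congr (ae_of_all _ fun u ↦ by simp))
      (((hint m).const_mul (ξ * I)).congr (ae_of_all _ fun u ↦ by
        simp only [coe_algebraMap, Pi.mul_apply]; ring))
      (hint m)
    simp only [Complex.ofReal_neg, mul_neg, integral_neg, neg_inj, mul_right_comm _ (ξ * I : ℂ),
      integral_mul_const, ih] at hparts
    rw [hparts]
    ring

lemma integral_abs_pow_mul_exp_neg_sq_div_two (m : ℕ) :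
    ∫ u : ℝ, |u| ^ m * Real.exp (-u ^ 2 / 2) =
      2 ^ (((m : ℝ) + 1) / 2) * Real.Gamma ((m + 1) / 2) := by
  have h := _root_.integral_rpow_mul_exp_neg_mul_rpow (p := 2) (q := m) (b := 1 / 2)
    (by norm_num) (by linarith [Nat.cast_nonneg (α := ℝ) m]) (by norm_num)
  have hconst : ((1 : ℝ) / 2) ^ (-((m : ℝ) + 1) / 2) = 2 ^ (((m : ℝ) + 1) / 2) := by
    rw [one_div, Real.inv_rpow zero_le_two, neg_div, Real.rpow_neg zero_le_two, inv_inv]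
  calc ∫ u : ℝ, |u| ^ m * Real.exp (-u ^ 2 / 2)
      = 2 * ∫ u in Set.Ioi (0 : ℝ), u ^ m * Real.exp (-u ^ 2 / 2) := by
        rw [← integral_comp_abs (f := fun u ↦ u ^ m * Real.exp (-u ^ 2 / 2))]
        simp only [sq_abs]
    _ = 2 * ∫ u in Set.Ioi (0 : ℝ), u ^ (m : ℝ) * Real.exp (-(1 / 2) * u ^ (2 : ℝ)) := by
        simp only [Real.rpow_natCast, Real.rpow_two, neg_mul, one_div, inv_mul_eq_div, neg_div]
    _ = 2 ^ (((m : ℝ) + 1) / 2) * Real.Gamma ((m + 1) / 2) := by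
        rw [h, hconst]
        ring

lemma gamma_nat_add_half_le (n : ℕ) : Real.Gamma (n + 1 / 2) ≤ √π * n.factorial := by
  induction n with
  | zero => rw [Nat.cast_zero, zero_add, Real.Gamma_one_half_eq]; simp
  | succ n ih =>
    calc Real.Gamma ((n + 1 : ℕ) + 1 / 2) = (n + 1 / 2) * Real.Gamma (n + 1 / 2) := by
          rw [← Real.Gamma_add_one (by positivity)]
          push_cast
          ring_nf
      _ ≤ (n + 1) * (√π * n.factorial) := by
          have : 0 ≤ Real.Gamma (n + 1 / 2) := Real.Gamma_nonneg_of_nonneg (by positivity)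
          gcongr
          norm_num
      _ = √π * (n + 1).factorial := by
          rw [Nat.factorial_succ]
          push_cast
          ring

lemma integral_abs_pow_even_mul_exp_le (n : ℕ) :
    ∫ u : ℝ, |u| ^ (2 * n) * Real.exp (-u ^ 2 / 2) ≤ √(2 * π) * (2 ^ n * n.factorial) := by
  have hexp : (((2 * n : ℕ) : ℝ) + 1) / 2 = n + 1 / 2 := by push_cast; ring
  rw [integral_abs_pow_mul_exp_neg_sq_div_two, hexp, Real.rpow_add two_pos, Real.rpow_natCast,
    ← Real.sqrt_eq_rpow]
  calc 2 ^ n * √2 * Real.Gamma (n + 1 / 2) ≤ 2 ^ n * √2 * (√π * n.factorial) := by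
        gcongr
        exact gamma_nat_add_half_le n
    _ = √(2 * π) * (2 ^ n * n.factorial) := by
        rw [Real.sqrt_mul zero_le_two]
        ring

lemma integral_abs_pow_odd_mul_exp (n : ℕ) :
    ∫ u : ℝ, |u| ^ (2 * n + 1) * Real.exp (-u ^ 2 / 2) = 2 ^ (n + 1) * n.factorial := by
  have hexp : (((2 * n + 1 : ℕ) : ℝ) + 1) / 2 = n + 1 := by push_cast; ring
  rw [integral_abs_pow_mul_exp_neg_sq_div_two, hexp, Real.Gamma_nat_eq_factorial]
  exact_mod_cast congrArg (· * (n.factorial : ℝ)) (Real.rpow_natCast 2 (n + 1))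

lemma intervalIntegral_abs_pow_odd_mul_exp_le (n : ℕ) {Λ : ℝ} (hΛ : 0 ≤ Λ) :
    ∫ u in (-Λ)..Λ, |u| ^ (2 * n + 1) * Real.exp (-u ^ 2 / 2) ≤ 2 ^ (n + 1) * n.factorial := by
  rw [← integral_abs_pow_odd_mul_exp, intervalIntegral.integral_of_le (by linarith)]
  refine setIntegral_le_integral ?_ (ae_of_all _ fun u ↦ by positivity)
  refine (integrable_pow_mul_exp_neg_sq_div_two (2 * n + 1)).norm.congr (ae_of_all _ fun u ↦ ?_)
  simp [abs_of_pos (Real.exp_pos _)]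

lemma iteratedDeriv_charFun_gaussianReal (m : ℕ) :
    iteratedDeriv m (charFun (ProbabilityTheory.gaussianReal 0 1)) =
      fun u : ℝ ↦ (((-1) ^ m * hermiteFun m u : ℝ) : ℂ) := by
  induction m with
  | zero =>
    funext u
    rw [iteratedDeriv_zero, ProbabilityTheory.charFun_gaussianReal, hermiteFun_zero]
    push_cast
    ring_nf
  | succ m ih =>
    funext u
    rw [iteratedDeriv_succ, ih,
      ((hasDerivAt_hermiteFun m u).const_mul ((-1) ^ m)).ofReal_comp.deriv]
    push_cast
    ring

lemma abs_hermiteFun_le (m : ℕ) (u : ℝ) :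
    |hermiteFun m u| ≤ (√(2 * π))⁻¹ * ∫ x : ℝ, |x| ^ m * Real.exp (-x ^ 2 / 2) := by
  have hmem : MemLp id m (ProbabilityTheory.gaussianReal 0 1) :=
    ProbabilityTheory.memLp_id_gaussianReal' m (ENNReal.natCast_ne_top m)
  have hnorm : |hermiteFun m u| =
      ‖iteratedDeriv m (charFun (ProbabilityTheory.gaussianReal 0 1)) u‖ := by
    rw [iteratedDeriv_charFun_gaussianReal, Complex.norm_real, norm_mul, norm_pow, norm_neg,
      norm_one, one_pow, one_mul, Real.norm_eq_abs]
  rw [hnorm, iteratedDeriv_charFun hmem, norm_mul, norm_pow, Complex.norm_I, one_pow, one_mul]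
  calc _ ≤ ∫ x : ℝ, |x| ^ m ∂ProbabilityTheory.gaussianReal 0 1 := by
        refine norm_integral_le_of_norm_le hmem.integrable_norm_pow' (ae_of_all _ fun x ↦ ?_)
        simp [norm_exp_mul_mul_I]
    _ = (√(2 * π))⁻¹ * ∫ x : ℝ, |x| ^ m * Real.exp (-x ^ 2 / 2) := by
        rw [ProbabilityTheory.integral_gaussianReal_eq_integral_smul one_ne_zero,
          ← integral_const_mul]
        congr 1 with x
        simp only [ProbabilityTheory.gaussianPDFReal, NNReal.coe_one, mul_one, sub_zero,
        smul_eq_mul]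
        ring_nf

lemma abs_hermiteFun_two_mul_le (n : ℕ) (u : ℝ) :
    |hermiteFun (2 * n) u| ≤ 2 ^ n * n.factorial :=
  calc |hermiteFun (2 * n) u|
      ≤ (√(2 * π))⁻¹ * ∫ x : ℝ, |x| ^ (2 * n) * Real.exp (-x ^ 2 / 2) := abs_hermiteFun_le _ u
    _ ≤ (√(2 * π))⁻¹ * (√(2 * π) * (2 ^ n * n.factorial)) := by
        gcongr
        exact integral_abs_pow_even_mul_exp_le n
    _ = 2 ^ n * n.factorial := inv_mul_cancel_left₀ (by positivity) _

/-! ### Fejér smoothing -/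

/-- The Fejér kernel of bandwidth `Λ`, the Fourier transform of the triangle `1 - |ξ|/Λ` on
`[-Λ, Λ]`. Its junk value at `s = 0` is `0` instead of `Λ`. -/
noncomputable def fejerKernel (Λ s : ℝ) : ℝ := 2 * (1 - Real.cos (Λ * s)) / (Λ * s ^ 2)

lemma fejerKernel_eq_mul {Λ : ℝ} (hΛ : Λ ≠ 0) (s : ℝ) :
    fejerKernel Λ s = Λ * fejerKernel 1 (Λ * s) := by
  rcases eq_or_ne s 0 with rfl | hs
  · simp [fejerKernel]
  · rw [fejerKernel, fejerKernel]
    field_simp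

lemma fejerKernel_nonneg {Λ : ℝ} (hΛ : 0 ≤ Λ) (s : ℝ) : 0 ≤ fejerKernel Λ s :=
  div_nonneg (by linarith [Real.cos_le_one (Λ * s)]) (by positivity)

lemma fejerKernel_one_le (s : ℝ) : fejerKernel 1 s ≤ 5 * (1 + s ^ 2)⁻¹ := by
  rcases eq_or_ne s 0 with rfl | hs
  · simp [fejerKernel]
  · have hsq : 0 < s ^ 2 := by positivity
    rw [fejerKernel, one_mul, one_mul, ← div_eq_mul_inv,
      div_le_div_iff₀ hsq (by positivity)]
    nlinarith [Real.one_sub_sq_div_two_le_cos (x := s), Real.neg_one_le_cos s]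

lemma integrable_fejerKernel {Λ : ℝ} (hΛ : Λ ≠ 0) : Integrable (fejerKernel Λ) := by
  have hone : Integrable (fejerKernel 1) := by
    refine (integrable_inv_one_add_sq.const_mul 5).mono' ?_ (ae_of_all _ fun s ↦ ?_)
    · exact Measurable.aestronglyMeasurable (by unfold fejerKernel; fun_prop)
    · rw [Real.norm_of_nonneg (fejerKernel_nonneg zero_le_one s)]
      exact fejerKernel_one_le s
  rw [funext (fejerKernel_eq_mul hΛ)]
  exact (hone.comp_mul_left' hΛ).const_mul Λ

lemma integral_fejerKernel {Λ : ℝ} (hΛ : 0 < Λ) :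
    ∫ s, fejerKernel Λ s = ∫ s, fejerKernel 1 s := by
  simp_rw [fejerKernel_eq_mul hΛ.ne', integral_const_mul, Measure.integral_comp_mul_left]
  rw [abs_of_pos (inv_pos.2 hΛ), smul_eq_mul, mul_inv_cancel_left₀ hΛ.ne']

lemma integral_fejerKernel_one_pos : 0 < ∫ s, fejerKernel 1 s := by
  rw [integral_pos_iff_support_of_nonneg (fejerKernel_nonneg zero_le_one)
    (integrable_fejerKernel one_ne_zero)]
  have hsupp : Set.Ioo 0 1 ⊆ Function.support (fejerKernel 1) := fun s hs ↦ by
    have hcos : Real.cos s < 1 := by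
      simpa using Real.cos_lt_cos_of_nonneg_of_le_pi le_rfl
        (by linarith [Real.pi_gt_three, hs.2]) hs.1
    have hs0 : 0 < s := hs.1
    rw [Function.mem_support, fejerKernel, one_mul, one_mul]
    exact (div_pos (by linarith) (by positivity)).ne'
  exact (by simp : 0 < volume (Set.Ioo (0 : ℝ) 1)).trans_le (measure_mono hsupp)

lemma exists_setIntegral_fejerKernel_ge : ∃ A : ℝ, 0 < A ∧ ∀ Λ > 0,
    3 / 4 * ∫ s, fejerKernel Λ s ≤ ∫ s in Set.Icc (-(A / Λ)) (A / Λ), fejerKernel Λ s := by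
  have hW := integral_fejerKernel_one_pos
  have hlim := intervalIntegral_tendsto_integral (integrable_fejerKernel one_ne_zero)
    tendsto_neg_atTop_atBot tendsto_id
  obtain ⟨A, hmass, hA⟩ := ((hlim.eventually (lt_mem_nhds
    (show 3 / 4 * (∫ s, fejerKernel 1 s) < ∫ s, fejerKernel 1 s by linarith))).and
    (eventually_gt_atTop 0)).exists
  refine ⟨A, hA, fun Λ hΛ ↦ ?_⟩
  have hAΛ : 0 < A / Λ := by positivity
  rw [integral_fejerKernel hΛ, integral_Icc_eq_integral_Ioc,
    ← intervalIntegral.integral_of_le (by linarith)]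
  simp_rw [fejerKernel_eq_mul hΛ.ne']
  rw [intervalIntegral.integral_const_mul, intervalIntegral.mul_integral_comp_mul_left,
    mul_neg, mul_div_cancel₀ _ hΛ.ne']
  exact hmass.le

lemma intervalIntegral_mul_exp_of_even {f : ℝ → ℝ} (hf : Continuous f) (heven : f.Even)
    (Λ x : ℝ) : ∫ ξ in (-Λ)..Λ, (f ξ : ℂ) * Complex.exp (ξ * x * I) =
      ((∫ ξ in (0)..Λ, 2 * f ξ * Real.cos (ξ * x) : ℝ) : ℂ) := by
  have hint (a b : ℝ) :
      IntervalIntegrable (fun ξ : ℝ ↦ (f ξ : ℂ) * Complex.exp (ξ * x * I)) volume a b :=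
    Continuous.intervalIntegrable (by fun_prop) a b
  have hneg := intervalIntegral.integral_comp_neg (a := 0) (b := Λ)
    fun ξ : ℝ ↦ (f ξ : ℂ) * Complex.exp (ξ * x * I)
  rw [neg_zero] at hneg
  rw [← intervalIntegral.integral_add_adjacent_intervals (hint (-Λ) 0) (hint 0 Λ), ← hneg,
    ← intervalIntegral.integral_add (Continuous.intervalIntegrable (by fun_prop) _ _)
      (hint 0 Λ), ← intervalIntegral.integral_ofReal]
  congr 1 with ξ
  rw [heven ξ]
  push_cast
  rw [Complex.cos]
  ring_nf

lemma intervalIntegral_triangle_mul_exp {Λ x : ℝ} (hΛ : 0 < Λ) (hx : x ≠ 0) :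
    ∫ ξ in (-Λ)..Λ, ((1 - |ξ| / Λ : ℝ) : ℂ) * Complex.exp (ξ * x * I) = fejerKernel Λ x := by
  rw [intervalIntegral_mul_exp_of_even (f := fun ξ ↦ 1 - |ξ| / Λ) (by fun_prop)
    (fun ξ ↦ by simp only [abs_neg])]
  congr 1
  have hderiv (ξ : ℝ) : HasDerivAt
      (fun ξ : ℝ ↦ 2 * ((1 - ξ / Λ) * (Real.sin (ξ * x) / x) - Real.cos (ξ * x) / (Λ * x ^ 2)))
      (2 * (1 - ξ / Λ) * Real.cos (ξ * x)) ξ := by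
    have hlin : HasDerivAt (fun ξ : ℝ ↦ ξ * x) x ξ := by
      simpa using (hasDerivAt_id ξ).mul_const x
    have htri : HasDerivAt (fun ξ : ℝ ↦ 1 - ξ / Λ) (-(1 / Λ)) ξ :=
      ((hasDerivAt_id ξ).div_const Λ).const_sub 1
    refine (((htri.fun_mul (hlin.sin.div_const x)).fun_sub
      (hlin.cos.div_const (Λ * x ^ 2))).const_mul 2).congr_deriv ?_
    field_simp
    ring
  calc ∫ ξ in (0)..Λ, 2 * (1 - |ξ| / Λ) * Real.cos (ξ * x)
      = ∫ ξ in (0)..Λ, 2 * (1 - ξ / Λ) * Real.cos (ξ * x) := by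
        refine intervalIntegral.integral_congr fun ξ hξ ↦ ?_
        rw [Set.uIcc_of_le hΛ.le] at hξ
        simp only [abs_of_nonneg hξ.1]
    _ = fejerKernel Λ x := by
        rw [intervalIntegral.integral_eq_sub_of_hasDerivAt (fun ξ _ ↦ hderiv ξ)
          (Continuous.intervalIntegrable (by fun_prop) _ _), fejerKernel]
        field_simp
        simp
        ring

/-- The Fourier transform of the indicator of `[-b, -a]`. -/
noncomputable def windowTransform (a b ξ : ℝ) : ℂ := ∫ s in (-b)..(-a), Complex.exp (ξ * s * I)

lemma norm_windowTransform_le (a b : ℝ) {ξ : ℝ} (hξ : ξ ≠ 0) :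
    ‖windowTransform a b ξ‖ ≤ 2 / |ξ| := by
  have hc : (ξ : ℂ) * I ≠ 0 := by simp [hξ]
  simp_rw [windowTransform, mul_right_comm (ξ : ℂ) _ I]
  rw [integral_exp_mul_complex hc, norm_div, norm_mul, Complex.norm_I, mul_one,
    Complex.norm_real, Real.norm_eq_abs]
  gcongr
  refine (norm_sub_le _ _).trans_eq ?_
  rw [mul_right_comm, mul_right_comm _ I, norm_exp_mul_mul_I, norm_exp_mul_mul_I,
    one_add_one_eq_two]

lemma continuous_windowTransform (a b : ℝ) : Continuous (windowTransform a b) :=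
  intervalIntegral.continuous_parametric_intervalIntegral_of_continuous' (by fun_prop) _ _

lemma intervalIntegral_fejerKernel_eq {Λ : ℝ} (hΛ : 0 < Λ) (a b x : ℝ) :
    ((∫ s in (x - b)..(x - a), fejerKernel Λ s : ℝ) : ℂ) = ∫ ξ in (-Λ)..Λ,
      ((1 - |ξ| / Λ : ℝ) : ℂ) * windowTransform a b ξ * Complex.exp (ξ * x * I) := by
  have hshift (ξ : ℝ) : ∫ s in (x - b)..(x - a), Complex.exp (ξ * s * I) =
      windowTransform a b ξ * Complex.exp (ξ * x * I) := by
    rw [sub_eq_add_neg, sub_eq_add_neg, ← intervalIntegral.integral_comp_add_left,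
      windowTransform, ← intervalIntegral.integral_mul_const]
    congr 1 with s
    rw [← Complex.exp_add]
    push_cast
    ring_nf
  calc ((∫ s in (x - b)..(x - a), fejerKernel Λ s : ℝ) : ℂ)
      = ∫ s in (x - b)..(x - a), ∫ ξ in (-Λ)..Λ,
          ((1 - |ξ| / Λ : ℝ) : ℂ) * Complex.exp (ξ * s * I) := by
        rw [← intervalIntegral.integral_ofReal]
        refine intervalIntegral.integral_congr_ae ?_
        filter_upwards [Measure.ae_ne volume (0 : ℝ)] with s hs _
        exact (intervalIntegral_triangle_mul_exp hΛ hs).symm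
    _ = ∫ ξ in (-Λ)..Λ, ∫ s in (x - b)..(x - a),
          ((1 - |ξ| / Λ : ℝ) : ℂ) * Complex.exp (ξ * s * I) :=
        intervalIntegral_intervalIntegral_swap
          ((ContinuousOn.integrableOn_compact (isCompact_uIcc.prod isCompact_uIcc)
            (Continuous.continuousOn (by fun_prop))).mono_set
            (Set.prod_mono Set.uIoc_subset_uIcc Set.uIoc_subset_uIcc))
    _ = _ := by
        congr 1 with ξ
        rw [intervalIntegral.integral_const_mul, hshift, ← mul_assoc]

section Fubini

variable {Λ : ℝ} {ρ : Measure ℝ} {q : ℝ → ℝ}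

lemma integrable_fejerKernel_mul_indicator (hΛ : Λ ≠ 0) (hq : Integrable q ρ) (a b : ℝ) :
    Integrable (Function.uncurry fun s x : ℝ ↦
      fejerKernel Λ s * (Set.Icc (a + s) (b + s)).indicator q x) (volume.prod ρ) := by
  have hS : MeasurableSet ({z : ℝ × ℝ | a + z.1 ≤ z.2} ∩ {z : ℝ × ℝ | z.2 ≤ b + z.1}) :=
    (measurableSet_le (by fun_prop) (by fun_prop)).inter
      (measurableSet_le (by fun_prop) (by fun_prop))
  refine (((integrable_fejerKernel hΛ).mul_prod hq).indicator hS).congr (ae_of_all _ fun z ↦ ?_)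
  simp only [Function.uncurry, Set.indicator, Set.mem_inter_iff, Set.mem_ofPred_eq, Set.mem_Icc]
  split_ifs <;> simp

lemma integrable_fejerKernel_mul_setIntegral [SFinite ρ] (hΛ : Λ ≠ 0) (hq : Integrable q ρ)
    (a b : ℝ) :
    Integrable fun s ↦ fejerKernel Λ s * ∫ x in Set.Icc (a + s) (b + s), q x ∂ρ := by
  refine (integrable_fejerKernel_mul_indicator hΛ hq a b).integral_prod_left.congr
    (ae_of_all _ fun s ↦ ?_)
  simp only [Function.uncurry]
  rw [integral_const_mul, integral_indicator measurableSet_Icc]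

lemma integral_fejerKernel_mul_setIntegral [SFinite ρ] (hΛ : Λ ≠ 0) (hq : Integrable q ρ) {a b : ℝ}
    (hab : a ≤ b) : ∫ s, fejerKernel Λ s * ∫ x in Set.Icc (a + s) (b + s), q x ∂ρ =
      ∫ x, (∫ s in (x - b)..(x - a), fejerKernel Λ s) * q x ∂ρ := by
  have hmem (s x : ℝ) : fejerKernel Λ s * (Set.Icc (a + s) (b + s)).indicator q x =
      (Set.Icc (x - b) (x - a)).indicator (fejerKernel Λ) s * q x := by
    have hiff : x ∈ Set.Icc (a + s) (b + s) ↔ s ∈ Set.Icc (x - b) (x - a) := by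
      rw [Set.mem_Icc, Set.mem_Icc, sub_le_iff_le_add', le_sub_iff_add_le', and_comm]
    simp only [Set.indicator, hiff, ite_mul, mul_ite, zero_mul, mul_zero]
  calc ∫ s, fejerKernel Λ s * ∫ x in Set.Icc (a + s) (b + s), q x ∂ρ
      = ∫ s, ∫ x, fejerKernel Λ s * (Set.Icc (a + s) (b + s)).indicator q x ∂ρ := by
        simp_rw [integral_const_mul, integral_indicator measurableSet_Icc]
    _ = ∫ x, ∫ s, fejerKernel Λ s * (Set.Icc (a + s) (b + s)).indicator q x ∂volume ∂ρ :=
        integral_integral_swap (integrable_fejerKernel_mul_indicator hΛ hq a b)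
    _ = ∫ x, (∫ s in (x - b)..(x - a), fejerKernel Λ s) * q x ∂ρ := by
        simp_rw [hmem, integral_mul_const, integral_indicator measurableSet_Icc,
          integral_Icc_eq_integral_Ioc]
        congr 1 with x
        rw [intervalIntegral.integral_of_le (by linarith)]

lemma integral_fejerKernel_mul_setIntegral_eq_fourier [SFinite ρ] (hΛ : 0 < Λ) (hq : Integrable q ρ)
    {a b : ℝ} (hab : a ≤ b) :
    ((∫ s, fejerKernel Λ s * ∫ x in Set.Icc (a + s) (b + s), q x ∂ρ : ℝ) : ℂ) =
      ∫ ξ in (-Λ)..Λ, ((1 - |ξ| / Λ : ℝ) : ℂ) * windowTransform a b ξ *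
        ∫ x, Complex.exp (ξ * x * I) * (q x : ℂ) ∂ρ := by
  have hwindow := continuous_windowTransform a b
  have hweight : IntegrableOn (fun ξ : ℝ ↦ ((1 - |ξ| / Λ : ℝ) : ℂ) * windowTransform a b ξ)
      (Set.uIoc (-Λ) Λ) :=
    intervalIntegrable_iff.1 (Continuous.intervalIntegrable (by fun_prop) _ _)
  have hprod : Integrable (Function.uncurry fun (ξ x : ℝ) ↦ ((1 - |ξ| / Λ : ℝ) : ℂ) *
      windowTransform a b ξ * (Complex.exp (ξ * x * I) * (q x : ℂ)))
      ((volume.restrict (Set.uIoc (-Λ) Λ)).prod ρ) := by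
    refine ((Integrable.mul_prod hweight hq.ofReal).bdd_mul (c := 1)
      (f := fun z : ℝ × ℝ ↦ Complex.exp (z.1 * z.2 * I))
      (Continuous.aestronglyMeasurable (by fun_prop))
      (ae_of_all _ fun z ↦ (norm_exp_mul_mul_I z.1 z.2).le)).congr (ae_of_all _ fun z ↦ ?_)
    simp only [Function.uncurry, Complex.coe_algebraMap]
    ring
  rw [integral_fejerKernel_mul_setIntegral hΛ.ne' hq hab, ← integral_complex_ofReal]
  simp_rw [Complex.ofReal_mul, intervalIntegral_fejerKernel_eq hΛ, ← integral_const_mul,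
    ← intervalIntegral.integral_mul_const, mul_assoc _ (Complex.exp _)]
  rw [← intervalIntegral_integral_swap hprod]

lemma intervalIntegrable_windowTransform_mul (hq : Integrable q ρ) (a b : ℝ) :
    IntervalIntegrable (fun ξ : ℝ ↦ ((1 - |ξ| / Λ : ℝ) : ℂ) * windowTransform a b ξ *
      ∫ x, Complex.exp (ξ * x * I) * (q x : ℂ) ∂ρ) volume (-Λ) Λ := by
  have hwindow := continuous_windowTransform a b
  have hfourier : Continuous fun ξ : ℝ ↦ ∫ x, Complex.exp (ξ * x * I) * (q x : ℂ) ∂ρ := by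
    refine continuous_of_dominated (fun ξ ↦ ?_) (fun ξ ↦ ae_of_all _ fun x ↦ ?_) hq.norm
      (ae_of_all _ fun x ↦ by fun_prop)
    · exact (integrable_exp_mul_mul_I_mul hq.ofReal ξ).aestronglyMeasurable
    · rw [norm_mul, norm_exp_mul_mul_I, one_mul, Complex.norm_real]
  exact Continuous.intervalIntegrable (by fun_prop) _ _

end Fubini

lemma le_of_integral_mul_le {α : Type*} [MeasurableSpace α] {μ : Measure α} {k d : α → ℝ}
    {S : Set α} {D η β : ℝ} (hS : MeasurableSet S) (hk : Integrable k μ) (hk₀ : ∀ x, 0 ≤ k x)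
    (hpos : 0 < ∫ x, k x ∂μ) (hmass : 3 / 4 * ∫ x, k x ∂μ ≤ ∫ x in S, k x ∂μ) (hη : 0 ≤ η)
    (hβ : 0 ≤ β) (hd : ∀ x, -η ≤ d x) (hdS : ∀ x ∈ S, D ≤ d x)
    (hkd : Integrable (fun x ↦ k x * d x) μ) (hint : ∫ x, k x * d x ∂μ ≤ β) :
    D ≤ 4 / 3 * (β / ∫ x, k x ∂μ) + η / 3 := by
  rcases le_or_gt D 0 with hD | hD
  · exact hD.trans (by positivity)
  have hpointwise (x : α) : (D + η) * S.indicator k x - η * k x ≤ k x * d x := by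
    by_cases hx : x ∈ S
    · rw [Set.indicator_of_mem hx]
      nlinarith [mul_le_mul_of_nonneg_left (hdS x hx) (hk₀ x)]
    · rw [Set.indicator_of_notMem hx]
      nlinarith [mul_le_mul_of_nonneg_left (hd x) (hk₀ x)]
  have hindicator := (hk.indicator hS).const_mul (D + η)
  have hlower := integral_mono (hindicator.sub (hk.const_mul η)) hkd hpointwise
  rw [Pi.sub_def, integral_sub hindicator (hk.const_mul η), integral_const_mul, integral_const_mul,
    integral_indicator hS] at hlower
  have hscaled : D * (∫ x, k x ∂μ) ≤ 4 / 3 * β + η / 3 * ∫ x, k x ∂μ := by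
    nlinarith [mul_le_mul_of_nonneg_left hmass (add_pos_of_pos_of_nonneg hD hη).le]
  rw [← mul_div_assoc, div_add' _ _ _ hpos.ne', le_div_iff₀ hpos]
  exact hscaled

lemma le_of_integral_fejerKernel_mul_le {Λ δ D η β : ℝ} {d : ℝ → ℝ} (hΛ : 0 < Λ)
    (hmass : 3 / 4 * ∫ s, fejerKernel Λ s ≤ ∫ s in Set.Icc (-δ) δ, fejerKernel Λ s)
    (hη : 0 ≤ η) (hβ : 0 ≤ β) (hd : ∀ s, -η ≤ d s) (hdS : ∀ s ∈ Set.Icc (-δ) δ, D ≤ d s)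
    (hint : Integrable fun s ↦ fejerKernel Λ s * d s) (hle : ∫ s, fejerKernel Λ s * d s ≤ β) :
    D ≤ 4 / 3 * (β / ∫ s, fejerKernel 1 s) + η / 3 := by
  rw [← integral_fejerKernel hΛ]
  exact le_of_integral_mul_le measurableSet_Icc (integrable_fejerKernel hΛ.ne')
    (fejerKernel_nonneg hΛ.le) (integral_fejerKernel hΛ ▸ integral_fejerKernel_one_pos) hmass
    hη hβ hd hdS hint hle

/-- The error in approximating the measure of `[a, b]` by the integral of the density `g`. -/
noncomputable def intervalDiscrepancy (μ : Measure ℝ) (g : ℝ → ℝ) (a b : ℝ) : ℝ :=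
  μ.real (Set.Icc a b) - ∫ x in Set.Icc a b, g x

section Discrepancy

variable {μ : Measure ℝ} {g : ℝ → ℝ} {a b c d m : ℝ}

lemma abs_intervalDiscrepancy_le [IsProbabilityMeasure μ] (hg : Integrable g) (a b : ℝ) :
    |intervalDiscrepancy μ g a b| ≤ 1 + ∫ x, |g x| := by
  refine (abs_sub _ _).trans (add_le_add ?_ ?_)
  · rw [abs_of_nonneg measureReal_nonneg]
    exact measureReal_le_one
  · exact (abs_integral_le_integral_abs).trans
      (setIntegral_le_integral hg.abs (ae_of_all _ fun x ↦ abs_nonneg (g x)))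

lemma intervalDiscrepancy_of_lt (h : b < a) : intervalDiscrepancy μ g a b = 0 := by
  simp [intervalDiscrepancy, Set.Icc_eq_empty_of_lt h]

lemma setIntegral_Icc_le (hm : ∀ x, |g x| ≤ m) (hab : a ≤ b) :
    ∫ x in Set.Icc a b, g x ≤ m * (b - a) := by
  have hnorm := norm_setIntegral_le_of_norm_le_const (f := g) (C := m)
    (measure_Icc_lt_top (μ := volume) (a := a) (b := b)) fun x _ ↦ hm x
  rw [Real.volume_real_Icc_of_le hab] at hnorm
  exact (le_abs_self _).trans hnorm

lemma neg_le_intervalDiscrepancy (hm : ∀ x, |g x| ≤ m) (hab : a ≤ b) :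
    -(m * (b - a)) ≤ intervalDiscrepancy μ g a b := by
  have hmeasure : 0 ≤ μ.real (Set.Icc a b) := measureReal_nonneg
  rw [intervalDiscrepancy]
  linarith [setIntegral_Icc_le hm hab]

lemma intervalDiscrepancy_le_add [IsFiniteMeasure μ] (hg : Integrable g) (hm : ∀ x, |g x| ≤ m)
    (hca : c ≤ a) (hab : a ≤ b) (hbd : b ≤ d) :
    intervalDiscrepancy μ g a b ≤ intervalDiscrepancy μ g c d + m * ((d - c) - (b - a)) := by
  have hmeasure : μ.real (Set.Icc a b) ≤ μ.real (Set.Icc c d) :=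
    measureReal_mono (Set.Icc_subset_Icc hca hbd)
  have hinterval (p q : ℝ) : IntervalIntegrable g volume p q := hg.intervalIntegrable
  have hsplit : ∫ x in c..d, g x =
      (∫ x in c..a, g x) + (∫ x in a..b, g x) + ∫ x in b..d, g x := by
    rw [intervalIntegral.integral_add_adjacent_intervals (hinterval c a) (hinterval a b),
      intervalIntegral.integral_add_adjacent_intervals (hinterval c b) (hinterval b d)]
  rw [intervalIntegral.integral_of_le hca, intervalIntegral.integral_of_le hab,
    intervalIntegral.integral_of_le hbd, intervalIntegral.integral_of_le (by linarith)] at hsplit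
  simp only [← integral_Icc_eq_integral_Ioc] at hsplit
  rw [intervalDiscrepancy, intervalDiscrepancy, hsplit]
  linarith [setIntegral_Icc_le hm hca, setIntegral_Icc_le hm hbd]

variable [IsProbabilityMeasure μ] {Λ : ℝ} {B : ℝ → ℝ}

lemma integrable_fejerKernel_mul_intervalDiscrepancy (hΛ : Λ ≠ 0) (hg : Integrable g) (a b : ℝ) :
    Integrable fun s ↦ fejerKernel Λ s * intervalDiscrepancy μ g (a + s) (b + s) := by
  refine ((integrable_fejerKernel_mul_setIntegral hΛ (integrable_const (μ := μ) 1) a b).sub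
    (integrable_fejerKernel_mul_setIntegral hΛ hg a b)).congr (ae_of_all _ fun s ↦ ?_)
  simp [intervalDiscrepancy, mul_sub]

lemma integral_fejerKernel_mul_intervalDiscrepancy (hΛ : 0 < Λ) (hg : Integrable g)
    (hab : a ≤ b) :
    ((∫ s, fejerKernel Λ s * intervalDiscrepancy μ g (a + s) (b + s) : ℝ) : ℂ) =
      ∫ ξ in (-Λ)..Λ, ((1 - |ξ| / Λ : ℝ) : ℂ) * windowTransform a b ξ *
        (charFun μ ξ - ∫ x : ℝ, Complex.exp (ξ * x * I) * g x) := by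
  have hone : Integrable (fun _ ↦ (1 : ℝ)) μ := integrable_const 1
  calc ((∫ s, fejerKernel Λ s * intervalDiscrepancy μ g (a + s) (b + s) : ℝ) : ℂ)
      = ((∫ s, fejerKernel Λ s * ∫ _ in Set.Icc (a + s) (b + s), (1 : ℝ) ∂μ : ℝ) : ℂ) -
          (∫ s, fejerKernel Λ s * ∫ x in Set.Icc (a + s) (b + s), g x : ℝ) := by
        rw [← Complex.ofReal_sub, ← integral_sub
          (integrable_fejerKernel_mul_setIntegral hΛ.ne' hone a b)
          (integrable_fejerKernel_mul_setIntegral hΛ.ne' hg a b)]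
        simp [intervalDiscrepancy, mul_sub]
    _ = _ := by
        rw [integral_fejerKernel_mul_setIntegral_eq_fourier hΛ hone hab,
          integral_fejerKernel_mul_setIntegral_eq_fourier hΛ hg hab,
          ← intervalIntegral.integral_sub (intervalIntegrable_windowTransform_mul hone a b)
            (intervalIntegrable_windowTransform_mul hg a b)]
        simp [charFun_apply_real, mul_sub]

lemma abs_integral_fejerKernel_mul_intervalDiscrepancy_le (hΛ : 0 < Λ) (hg : Integrable g)
    (hB : IntervalIntegrable B volume (-Λ) Λ)
    (hclose : ∀ ξ, |ξ| ≤ Λ →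
      ‖charFun μ ξ - ∫ x : ℝ, Complex.exp (ξ * x * I) * g x‖ ≤ |ξ| * B ξ) (hab : a ≤ b) :
    |∫ s, fejerKernel Λ s * intervalDiscrepancy μ g (a + s) (b + s)| ≤
      2 * ∫ ξ in (-Λ)..Λ, B ξ := by
  rw [← Real.norm_eq_abs, ← Complex.norm_real,
    integral_fejerKernel_mul_intervalDiscrepancy hΛ hg hab, ← intervalIntegral.integral_const_mul]
  refine intervalIntegral.norm_integral_le_of_norm_le (by linarith) ?_ (hB.const_mul 2)
  filter_upwards [Measure.ae_ne volume (0 : ℝ)] with ξ hξ₀ hξ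
  have hξΛ : |ξ| ≤ Λ := abs_le.2 ⟨hξ.1.le, hξ.2⟩
  have hweight : ‖((1 - |ξ| / Λ : ℝ) : ℂ)‖ ≤ 1 := by
    rw [Complex.norm_real, Real.norm_eq_abs, abs_le]
    have : 0 ≤ |ξ| / Λ := by positivity
    constructor <;> linarith [div_le_one_of_le₀ hξΛ hΛ.le]
  calc ‖((1 - |ξ| / Λ : ℝ) : ℂ) * windowTransform a b ξ *
        (charFun μ ξ - ∫ x : ℝ, Complex.exp (ξ * x * I) * g x)‖
      ≤ 1 * (2 / |ξ|) * (|ξ| * B ξ) := by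
        rw [norm_mul, norm_mul]
        exact mul_le_mul (mul_le_mul hweight (norm_windowTransform_le a b hξ₀) (norm_nonneg _)
          zero_le_one) (hclose ξ hξΛ) (norm_nonneg _) (by positivity)
    _ = 2 * B ξ := by field_simp

end Discrepancy

/-- The largest discrepancy over all intervals. -/
noncomputable def discrepancy (μ : Measure ℝ) (g : ℝ → ℝ) : ℝ :=
  ⨆ p : ℝ × ℝ, |intervalDiscrepancy μ g p.1 p.2|

lemma discrepancy_nonneg {μ : Measure ℝ} {g : ℝ → ℝ} : 0 ≤ discrepancy μ g :=
  Real.iSup_nonneg fun _ ↦ abs_nonneg _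

section Smoothing

variable {μ : Measure ℝ} [IsProbabilityMeasure μ] {g B : ℝ → ℝ} {Λ m δ : ℝ}

lemma abs_intervalDiscrepancy_le_discrepancy (hg : Integrable g) (a b : ℝ) :
    |intervalDiscrepancy μ g a b| ≤ discrepancy μ g :=
  le_ciSup (f := fun p : ℝ × ℝ ↦ |intervalDiscrepancy μ g p.1 p.2|)
    ⟨_, Set.forall_mem_range.2 fun p ↦ abs_intervalDiscrepancy_le hg p.1 p.2⟩ (a, b)

/-- Widening or narrowing an interval by `δ` turns the one-sided monotonicity of the discrepancy
into a lower bound for `± intervalDiscrepancy` on all translates by at most `δ`, which the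
smoothing by the Fejér kernel detects. -/
lemma abs_intervalDiscrepancy_le_of_fejerKernel (hΛ : 0 < Λ) (hg : Integrable g)
    (hm : ∀ x, |g x| ≤ m) (hδ : 0 ≤ δ)
    (hmass : 3 / 4 * ∫ s, fejerKernel Λ s ≤ ∫ s in Set.Icc (-δ) δ, fejerKernel Λ s)
    (hB : IntervalIntegrable B volume (-Λ) Λ)
    (hclose : ∀ ξ, |ξ| ≤ Λ →
      ‖charFun μ ξ - ∫ x : ℝ, Complex.exp (ξ * x * I) * g x‖ ≤ |ξ| * B ξ)
    {a b : ℝ} (hab : a ≤ b) :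
    |intervalDiscrepancy μ g a b| ≤
      4 / 3 * ((2 * ∫ ξ in (-Λ)..Λ, B ξ) / ∫ s, fejerKernel 1 s) + discrepancy μ g / 3 +
        m * (2 * δ) := by
  have hm₀ : 0 ≤ m := (abs_nonneg _).trans (hm 0)
  have hsmooth {c d : ℝ} (hcd : c ≤ d) := abs_le.1
    (abs_integral_fejerKernel_mul_intervalDiscrepancy_le hΛ hg hB hclose hcd)
  have hβ : 0 ≤ 2 * ∫ ξ in (-Λ)..Λ, B ξ := by linarith [(hsmooth hab).1, (hsmooth hab).2]
  have hbound (c d : ℝ) := abs_le.1 (abs_intervalDiscrepancy_le_discrepancy (μ := μ) hg c d)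
  rw [abs_le]
  constructor
  · rcases lt_or_ge (b - a) (2 * δ) with hshort | hlong
    · have hnonneg : 0 ≤ 4 / 3 * ((2 * ∫ ξ in (-Λ)..Λ, B ξ) / ∫ s, fejerKernel 1 s) +
          discrepancy μ g / 3 := by
        have := integral_fejerKernel_one_pos
        have := discrepancy_nonneg (μ := μ) (g := g)
        positivity
      linarith [neg_le_intervalDiscrepancy (μ := μ) hm hab,
        mul_le_mul_of_nonneg_left hshort.le hm₀]
    · have hnarrow := le_of_integral_fejerKernel_mul_le hΛ hmass discrepancy_nonneg hβ
        (D := -intervalDiscrepancy μ g a b - m * (2 * δ))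
        (d := fun s ↦ -intervalDiscrepancy μ g (a + δ + s) (b - δ + s))
        (fun s ↦ neg_le_neg (hbound _ _).2) (fun s hs ↦ ?_) ?_ ?_
      · linarith
      · have hmono := intervalDiscrepancy_le_add (μ := μ) hg hm (a := a + δ + s)
          (b := b - δ + s) (c := a) (d := b) (by linarith [hs.1]) (by linarith)
          (by linarith [hs.2])
        linarith
      · simp only [mul_neg]
        exact (integrable_fejerKernel_mul_intervalDiscrepancy hΛ.ne' hg _ _).neg
      · simp only [mul_neg, integral_neg]
        linarith [(hsmooth (c := a + δ) (d := b - δ) (by linarith)).1]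
  · have hwiden := le_of_integral_fejerKernel_mul_le hΛ hmass discrepancy_nonneg hβ
      (D := intervalDiscrepancy μ g a b - m * (2 * δ))
      (d := fun s ↦ intervalDiscrepancy μ g (a - δ + s) (b + δ + s))
      (fun s ↦ (hbound _ _).1) (fun s hs ↦ ?_)
      (integrable_fejerKernel_mul_intervalDiscrepancy hΛ.ne' hg _ _)
      (hsmooth (by linarith)).2
    · linarith
    · have hmono := intervalDiscrepancy_le_add (μ := μ) hg hm (a := a) (b := b)
        (c := a - δ + s) (d := b + δ + s) (by linarith [hs.2]) hab (by linarith [hs.1])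
      linarith

/-- Esseen's smoothing inequality, for intervals. -/
theorem exists_abs_intervalDiscrepancy_le : ∃ C : ℝ, 0 < C ∧
    ∀ (μ : Measure ℝ) [IsProbabilityMeasure μ] (g B : ℝ → ℝ) (m Λ : ℝ), Integrable g →
      (∀ x, |g x| ≤ m) → 0 < Λ → IntervalIntegrable B volume (-Λ) Λ →
      (∀ ξ, |ξ| ≤ Λ → ‖charFun μ ξ - ∫ x : ℝ, Complex.exp (ξ * x * I) * g x‖ ≤ |ξ| * B ξ) →
      ∀ a b, |intervalDiscrepancy μ g a b| ≤ C * ((∫ ξ in (-Λ)..Λ, B ξ) + m / Λ) := by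
  obtain ⟨A, hA, hmass⟩ := exists_setIntegral_fejerKernel_ge
  have hW := integral_fejerKernel_one_pos
  set W := ∫ s, fejerKernel 1 s
  refine ⟨4 / W + 3 * A, by positivity, fun μ _ g B m Λ hg hm hΛ hB hclose a b ↦ ?_⟩
  have hbound {c d : ℝ} (hcd : c ≤ d) := abs_intervalDiscrepancy_le_of_fejerKernel hΛ hg hm
    (by positivity) (hmass Λ hΛ) hB hclose hcd
  set J := ∫ ξ in (-Λ)..Λ, B ξ
  have hm₀ : 0 ≤ m := (abs_nonneg _).trans (hm 0)
  have hJ : 0 ≤ J := by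
    have hsmooth := abs_integral_fejerKernel_mul_intervalDiscrepancy_le hΛ hg hB hclose le_rfl
      (a := a)
    linarith [abs_nonneg (∫ s, fejerKernel Λ s * intervalDiscrepancy μ g (a + s) (a + s))]
  have hsup : discrepancy μ g ≤
      4 / 3 * (2 * J / W) + discrepancy μ g / 3 + m * (2 * (A / Λ)) := by
    refine ciSup_le fun p ↦ ?_
    rcases le_or_gt p.1 p.2 with hp | hp
    · exact hbound hp
    · rw [intervalDiscrepancy_of_lt hp, abs_zero]
      have := discrepancy_nonneg (μ := μ) (g := g)
      positivity
  calc |intervalDiscrepancy μ g a b|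
      ≤ discrepancy μ g := abs_intervalDiscrepancy_le_discrepancy hg a b
    _ ≤ 4 * (J / W) + 3 * (m * (A / Λ)) := by
      rw [mul_div_assoc] at hsup
      linarith
    _ ≤ 4 / W * J + 3 * A * (m / Λ) + (4 / W * (m / Λ) + 3 * A * J) := by
      have hrest : 0 ≤ 4 / W * (m / Λ) + 3 * A * J := by positivity
      refine le_add_of_le_of_nonneg (le_of_eq ?_) hrest
      ring
    _ = (4 / W + 3 * A) * (J + m / Λ) := by ring

end Smoothing

/-! ### Sums of sines at uniform random phases -/

/-- The uniform distribution on the interval `(a, b]`. -/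
noncomputable def uniformIoc (a b : ℝ) : Measure ℝ :=
  ProbabilityTheory.cond volume (Set.Ioc a b)

section UniformIoc

variable {a b : ℝ} {E : Type*} [NormedAddCommGroup E]

lemma isProbabilityMeasure_uniformIoc (hab : a < b) : IsProbabilityMeasure (uniformIoc a b) :=
  ProbabilityTheory.cond_isProbabilityMeasure_of_finite (by simpa using hab) (by simp)

instance : IsProbabilityMeasure (uniformIoc (-π) π) :=
  isProbabilityMeasure_uniformIoc (by linarith [Real.pi_pos])

lemma integral_uniformIoc [NormedSpace ℝ E] (hab : a ≤ b) (f : ℝ → E) :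
    ∫ x, f x ∂uniformIoc a b = (b - a)⁻¹ • ∫ x in a..b, f x := by
  rw [uniformIoc, ProbabilityTheory.cond, integral_smul_measure,
    intervalIntegral.integral_of_le hab, Real.volume_Ioc, ENNReal.toReal_inv,
    ENNReal.toReal_ofReal (sub_nonneg.2 hab)]

lemma integrable_uniformIoc_of_continuous (hab : a < b) {f : ℝ → E} (hf : Continuous f) :
    Integrable f (uniformIoc a b) :=
  (hf.integrableOn_Icc.mono_set Set.Ioc_subset_Icc_self).integrable.smul_measure
    (by simpa using hab)

end UniformIoc

lemma integral_uniformIoc_neg_pi_pi {E : Type*} [NormedAddCommGroup E] [NormedSpace ℝ E]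
    (f : ℝ → E) : ∫ θ, f θ ∂uniformIoc (-π) π = (2 * π)⁻¹ • ∫ θ in (-π)..π, f θ := by
  rw [integral_uniformIoc (by linarith [Real.pi_pos]), sub_neg_eq_add, two_mul]

lemma norm_integral_exp_mul_mul_I_uniformIoc_le {L : ℝ} (hL : L ≠ 0) {T H : ℝ} (hH : 0 < H) :
    ‖∫ t : ℝ, Complex.exp (L * t * I) ∂uniformIoc T (T + H)‖ ≤ 2 / (|L| * H) := by
  have hLI : (L : ℂ) * I ≠ 0 := by simp [hL]
  rw [integral_uniformIoc (by linarith), add_sub_cancel_left, norm_smul]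
  simp_rw [mul_right_comm (L : ℂ) _ I]
  rw [integral_exp_mul_complex hLI, norm_div, norm_mul, Complex.norm_I, mul_one, norm_inv,
    Complex.norm_real, Real.norm_of_nonneg hH.le, Real.norm_eq_abs, inv_mul_eq_div, div_div]
  gcongr
  refine (norm_sub_le _ _).trans_eq ?_
  rw [mul_right_comm, norm_exp_mul_mul_I, mul_right_comm, norm_exp_mul_mul_I, one_add_one_eq_two]

lemma integral_exp_int_mul_mul_I_uniformIoc {n : ℤ} (hn : n ≠ 0) :
    ∫ θ : ℝ, Complex.exp (n * θ * I) ∂uniformIoc (-π) π = 0 := by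
  have hnI : (n : ℂ) * I ≠ 0 := by simp [hn]
  have hperiod : Complex.exp (n * I * π) = Complex.exp (n * I * ((-π : ℝ) : ℂ)) := by
    rw [Complex.exp_eq_exp_iff_exists_int]
    exact ⟨n, by push_cast; ring⟩
  simp_rw [integral_uniformIoc_neg_pi_pi, mul_right_comm (n : ℂ) _ I]
  rw [integral_exp_mul_complex hnI, hperiod, sub_self, zero_div, smul_zero]

lemma integral_sin_pow_odd_uniformIoc (n : ℕ) :
    ∫ θ, Real.sin θ ^ (2 * n + 1) ∂uniformIoc (-π) π = 0 := by
  have hneg := intervalIntegral.integral_comp_neg (a := -π) (b := π)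
    (fun θ ↦ Real.sin θ ^ (2 * n + 1))
  simp_rw [Real.sin_neg, Odd.neg_pow ⟨n, rfl⟩, intervalIntegral.integral_neg, neg_neg] at hneg
  rw [integral_uniformIoc_neg_pi_pi, self_eq_neg.1 hneg.symm, smul_zero]

lemma prod_range_odd_div_even (n : ℕ) :
    ∏ i ∈ Finset.range n, ((2 * (i : ℝ) + 1) / (2 * i + 2)) =
      (2 * n).factorial / (4 ^ n * (n.factorial : ℝ) ^ 2) := by
  induction n with
  | zero => simp
  | succ n ih =>
    rw [Finset.prod_range_succ, ih, show 2 * (n + 1) = 2 * n + 1 + 1 by ring, Nat.factorial_succ,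
      Nat.factorial_succ, Nat.factorial_succ]
    push_cast
    field_simp
    ring

lemma integral_sin_pow_even_uniformIoc (n : ℕ) :
    ∫ θ, Real.sin θ ^ (2 * n) ∂uniformIoc (-π) π =
      (2 * n).factorial / (4 ^ n * (n.factorial : ℝ) ^ 2) := by
  have hneg := intervalIntegral.integral_comp_neg (a := 0) (b := π) (fun θ ↦ Real.sin θ ^ (2 * n))
  simp_rw [Real.sin_neg, Even.neg_pow (even_two_mul n), neg_zero] at hneg
  have hint (a b : ℝ) : IntervalIntegrable (fun θ ↦ Real.sin θ ^ (2 * n)) volume a b :=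
    Continuous.intervalIntegrable (by fun_prop) _ _
  rw [integral_uniformIoc_neg_pi_pi, ← prod_range_odd_div_even,
    ← intervalIntegral.integral_add_adjacent_intervals (hint (-π) 0) (hint 0 π), ← hneg,
    integral_sin_pow_even, smul_eq_mul]
  field_simp
  ring

lemma hasSum_integral_mul_sin_pow_div_factorial (w : ℂ) :
    HasSum (fun k : ℕ ↦ ∫ θ : ℝ, (w * Real.sin θ) ^ k / (k.factorial : ℂ) ∂uniformIoc (-π) π)
      (∫ θ : ℝ, Complex.exp (w * Real.sin θ) ∂uniformIoc (-π) π) := by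
  have hcont {f : ℝ → ℂ} (hf : Continuous f) : Integrable f (uniformIoc (-π) π) :=
    integrable_uniformIoc_of_continuous (by linarith [Real.pi_pos]) hf
  have hbound (k : ℕ) (θ : ℝ) :
      ‖(w * Real.sin θ) ^ k / (k.factorial : ℂ)‖ ≤ ‖w‖ ^ k / k.factorial := by
    rw [norm_div, norm_pow, norm_mul, Complex.norm_real, Complex.norm_natCast]
    gcongr
    exact mul_le_of_le_one_right (norm_nonneg w) (Real.abs_sin_le_one θ)
  have hsummable : Summable fun k : ℕ ↦
      ∫ θ : ℝ, ‖(w * Real.sin θ) ^ k / (k.factorial : ℂ)‖ ∂uniformIoc (-π) π := by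
    refine Summable.of_nonneg_of_le (fun k ↦ integral_nonneg fun θ ↦ norm_nonneg _) (fun k ↦ ?_)
      (Real.summable_pow_div_factorial ‖w‖)
    simpa using integral_mono (hcont (by fun_prop)).norm (integrable_const _) (hbound k)
  simpa only [Complex.exp_eq_exp_ℂ, NormedSpace.exp_eq_tsum_div] using
    hasSum_integral_of_summable_integral_norm (fun k ↦ hcont (by fun_prop)) hsummable

lemma integral_exp_mul_sin_uniformIoc (w : ℂ) :
    ∫ θ : ℝ, Complex.exp (w * Real.sin θ) ∂uniformIoc (-π) π = J0twoISqrt (w ^ 2 / 4) := by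
  have hterm (k : ℕ) : ∫ θ : ℝ, (w * Real.sin θ) ^ k / (k.factorial : ℂ) ∂uniformIoc (-π) π =
      w ^ k / k.factorial * ((∫ θ, Real.sin θ ^ k ∂uniformIoc (-π) π : ℝ) : ℂ) := by
    rw [← integral_complex_ofReal, ← integral_const_mul]
    congr 1 with θ
    push_cast
    ring
  have hsum := hasSum_integral_mul_sin_pow_div_factorial w
  simp only [hterm] at hsum
  rw [← (mul_right_injective₀ (two_ne_zero' ℕ)).hasSum_iff] at hsum
  · rw [J0twoISqrt, ← hsum.tsum_eq]
    congr 1 with n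
    rw [Function.comp_apply, integral_sin_pow_even_uniformIoc]
    have : ((2 * n).factorial : ℂ) ≠ 0 := mod_cast (2 * n).factorial_ne_zero
    push_cast
    rw [pow_mul, div_pow]
    field_simp
  · intro k hk
    obtain ⟨n, rfl | rfl⟩ := k.even_or_odd'
    · exact absurd ⟨n, rfl⟩ hk
    · simp [integral_sin_pow_odd_uniformIoc]

lemma norm_J0twoISqrt_le_exp (w : ℂ) : ‖J0twoISqrt w‖ ≤ Real.exp ‖w‖ := by
  have hsummable := summable_norm_pow_div_factorial_sq w
  rw [Real.exp_eq_exp_ℝ, NormedSpace.exp_eq_tsum_div]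
  exact (norm_tsum_le_tsum_norm hsummable).trans
    (hsummable.tsum_le_tsum (norm_pow_div_factorial_sq_le w) (Real.summable_pow_div_factorial _))

section SineSum

variable {ι : Type*} [Fintype ι] (c : ι → ℝ)

/-- The trigonometric sum `∑ cᵢ sin θᵢ` as a function of its phases. -/
noncomputable def sineSum (θ : ι → ℝ) : ℝ := ∑ i, c i * Real.sin (θ i)

variable (ι) in
/-- The joint distribution of independent uniform phases `θᵢ`, one for each `i : ι`. -/
noncomputable def phaseMeasure : Measure (ι → ℝ) := Measure.pi fun _ ↦ uniformIoc (-π) π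

instance : IsProbabilityMeasure (phaseMeasure ι) := by
  unfold phaseMeasure
  infer_instance

@[fun_prop]
lemma continuous_sineSum : Continuous (sineSum c) := by
  unfold sineSum
  fun_prop

lemma abs_sineSum_le (θ : ι → ℝ) : |sineSum c θ| ≤ ∑ i, |c i| :=
  (Finset.abs_sum_le_sum_abs _ _).trans <| Finset.sum_le_sum fun i _ ↦ by
    simpa [abs_mul] using mul_le_of_le_one_right (abs_nonneg (c i)) (Real.abs_sin_le_one (θ i))

lemma integrable_comp_sineSum {E : Type*} [NormedAddCommGroup E] {F : ℝ → E} (hF : Continuous F) :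
    Integrable (fun θ ↦ F (sineSum c θ)) (phaseMeasure ι) := by
  obtain ⟨C, hC⟩ := isCompact_Icc.exists_bound_of_continuousOn
    (s := Set.Icc (-∑ i, |c i|) (∑ i, |c i|)) hF.continuousOn
  exact .of_bound (hF.comp (continuous_sineSum c)).aestronglyMeasurable C <|
    .of_forall fun θ ↦ hC _ (abs_le.1 (abs_sineSum_le c θ))

lemma integral_exp_mul_sineSum (w : ℂ) :
    ∫ θ, Complex.exp (w * sineSum c θ) ∂phaseMeasure ι = ∏ i, J0twoISqrt ((w * c i) ^ 2 / 4) := by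
  have hprod (θ : ι → ℝ) :
      Complex.exp (w * sineSum c θ) = ∏ i, Complex.exp (w * c i * Real.sin (θ i)) := by
    simp [sineSum, ← Complex.exp_sum, Finset.mul_sum, mul_assoc]
  simp_rw [hprod, ← integral_exp_mul_sin_uniformIoc]
  exact integral_fintype_prod_eq_prod fun i (θ : ℝ) ↦ Complex.exp (w * c i * Real.sin θ)

lemma integral_rexp_mul_sineSum_le (s : ℝ) :
    ∫ θ, Real.exp (s * sineSum c θ) ∂phaseMeasure ι ≤ Real.exp (s ^ 2 / 4 * ∑ i, c i ^ 2) := by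
  have hcast : ((∫ θ, Real.exp (s * sineSum c θ) ∂phaseMeasure ι : ℝ) : ℂ) =
      ∏ i, J0twoISqrt ((s * c i) ^ 2 / 4) := by
    rw [← integral_exp_mul_sineSum, ← integral_complex_ofReal]
    push_cast
    rfl
  rw [← Real.norm_of_nonneg (integral_nonneg fun _ ↦ (Real.exp_pos _).le), ← Complex.norm_real,
    hcast, norm_prod, Finset.mul_sum, Real.exp_sum]
  gcongr with i
  refine (norm_J0twoISqrt_le_exp _).trans_eq ?_
  congr 1
  simp [mul_pow]
  ring

lemma integral_sineSum_pow_div_factorial_le {s : ℝ} (hs : 0 < s) {K : ℕ} (hK : Even K) :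
    (∫ θ, sineSum c θ ^ K ∂phaseMeasure ι) / K.factorial ≤
      2 * Real.exp (s ^ 2 / 4 * ∑ i, c i ^ 2) / s ^ K := by
  have hpow (x : ℝ) : x ^ K / K.factorial ≤ Real.exp x + Real.exp (-x) := by
    rw [← hK.pow_abs]
    exact (Real.pow_div_factorial_le_exp _ (abs_nonneg x) K).trans (exp_abs_le x)
  have hexp (r : ℝ) : Integrable (fun θ ↦ Real.exp (r * sineSum c θ)) (phaseMeasure ι) :=
    integrable_comp_sineSum c (F := fun x ↦ Real.exp (r * x)) (by fun_prop)
  rw [le_div_iff₀ (by positivity)]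
  calc (∫ θ, sineSum c θ ^ K ∂phaseMeasure ι) / K.factorial * s ^ K
      = ∫ θ, (s * sineSum c θ) ^ K / K.factorial ∂phaseMeasure ι := by
        simp_rw [mul_pow, integral_div, integral_const_mul]
        ring
    _ ≤ ∫ θ, (Real.exp (s * sineSum c θ) + Real.exp (-s * sineSum c θ)) ∂phaseMeasure ι := by
        refine integral_mono ?_ ((hexp s).add (hexp (-s))) fun θ ↦ ?_
        · exact integrable_comp_sineSum c (F := fun x ↦ (s * x) ^ K / K.factorial) (by fun_prop)
        · simpa only [neg_mul] using hpow (s * sineSum c θ)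
    _ ≤ 2 * Real.exp (s ^ 2 / 4 * ∑ i, c i ^ 2) := by
        rw [integral_add (hexp s) (hexp (-s)), two_mul]
        gcongr
        · exact integral_rexp_mul_sineSum_le c s
        · simpa using integral_rexp_mul_sineSum_le c (-s)

end SineSum

/-! ### Moments of a sine sum along a line of phases -/

section Words

variable {ι : Type*} {k : ℕ}

/-- The frequency `∑ₗ ±e_{iₗ} : ι → ℤ` of the term indexed by the signed word `j` in the expansion
of `(∑ cᵢ sin θᵢ) ^ k` into exponentials. -/
def wordFrequency [DecidableEq ι] (j : Fin k → ι × ℤˣ) : ι → ℤ :=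
  ∑ l, Pi.single (j l).1 ((j l).2 : ℤ)

/-- The coefficient of the term indexed by the signed word `j` in the expansion of
`(∑ cᵢ sin θᵢ) ^ k` into exponentials, coming from `sin θ = ∑_{u = ±1} u / (2i) * exp (i u θ)`. -/
noncomputable def wordCoeff (c : ι → ℝ) (j : Fin k → ι × ℤˣ) : ℂ :=
  ∏ l, (c (j l).1 * ((j l).2 : ℤ) / (2 * I) : ℂ)

variable [Fintype ι]

lemma sum_wordFrequency_mul [DecidableEq ι] (j : Fin k → ι × ℤˣ) (θ : ι → ℝ) :
    ∑ i, wordFrequency j i * θ i = ∑ l, ((j l).2 : ℤ) * θ (j l).1 := by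
  simp only [wordFrequency, Finset.sum_apply, Int.cast_sum, Finset.sum_mul]
  rw [Finset.sum_comm]
  simp [Pi.single_apply]

lemma sum_natAbs_wordFrequency_le [DecidableEq ι] (j : Fin k → ι × ℤˣ) :
    ∑ i, (wordFrequency j i).natAbs ≤ k := by
  calc ∑ i, (wordFrequency j i).natAbs
      ≤ ∑ i, ∑ l, (Pi.single (M := fun _ ↦ ℤ) (j l).1 (j l).2 i).natAbs := by
        gcongr with i
        rw [wordFrequency, Finset.sum_apply]
        exact Int.natAbs_sum_le _ _
    _ = k := by
        rw [Finset.sum_comm]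
        simp [Pi.single_apply, apply_ite Int.natAbs]

lemma sum_norm_wordCoeff (c : ι → ℝ) :
    ∑ j : Fin k → ι × ℤˣ, ‖wordCoeff c j‖ = (∑ i, |c i|) ^ k := by
  have hletter (i : ι) : ∑ u : ℤˣ, ‖(c i * (u : ℤ) / (2 * I) : ℂ)‖ = |c i| := by
    simp [UnitsInt.univ]
  simp_rw [wordCoeff, norm_prod, ← hletter, ← Fintype.sum_prod_type', Fintype.sum_pow]

lemma sineSum_pow_eq_sum_exp [DecidableEq ι] (c : ι → ℝ) (θ : ι → ℝ) :
    ((sineSum c θ ^ k : ℝ) : ℂ) = ∑ j : Fin k → ι × ℤˣ,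
      wordCoeff c j * Complex.exp ((∑ i, wordFrequency j i * θ i : ℝ) * I) := by
  have hsin (i : ι) : ((c i * Real.sin (θ i) : ℝ) : ℂ) =
      ∑ u : ℤˣ, (c i * (u : ℤ) / (2 * I) : ℂ) * Complex.exp (((u : ℤ) * θ i : ℝ) * I) := by
    simp [UnitsInt.univ, Complex.sin]
    field_simp
    simp
    ring
  rw [sineSum, Complex.ofReal_pow, Complex.ofReal_sum]
  simp_rw [hsin, ← Fintype.sum_prod_type', Fintype.sum_pow, Finset.prod_mul_distrib,
    ← Complex.exp_sum, ← Finset.sum_mul, sum_wordFrequency_mul, wordCoeff, Complex.ofReal_sum]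

lemma integral_exp_mul_I_phaseMeasure (n : ι → ℤ) :
    ∫ θ, Complex.exp ((∑ i, n i * θ i : ℝ) * I) ∂phaseMeasure ι = if n = 0 then 1 else 0 := by
  have hprod (θ : ι → ℝ) :
      Complex.exp ((∑ i, n i * θ i : ℝ) * I) = ∏ i, Complex.exp (n i * θ i * I) := by
    simp [← Complex.exp_sum, Finset.sum_mul]
  split_ifs with hn
  · simp [hn]
  · obtain ⟨i, hi⟩ := Function.ne_iff.1 hn
    simp_rw [hprod]
    exact (integral_fintype_prod_eq_prod fun i (θ : ℝ) ↦ Complex.exp (n i * θ * I)).trans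
      (Finset.prod_eq_zero (Finset.mem_univ i) (integral_exp_int_mul_mul_I_uniformIoc hi))

lemma norm_integral_exp_uniformIoc_sub_phaseMeasure_le {ω : ι → ℝ} {δ T H : ℝ}
    (hδ : 0 < δ) (hH : 0 < H) {n : ι → ℤ} (hn : n ≠ 0 → δ ≤ |∑ i, n i * ω i|) :
    ‖∫ t, Complex.exp ((∑ i, n i * (t * ω i) : ℝ) * I) ∂uniformIoc T (T + H)
      - ∫ θ, Complex.exp ((∑ i, n i * θ i : ℝ) * I) ∂phaseMeasure ι‖ ≤ 2 / (δ * H) := by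
  classical
  have := isProbabilityMeasure_uniformIoc (a := T) (b := T + H) (by linarith)
  rw [integral_exp_mul_I_phaseMeasure]
  split_ifs with hn0
  · simp only [hn0, Pi.zero_apply, Int.cast_zero, zero_mul, Finset.sum_const_zero,
      Complex.ofReal_zero, Complex.exp_zero, integral_const, probReal_univ, one_smul, sub_self,
      norm_zero]
    positivity
  · have hfreq (t : ℝ) : ((∑ i, n i * (t * ω i) : ℝ) : ℂ) = (∑ i, n i * ω i : ℝ) * t := by
      rw [← Complex.ofReal_mul, Finset.sum_mul]
      simp_rw [mul_left_comm, mul_comm t]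
    have hle := hn hn0
    simp_rw [hfreq, sub_zero]
    refine (norm_integral_exp_mul_mul_I_uniformIoc_le (abs_pos.1 (hδ.trans_le hle)) hH).trans ?_
    gcongr

lemma integrable_exp_mul_I {Ω : Type*} [MeasurableSpace Ω] {μ : Measure Ω} [IsFiniteMeasure μ]
    {f : Ω → ℝ} (hf : Measurable f) : Integrable (fun x ↦ Complex.exp (f x * I)) μ :=
  .of_bound (by fun_prop) 1 <| .of_forall fun x ↦ (Complex.norm_exp_ofReal_mul_I (f x)).le

theorem abs_integral_sineSum_pow_sub_le (c : ι → ℝ) {ω : ι → ℝ} {δ T H : ℝ} (hδ : 0 < δ)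
    (hH : 0 < H) (hω : ∀ n : ι → ℤ, n ≠ 0 → ∑ i, (n i).natAbs ≤ k → δ ≤ |∑ i, n i * ω i|) :
    |∫ t, sineSum c (fun i ↦ t * ω i) ^ k ∂uniformIoc T (T + H)
      - ∫ θ, sineSum c θ ^ k ∂phaseMeasure ι| ≤ (∑ i, |c i|) ^ k * (2 / (δ * H)) := by
  classical
  have := isProbabilityMeasure_uniformIoc (a := T) (b := T + H) (by linarith)
  rw [← Real.norm_eq_abs, ← Complex.norm_real, Complex.ofReal_sub, ← integral_complex_ofReal,
    ← integral_complex_ofReal]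
  simp_rw [sineSum_pow_eq_sum_exp]
  rw [integral_finsetSum, integral_finsetSum, ← Finset.sum_sub_distrib, ← sum_norm_wordCoeff,
    Finset.sum_mul]
  · refine norm_sum_le_of_le _ fun j _ ↦ ?_
    rw [integral_const_mul, integral_const_mul, ← mul_sub, norm_mul]
    gcongr
    exact norm_integral_exp_uniformIoc_sub_phaseMeasure_le hδ hH
      fun hn ↦ hω _ hn (sum_natAbs_wordFrequency_le j)
  all_goals exact fun j _ ↦ (integrable_exp_mul_I (by fun_prop)).const_mul _

end Words

/-! ### Comparing characteristic functions through moments -/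

lemma norm_iteratedFDeriv_charFun_le {μ : Measure ℝ} [IsFiniteMeasure μ] {n : ℕ}
    (hμ : MemLp id n μ) (s t : ℝ) :
    ‖iteratedFDeriv ℝ n (charFun μ) s (fun _ ↦ t)‖ ≤ |t| ^ n * ∫ x, |x| ^ n ∂μ := by
  rw [iteratedFDeriv_charFun hμ, norm_mul, norm_pow, Complex.norm_I, one_pow, one_mul,
    ← integral_const_mul]
  refine (norm_integral_le_integral_norm _).trans_eq (integral_congr_ae (.of_forall fun x ↦ ?_))
  simp [Complex.norm_exp, mul_pow]

lemma norm_charFun_sub_sum_le {μ : Measure ℝ} [IsFiniteMeasure μ] {n : ℕ} (hn : n ≠ 0)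
    (hμ : MemLp id n μ) (t : ℝ) :
    ‖charFun μ t - ∑ k ∈ Finset.range n, (t * I) ^ k / k.factorial * (∫ x, x ^ k ∂μ : ℝ)‖ ≤
      |t| ^ n / n.factorial * ∫ x, |x| ^ n ∂μ := by
  obtain ⟨n, rfl⟩ := Nat.exists_eq_succ_of_ne_zero hn
  have htaylor := map_add_eq_sum_add_integral_iteratedFDeriv (n := n) (f := charFun μ) (x := 0)
    (y := t) fun _ _ ↦ (contDiff_charFun hμ).contDiffAt
  have hcoeff : ∀ k ∈ Finset.range (n + 1),
      (k.factorial : ℝ)⁻¹ • iteratedFDeriv ℝ k (charFun μ) 0 (fun _ ↦ t) =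
        (t * I) ^ k / k.factorial * (∫ x, x ^ k ∂μ : ℝ) := fun k hk ↦ by
    rw [iteratedFDeriv_charFun
      (hμ.mono_exponent (mod_cast (Finset.mem_range.1 hk).le)), ← integral_complex_ofReal]
    simp [mul_pow, integral_const_mul]
    ring
  rw [zero_add, Finset.sum_congr rfl hcoeff] at htaylor
  rw [htaylor, add_sub_cancel_left, norm_smul, Real.norm_of_nonneg (by positivity)]
  set C := |t| ^ (n + 1) * ∫ x, |x| ^ (n + 1) ∂μ
  have hremainder : ‖∫ u in (0 : ℝ)..1, (1 - u) ^ n •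
      iteratedFDeriv ℝ (n + 1) (charFun μ) (0 + u • t) (fun _ ↦ t)‖ ≤ C / (n + 1) := by
    calc _ ≤ ∫ u in (0 : ℝ)..1, (1 - u) ^ n * C := by
          refine intervalIntegral.norm_integral_le_of_norm_le zero_le_one
            (.of_forall fun u hu ↦ ?_) (Continuous.intervalIntegrable (by fun_prop) _ _)
          rw [norm_smul, Real.norm_of_nonneg (pow_nonneg (by linarith [hu.2]) n)]
          gcongr
          · exact pow_nonneg (by linarith [hu.2]) n
          · exact norm_iteratedFDeriv_charFun_le hμ _ t
      _ = C / (n + 1) := by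
          rw [intervalIntegral.integral_mul_const,
            intervalIntegral.integral_comp_sub_left (fun u ↦ u ^ n) 1]
          simp
          ring
  calc (n.factorial : ℝ)⁻¹ * _ ≤ (n.factorial : ℝ)⁻¹ * (C / (n + 1)) := by gcongr
    _ = |t| ^ (n + 1) / (n + 1).factorial * ∫ x, |x| ^ (n + 1) ∂μ := by
        rw [Nat.factorial_succ]
        push_cast
        simp only [C]
        field_simp

lemma sum_range_pow_succ_div_factorial_succ_le {x : ℝ} (hx : 0 ≤ x) (n : ℕ) :
    ∑ k ∈ Finset.range n, x ^ (k + 1) / (k + 1).factorial ≤ x * Real.exp x := by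
  calc ∑ k ∈ Finset.range n, x ^ (k + 1) / (k + 1).factorial
      ≤ ∑ k ∈ Finset.range n, x * (x ^ k / k.factorial) := by
        gcongr with k
        rw [← mul_div_assoc, ← pow_succ']
        gcongr
        exact k.le_succ
    _ ≤ x * Real.exp x := by
        rw [← Finset.mul_sum]
        gcongr
        exact Real.sum_le_exp_of_nonneg hx n

lemma norm_charFun_sub_charFun_le {μ ν : Measure ℝ} [IsProbabilityMeasure μ]
    [IsProbabilityMeasure ν] {K : ℕ} (hK : K ≠ 0) (hKeven : Even K) (hμ : MemLp id K μ)
    (hν : MemLp id K ν) {ε : ℝ} (hε : ∀ k ≤ K, |∫ x, x ^ k ∂μ - ∫ x, x ^ k ∂ν| ≤ ε) (t : ℝ) :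
    ‖charFun μ t - charFun ν t‖ ≤
      |t| * Real.exp |t| * ε + 2 * (|t| ^ K * ((∫ x, x ^ K ∂ν) / K.factorial)) := by
  set m := fun k : ℕ ↦ ∫ x, x ^ k ∂μ with hm
  set M := fun k : ℕ ↦ ∫ x, x ^ k ∂ν with hM
  have habs (κ : Measure ℝ) : ∫ x, |x| ^ K ∂κ = ∫ x, x ^ K ∂κ := by simp_rw [hKeven.pow_abs]
  have hμt := habs μ ▸ norm_charFun_sub_sum_le hK hμ t
  have hνt := habs ν ▸ norm_charFun_sub_sum_le hK hν t
  set P := ∑ k ∈ Finset.range K, (t * I) ^ k / (k.factorial : ℂ) * m k with hP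
  set Q := ∑ k ∈ Finset.range K, (t * I) ^ k / (k.factorial : ℂ) * M k with hQ
  have hPQ : ‖P - Q‖ ≤ ∑ k ∈ Finset.range K, |t| ^ k / k.factorial * |m k - M k| := by
    simp_rw [hP, hQ, ← Finset.sum_sub_distrib, ← mul_sub, ← Complex.ofReal_sub]
    refine norm_sum_le_of_le _ fun k _ ↦ ?_
    rw [norm_mul, norm_div, norm_pow, norm_mul, Complex.norm_I, mul_one, Complex.norm_real,
      Complex.norm_real, Complex.norm_natCast, Real.norm_eq_abs, Real.norm_eq_abs]
  have hmoments : ∑ k ∈ Finset.range (K + 1), |t| ^ k / k.factorial * |m k - M k| ≤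
      |t| * Real.exp |t| * ε := by
    have hε₀ : 0 ≤ ε := (abs_nonneg _).trans (hε 0 K.zero_le)
    calc _ = ∑ k ∈ Finset.range K, |t| ^ (k + 1) / (k + 1).factorial * |m (k + 1) - M (k + 1)| := by
          rw [Finset.sum_range_succ']
          simp [hm, hM]
      _ ≤ (∑ k ∈ Finset.range K, |t| ^ (k + 1) / (k + 1).factorial) * ε := by
          rw [Finset.sum_mul]
          gcongr with k hk
          exact hε _ (Finset.mem_range.1 hk)
      _ ≤ |t| * Real.exp |t| * ε := by
          gcongr
          exact sum_range_pow_succ_div_factorial_succ_le (abs_nonneg t) K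
  rw [Finset.sum_range_succ] at hmoments
  have hm_le : |t| ^ K / K.factorial * m K ≤
      |t| ^ K / K.factorial * |m K - M K| + |t| ^ K / K.factorial * M K := by
    rw [← mul_add]
    gcongr
    linarith [le_abs_self (m K - M K)]
  calc ‖charFun μ t - charFun ν t‖
      = ‖(charFun μ t - P) + (P - Q) - (charFun ν t - Q)‖ := by ring_nf
    _ ≤ ‖charFun μ t - P‖ + ‖P - Q‖ + ‖charFun ν t - Q‖ :=
        (norm_sub_le _ _).trans (add_le_add_left (norm_add_le _ _) _)
    _ ≤ |t| * Real.exp |t| * ε + 2 * (|t| ^ K / K.factorial * M K) := by linarith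
    _ = _ := by ring

lemma memLp_id_map_of_forall_abs_le {Ω : Type*} [MeasurableSpace Ω] {μ : Measure Ω}
    [IsFiniteMeasure μ] {f : Ω → ℝ} (hf : Measurable f) {C : ℝ} (hC : ∀ x, |f x| ≤ C)
    (p : ENNReal) : MemLp id p (μ.map f) := by
  rw [memLp_map_measure_iff (by fun_prop) hf.aemeasurable]
  exact .of_bound (by fun_prop) C (.of_forall hC)

section SineSum

variable {ι : Type*} [Fintype ι] {c : ι → ℝ}

lemma charFun_map_sineSum (ξ : ℝ) :
    charFun ((phaseMeasure ι).map (sineSum c)) ξ = ∏ i, J0twoISqrt (-ξ ^ 2 / 4 * c i ^ 2) := by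
  rw [charFun_apply_real, integral_map (by fun_prop) (by fun_prop)]
  simp_rw [mul_right_comm (ξ : ℂ) _ I, integral_exp_mul_sineSum, mul_pow, I_sq]
  congr 1 with i
  ring_nf

theorem norm_charFun_map_sineSum_line_sub_le {ω : ι → ℝ} {A δ T H : ℝ} (hδ : 0 < δ) (hH : 0 < H)
    (hA : 1 ≤ A) (hc : ∑ i, |c i| ≤ A) {K : ℕ} (hK : K ≠ 0) (hKeven : Even K)
    (hω : ∀ n : ι → ℤ, n ≠ 0 → ∑ i, (n i).natAbs ≤ K → δ ≤ |∑ i, n i * ω i|) {s : ℝ} (hs : 0 < s)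
    (ξ : ℝ) :
    ‖charFun ((uniformIoc T (T + H)).map fun t ↦ sineSum c fun i ↦ t * ω i) ξ
      - ∏ i, J0twoISqrt (-ξ ^ 2 / 4 * c i ^ 2)‖ ≤
      |ξ| * Real.exp |ξ| * (A ^ K * (2 / (δ * H)))
        + 4 * (|ξ| / s) ^ K * Real.exp (s ^ 2 / 4 * ∑ i, c i ^ 2) := by
  have := isProbabilityMeasure_uniformIoc (a := T) (b := T + H) (by linarith)
  have hline : Measurable fun t ↦ sineSum c fun i ↦ t * ω i := by fun_prop
  have := Measure.isProbabilityMeasure_map (μ := uniformIoc T (T + H)) hline.aemeasurable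
  have := Measure.isProbabilityMeasure_map (μ := phaseMeasure ι) (f := sineSum c) (by fun_prop)
  rw [← charFun_map_sineSum]
  refine (norm_charFun_sub_charFun_le hK hKeven
    (memLp_id_map_of_forall_abs_le hline (fun _ ↦ abs_sineSum_le c _) _)
    (memLp_id_map_of_forall_abs_le (by fun_prop) (abs_sineSum_le c) _)
    (ε := A ^ K * (2 / (δ * H))) (fun k hk ↦ ?_) ξ).trans ?_
  · rw [integral_map hline.aemeasurable (by fun_prop), integral_map (by fun_prop) (by fun_prop)]
    refine (abs_integral_sineSum_pow_sub_le c hδ hH fun n hn hnk ↦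
      hω n hn (hnk.trans hk)).trans ?_
    gcongr
    exact (pow_le_pow_left₀ (by positivity) hc k).trans (pow_le_pow_right₀ hA hk)
  · rw [integral_map (by fun_prop) (by fun_prop)]
    have hmoment := integral_sineSum_pow_div_factorial_le c hs hKeven
    calc _ ≤ |ξ| * Real.exp |ξ| * (A ^ K * (2 / (δ * H))) + 2 * (|ξ| ^ K *
          (2 * Real.exp (s ^ 2 / 4 * ∑ i, c i ^ 2) / s ^ K)) := by gcongr
      _ = _ := by
        rw [div_pow]
        ring

end SineSum

/-! ### The law of `V_y` on an interval -/

section PrimeFrequencies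

variable {ι : Type*} [Fintype ι] {p : ι → ℕ}

lemma one_div_le_abs_log_sub_log {A B : ℕ} (hA : A ≠ 0) (hB : B ≠ 0) (hAB : A ≠ B) {M : ℝ}
    (hAM : A ≤ M) (hBM : B ≤ M) : 1 / M ≤ |Real.log A - Real.log B| := by
  wlog hBA : B < A generalizing A B
  · rw [abs_sub_comm]
    exact this hB hA hAB.symm hBM hAM (by omega)
  have hA₀ : (0 : ℝ) < A := mod_cast hA.bot_lt
  have hB₀ : (0 : ℝ) < B := mod_cast hB.bot_lt
  have hsucc : (B : ℝ) + 1 ≤ A := mod_cast hBA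
  calc 1 / M ≤ 1 / A := by gcongr
    _ ≤ 1 - (A / B : ℝ)⁻¹ := by
        rw [inv_div, le_sub_iff_add_le, ← add_div, div_le_one hA₀]
        linarith
    _ ≤ Real.log (A / B) := Real.one_sub_inv_le_log_of_pos (by positivity)
    _ ≤ |Real.log A - Real.log B| := by
        rw [Real.log_div hA₀.ne' hB₀.ne']
        exact le_abs_self _

lemma factorization_prod_prime_pow (hp : ∀ i, (p i).Prime) (hinj : Function.Injective p)
    (e : ι → ℕ) (i : ι) : (∏ j, p j ^ e j).factorization (p i) = e i := by
  classical
  rw [Nat.factorization_prod fun j _ ↦ pow_ne_zero _ (hp j).ne_zero, Finsupp.finsetSum_apply]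
  simp [(hp _).factorization, Finsupp.single_apply, hinj.eq_iff]

lemma prod_pow_le_pow {y : ℝ} (hy : 1 ≤ y) (hpy : ∀ i, p i ≤ y) {e : ι → ℕ} {k : ℕ}
    (he : ∑ i, e i ≤ k) : ((∏ i, p i ^ e i : ℕ) : ℝ) ≤ y ^ k := by
  push_cast
  calc ∏ i, (p i : ℝ) ^ e i ≤ ∏ i, y ^ e i := by
        gcongr with i
        exact hpy i
    _ = y ^ ∑ i, e i := Finset.prod_pow_eq_pow_sum _ _ _
    _ ≤ y ^ k := pow_le_pow_right₀ hy he

lemma one_div_pow_le_abs_sum_mul_log (hp : ∀ i, (p i).Prime) (hinj : Function.Injective p) {y : ℝ}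
    (hy : 1 ≤ y) (hpy : ∀ i, p i ≤ y) {n : ι → ℤ} (hn : n ≠ 0) {k : ℕ}
    (hk : ∑ i, (n i).natAbs ≤ k) : 1 / y ^ k ≤ |∑ i, n i * Real.log (p i)| := by
  have hlog (e : ι → ℕ) : Real.log (∏ i, p i ^ e i : ℕ) = ∑ i, e i * Real.log (p i) := by
    push_cast
    rw [Real.log_prod fun i _ ↦ pow_ne_zero _ (mod_cast (hp i).ne_zero)]
    simp_rw [Real.log_pow]
  have hpos (e : ι → ℕ) : ∏ i, p i ^ e i ≠ 0 :=
    Finset.prod_ne_zero_iff.2 fun i _ ↦ pow_ne_zero _ (hp i).ne_zero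
  have hsub : ∑ i, n i * Real.log (p i) = Real.log (∏ i, p i ^ (n i).toNat : ℕ) -
      Real.log (∏ i, p i ^ (-n i).toNat : ℕ) := by
    simp_rw [hlog, ← Finset.sum_sub_distrib, ← sub_mul]
    congr! with i
    exact_mod_cast (Int.toNat_sub_toNat_neg (n i)).symm
  rw [hsub]
  refine one_div_le_abs_log_sub_log (hpos _) (hpos _) (fun heq ↦ hn (funext fun i ↦ ?_))
    (prod_pow_le_pow hy hpy (le_trans ?_ hk)) (prod_pow_le_pow hy hpy (le_trans ?_ hk))
  · have := congrArg (fun N ↦ N.factorization (p i)) heq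
    simp only [factorization_prod_prime_pow hp hinj] at this
    simp only [Pi.zero_apply]
    omega
  · gcongr
    omega
  · gcongr
    omega

end PrimeFrequencies

lemma Gfun_eq_exp_mul_Phifun (y : ℝ) (z : ℂ) :
    Gfun y z = Complex.exp (z * sigmay y) * Phifun y z := by
  simp_rw [Gfun, Phifun, phifun, Finset.prod_mul_distrib, ← mul_assoc, ← Complex.exp_sum,
    ← Complex.exp_add]
  simp [sigmay, Finset.mul_sum, div_eq_mul_inv]

lemma Vy_eq_sineSum (y t : ℝ) :
    Vy y t = sineSum (fun p : primesLe y ↦ 1 / √(p : ℕ)) fun p ↦ t * Real.log (p : ℕ) := by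
  simp_rw [Vy, sineSum, one_div_mul_eq_div]
  exact (Finset.sum_coe_sort (primesLe y) fun p : ℕ ↦ Real.sin (t * Real.log p) / √p).symm

lemma le_of_mem_primesLe {y : ℝ} (hy : 0 ≤ y) {p : ℕ} (hp : p ∈ primesLe y) : (p : ℝ) ≤ y :=
  (Nat.le_floor_iff hy).1 (Nat.mem_primesLE.1 hp).1

lemma sum_abs_one_div_sqrt_le {y : ℝ} (hy : 0 ≤ y) :
    ∑ p : primesLe y, |1 / √(p : ℕ)| ≤ y := by
  have hle (p : primesLe y) : |1 / √(p : ℕ)| ≤ 1 := by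
    have : (1 : ℝ) ≤ (p : ℕ) := mod_cast (prime_of_mem_primesLe p.2).one_lt.le
    rw [abs_of_nonneg (by positivity)]
    exact div_le_one_of_le₀ (Real.one_le_sqrt.2 this) (by positivity)
  have hcard : (primesLe y).card ≤ ⌊y⌋₊ := by
    have hsub : primesLe y ⊆ Finset.Icc 1 ⌊y⌋₊ := fun p hp ↦ Finset.mem_Icc.2
      ⟨(prime_of_mem_primesLe hp).one_lt.le, (Nat.mem_primesLE.1 hp).1⟩
    simpa using Finset.card_le_card hsub
  calc ∑ p : primesLe y, |1 / √(p : ℕ)| ≤ ∑ _p : primesLe y, (1 : ℝ) := by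
        gcongr with p
        exact hle p
    _ = (primesLe y).card := by simp
    _ ≤ ⌊y⌋₊ := mod_cast hcard
    _ ≤ y := Nat.floor_le hy

/-- The distribution of `V_y(t)` for `t` uniform in `(T, T + H]`. -/
noncomputable def lawVy (y T H : ℝ) : Measure ℝ := (uniformIoc T (T + H)).map (Vy y)

theorem norm_charFun_lawVy_sub_Gfun_le {y T H : ℝ} (hy : 1 ≤ y) (hH : 0 < H) {K : ℕ} (hK : K ≠ 0)
    (hKeven : Even K) {s : ℝ} (hs : 0 < s) (ξ : ℝ) :
    ‖charFun (lawVy y T H) ξ - Gfun y (-ξ ^ 2 / 4)‖ ≤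
      |ξ| * Real.exp |ξ| * (2 * y ^ (2 * K) / H)
        + 4 * (|ξ| / s) ^ K * Real.exp (s ^ 2 / 4 * sigmay y) := by
  have hy₀ : 0 ≤ y := by linarith
  have hsq (p : primesLe y) : (1 / √(p : ℕ)) ^ 2 = 1 / ((p : ℕ) : ℝ) := by
    rw [div_pow, one_pow, Real.sq_sqrt (Nat.cast_nonneg _)]
  have hG : Gfun y (-ξ ^ 2 / 4) =
      ∏ p : primesLe y, J0twoISqrt (-ξ ^ 2 / 4 * (1 / √(p : ℕ) : ℝ) ^ 2) := by
    simp_rw [← Complex.ofReal_pow, hsq, Gfun, ← Finset.prod_coe_sort (primesLe y)]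
    simp [div_eq_mul_inv]
  have hsigma : ∑ p : primesLe y, (1 / √(p : ℕ)) ^ 2 = sigmay y := by
    simp_rw [hsq, sigmay]
    exact Finset.sum_coe_sort (primesLe y) fun p : ℕ ↦ 1 / (p : ℝ)
  have hlaw := norm_charFun_map_sineSum_line_sub_le (T := T) (δ := 1 / y ^ K) (by positivity) hH hy
    (sum_abs_one_div_sqrt_le hy₀) hK hKeven (fun n hn hnK ↦ one_div_pow_le_abs_sum_mul_log
      (fun p : primesLe y ↦ prime_of_mem_primesLe p.2) Subtype.val_injective hy
      (fun p ↦ le_of_mem_primesLe hy₀ p.2) hn hnK) hs ξ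
  simp_rw [← Vy_eq_sineSum] at hlaw
  rw [hsigma, ← hG] at hlaw
  refine hlaw.trans_eq ?_
  congr 2
  field_simp
  ring

/-! ### Truncating the power series of `Φ` -/

lemma logLogAddOne_le_of_le_exp {n : ℕ} {w : ℝ} (hw : 1 ≤ w) (hn : n ≤ Real.exp w) :
    logLogAddOne n ≤ Real.log w + 2 := by
  rcases n.eq_zero_or_pos with rfl | hpos
  · norm_num [logLogAddOne]
    linarith [Real.log_nonneg hw]
  have hn1 : (1 : ℝ) ≤ n := mod_cast hpos
  have hsucc : (n : ℝ) + 1 ≤ Real.exp (2 * w) := by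
    rw [two_mul, Real.exp_add]
    nlinarith [Real.add_one_le_exp w]
  have hlog : Real.log (n + 1) ≤ 2 * w := (Real.log_le_iff_le_exp (by positivity)).2 hsucc
  have hloglog := Real.log_le_log (Real.log_pos (by linarith)) hlog
  rw [Real.log_mul two_ne_zero (by positivity)] at hloglog
  unfold logLogAddOne
  linarith [Real.log_two_lt_d9]

lemma logLogAddOne_succ_le {n : ℕ} (hn : 1 ≤ n) :
    logLogAddOne (n + 1) ≤ logLogAddOne n + 2 / (n + 1) := by
  have hn1 : (1 : ℝ) ≤ n := mod_cast hn
  have hlog : 1 / 2 ≤ Real.log (n + 1) := by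
    linarith [Real.log_two_gt_d9, Real.log_le_log two_pos (by linarith : (2 : ℝ) ≤ n + 1)]
  have hstep : Real.log (n + 1 + 1) ≤ Real.log (n + 1) * (1 + 2 / (n + 1)) := calc
    Real.log (n + 1 + 1) = Real.log (n + 1) + Real.log (1 + 1 / (n + 1)) := by
      rw [← Real.log_mul (by positivity) (by positivity)]
      congr 1
      field_simp
    _ ≤ Real.log (n + 1) + 1 / 2 * (2 / (n + 1)) := by
      have := Real.log_le_sub_one_of_pos (by positivity : (0 : ℝ) < 1 + 1 / (n + 1))
      rw [add_sub_cancel_left] at this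
      exact add_le_add le_rfl (this.trans_eq (by ring))
    _ ≤ Real.log (n + 1) + Real.log (n + 1) * (2 / (n + 1)) := by gcongr
    _ = Real.log (n + 1) * (1 + 2 / (n + 1)) := by ring
  have hloglog := Real.log_le_log (Real.log_pos (by linarith)) hstep
  rw [Real.log_mul (by positivity) (by positivity)] at hloglog
  have := Real.log_le_sub_one_of_pos (by positivity : (0 : ℝ) < 1 + 2 / (n + 1))
  unfold logLogAddOne
  push_cast
  linarith

lemma logLogAddOne_succ_pow_le {n : ℕ} (hn : 1 ≤ n) :
    logLogAddOne (n + 1) ^ n ≤ Real.exp 4 * logLogAddOne n ^ n := by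
  have := logLogAddOne_pos hn
  have hratio : logLogAddOne (n + 1) ≤ Real.exp (4 / (n + 1)) * logLogAddOne n := calc
    logLogAddOne (n + 1) ≤ logLogAddOne n + 4 / (n + 1) * (1 / 2) :=
      (logLogAddOne_succ_le hn).trans_eq (by ring)
    _ ≤ logLogAddOne n + 4 / (n + 1) * logLogAddOne n := by
      gcongr
      exact half_le_logLogAddOne hn
    _ = (4 / (n + 1) + 1) * logLogAddOne n := by ring
    _ ≤ Real.exp (4 / (n + 1)) * logLogAddOne n := by
      gcongr
      exact Real.add_one_le_exp _
  calc logLogAddOne (n + 1) ^ n ≤ (Real.exp (4 / (n + 1)) * logLogAddOne n) ^ n := by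
        gcongr
        exact (logLogAddOne_pos n.succ_pos).le
    _ = Real.exp (n * (4 / (n + 1))) * logLogAddOne n ^ n := by rw [mul_pow, ← Real.exp_nat_mul]
    _ ≤ Real.exp 4 * logLogAddOne n ^ n := by
        gcongr
        rw [← mul_div_assoc, div_le_iff₀ (by positivity)]
        linarith

/-- The summand of the error term that is due to truncating the power series of `Φ` after the
term of order `ν`, as a function of `σ = σ(y)`. -/
noncomputable def truncationError (σ : ℝ) (ν : ℕ) : ℝ :=
  1 / (ν + 1) * (logLogAddOne (ν + 1) / σ) ^ (ν + 1)

lemma truncationError_eq (σ : ℝ) (ν : ℕ) :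
    truncationError σ ν =
      1 / ((ν : ℝ) + 1) * ((Real.log (Real.log ((ν : ℝ) + 2)) + 1) / σ) ^ (ν + 1) := by
  rw [truncationError, logLogAddOne, Nat.cast_succ, add_assoc _ 1 1, one_add_one_eq_two]

lemma truncationError_nonneg {σ : ℝ} (hσ : 0 ≤ σ) (ν : ℕ) : 0 ≤ truncationError σ ν := by
  have := logLogAddOne_pos ν.succ_pos
  unfold truncationError
  positivity

lemma two_mul_truncationError_succ_le {σ : ℝ} (hσ : 0 < σ) {ν : ℕ}
    (hν : logLogAddOne (ν + 2) ≤ σ / 200) :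
    2 * truncationError σ (ν + 1) ≤ truncationError σ ν := by
  have hpos₁ := logLogAddOne_pos ν.succ_pos
  have hpos₂ := logLogAddOne_pos (ν + 1).succ_pos
  have hexp : Real.exp 4 ≤ 100 := calc
    Real.exp 4 = Real.exp 1 ^ 4 := by rw [← Real.exp_nat_mul]; norm_num
    _ ≤ 2.7182818286 ^ 4 := by gcongr; exact Real.exp_one_lt_d9.le
    _ ≤ 100 := by norm_num
  have hsmall : logLogAddOne (ν + 2) / σ ≤ 1 / 200 := by
    rw [div_le_iff₀ hσ]
    linarith
  have hpow : (logLogAddOne (ν + 2) / σ) ^ (ν + 2) ≤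
      1 / 2 * (logLogAddOne (ν + 1) / σ) ^ (ν + 1) := calc
    _ = logLogAddOne (ν + 2) ^ (ν + 1) / σ ^ (ν + 1) * (logLogAddOne (ν + 2) / σ) := by
      rw [pow_succ, div_pow]
    _ ≤ 100 * logLogAddOne (ν + 1) ^ (ν + 1) / σ ^ (ν + 1) * (1 / 200) := by
      gcongr
      exact (logLogAddOne_succ_pow_le ν.succ_pos).trans (by gcongr)
    _ = 1 / 2 * (logLogAddOne (ν + 1) / σ) ^ (ν + 1) := by
      rw [div_pow]
      ring
  calc 2 * truncationError σ (ν + 1)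
      ≤ 2 * (1 / (ν + 1) * (1 / 2 * (logLogAddOne (ν + 1) / σ) ^ (ν + 1))) := by
        unfold truncationError
        gcongr
        linarith
    _ = truncationError σ ν := by
        unfold truncationError
        ring

lemma sum_Ico_le_two_mul {f : ℕ → ℝ} (hf : ∀ k, 0 ≤ f k) {n : ℕ}
    (hhalf : ∀ k < n, 2 * f (k + 1) ≤ f k) (m : ℕ) : ∑ k ∈ Finset.Ico m n, f k ≤ 2 * f m := by
  rcases le_total n m with hnm | hmn
  · simpa [hnm] using hf m
  induction hmn using Nat.decreasingInduction with
  | self => simpa using hf n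
  | of_succ k hk ih =>
    rw [Finset.sum_eq_sum_Ico_succ_bot hk]
    linarith [hhalf k hk]

lemma sum_Ico_truncationError_le {σ : ℝ} (hσ : 0 < σ) {M : ℕ}
    (hM : logLogAddOne (M + 1) ≤ σ / 200) (ν : ℕ) :
    ∑ m ∈ Finset.Ico ν M, truncationError σ m ≤ 2 * truncationError σ ν :=
  sum_Ico_le_two_mul (truncationError_nonneg hσ.le) (fun k hk ↦
    two_mul_truncationError_succ_le hσ
      ((logLogAddOne_le_logLogAddOne (by lia) (by lia)).trans hM)) ν

lemma exists_sum_factorial_mul_abs_PhiCoefR_div_le :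
    ∃ C : ℝ, 0 < C ∧ ∀ (y : ℝ) (ν : ℕ), 0 < sigmay y → logLogAddOne ν ≤ sigmay y / 2 →
      ∑ n ∈ Finset.range (ν + 1), n.factorial * |PhiCoefR y n| / sigmay y ^ n ≤ C := by
  obtain ⟨C, hC, hcoef⟩ := exists_factorial_mul_abs_PhiCoefR_le
  refine ⟨1 + C, by positivity, fun y ν hσ hν ↦ ?_⟩
  have hterm : ∀ n ∈ Finset.range ν,
      ((n + 1).factorial : ℝ) * |PhiCoefR y (n + 1)| / sigmay y ^ (n + 1) ≤
        C / 2 * (1 / 2) ^ n := fun n hn ↦ by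
    have hpos := logLogAddOne_pos n.succ_pos
    have hle : logLogAddOne (n + 1) ≤ sigmay y / 2 :=
      (logLogAddOne_le_logLogAddOne n.succ_pos (Finset.mem_range.1 hn)).trans hν
    calc _ ≤ C * logLogAddOne (n + 1) ^ (n + 1) / sigmay y ^ (n + 1) := by
          gcongr ?_ / _
          exact hcoef _ n.succ_pos y
      _ ≤ C * (sigmay y / 2) ^ (n + 1) / sigmay y ^ (n + 1) := by gcongr
      _ = C / 2 * (1 / 2) ^ n := by
          rw [div_pow, one_div_pow, pow_succ 2]
          field_simp
  calc _ = ∑ n ∈ Finset.range ν,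
          ((n + 1).factorial : ℝ) * |PhiCoefR y (n + 1)| / sigmay y ^ (n + 1) + 1 := by
        rw [Finset.sum_range_succ']
        simp [PhiCoefR_zero]
    _ ≤ ∑ n ∈ Finset.range ν, C / 2 * (1 / 2) ^ n + 1 := by
        gcongr with n hn
        exact hterm n hn
    _ ≤ C / 2 * 2 + 1 := by
        rw [← Finset.mul_sum]
        gcongr
        exact (summable_geometric_two.sum_le_tsum _ fun n _ ↦ by positivity).trans_eq
          tsum_geometric_two
    _ = 1 + C := by ring

lemma abs_re_Phifun_sub_sum_range_le (y : ℝ) {R x : ℝ} (hR : 0 < R) (hx : |x| ≤ R / 4) (M : ℕ) :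
    |(Phifun y x).re - ∑ n ∈ Finset.range (M + 1), PhiCoefR y n * x ^ n| ≤
      4 * |x| / R * (Real.exp (R * sigmay y) * (1 / 4) ^ M) := by
  set t := 4 * |x| / R with ht
  have ht₁ : t ≤ 1 := by
    rw [ht, div_le_one hR]
    linarith
  have hcoef (n : ℕ) : |PhiCoefR y n| ≤ Real.exp (R * sigmay y) / R ^ n :=
    abs_PhiCoefR_le_div_pow hR (fun z hz ↦ hz ▸ norm_Phifun_le_exp_sigmay y z) n
  have hterm (n : ℕ) : ‖PhiCoefR y (n + (M + 1)) * x ^ (n + (M + 1))‖ ≤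
      t * (Real.exp (R * sigmay y) * (1 / 4) ^ M) / 4 * (1 / 4) ^ n := calc
    _ ≤ Real.exp (R * sigmay y) / R ^ (n + (M + 1)) * |x| ^ (n + (M + 1)) := by
      rw [norm_mul, norm_pow, Real.norm_eq_abs, Real.norm_eq_abs]
      gcongr
      exact hcoef _
    _ = t ^ (n + (M + 1)) * (Real.exp (R * sigmay y) * (1 / 4) ^ (n + (M + 1))) := by
      rw [ht, div_pow, mul_pow, one_div_pow]
      field_simp
    _ ≤ t * (Real.exp (R * sigmay y) * (1 / 4) ^ (n + (M + 1))) := by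
      gcongr
      exact pow_le_of_le_one (by positivity) ht₁ (by lia)
    _ = _ := by ring
  have hgeom := (hasSum_geometric_of_lt_one (by norm_num : (0 : ℝ) ≤ 1 / 4) (by norm_num)).mul_left
    (t * (Real.exp (R * sigmay y) * (1 / 4) ^ M) / 4)
  refine (((hasSum_nat_add_iff' (M + 1)).2 (hasSum_PhiCoefR y x)).norm_le_of_bounded hgeom
    hterm).trans ?_
  have : 0 ≤ t * (Real.exp (R * sigmay y) * (1 / 4) ^ M) := by positivity
  norm_num
  linarith

/-- A majorant for the error, divided by `|ξ|`, of truncating `e^{-ξ²/2} Φ(-ξ²/(2σ))` after the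
term of order `ν`, valid for `|ξ| ≤ Λ`: the terms up to order `M` are kept, the later ones are
bounded by Cauchy's estimate. -/
noncomputable def truncationMajorant (y : ℝ) (ν M : ℕ) (Λ ξ : ℝ) : ℝ :=
  ∑ m ∈ Finset.Ico ν M,
      |PhiCoefR y (m + 1)| / (2 * sigmay y) ^ (m + 1) * (|ξ| ^ (2 * m + 1) * Real.exp (-ξ ^ 2 / 2))
    + Real.exp (2 * Λ ^ 2) * (1 / 4) ^ M / Λ

@[fun_prop]
lemma continuous_truncationMajorant (y : ℝ) (ν M : ℕ) (Λ : ℝ) :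
    Continuous (truncationMajorant y ν M Λ) := by
  unfold truncationMajorant
  fun_prop

lemma abs_re_Phifun_sub_sum_range_le_sum_Ico (y : ℝ) {R x : ℝ} (hR : 0 < R) (hx : |x| ≤ R / 4)
    (ν M : ℕ) :
    |(Phifun y x).re - ∑ n ∈ Finset.range (ν + 1), PhiCoefR y n * x ^ n| ≤
      ∑ m ∈ Finset.Ico ν M, |PhiCoefR y (m + 1)| * |x| ^ (m + 1)
        + 4 * |x| / R * (Real.exp (R * sigmay y) * (1 / 4) ^ M) := by
  have hIco : Finset.Ico ν (max ν M) = Finset.Ico ν M := by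
    ext
    simp only [Finset.mem_Ico]
    lia
  have hsplit : ∑ n ∈ Finset.range (max ν M + 1), PhiCoefR y n * x ^ n =
      ∑ n ∈ Finset.range (ν + 1), PhiCoefR y n * x ^ n +
        ∑ m ∈ Finset.Ico ν M, PhiCoefR y (m + 1) * x ^ (m + 1) := by
    rw [← hIco, Finset.sum_Ico_add' (fun n ↦ PhiCoefR y n * x ^ n),
      Finset.sum_range_add_sum_Ico _ (by lia)]
  have hmiddle : |∑ m ∈ Finset.Ico ν M, PhiCoefR y (m + 1) * x ^ (m + 1)| ≤
      ∑ m ∈ Finset.Ico ν M, |PhiCoefR y (m + 1)| * |x| ^ (m + 1) := by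
    simpa only [abs_mul, abs_pow] using Finset.abs_sum_le_sum_abs
      (fun m ↦ PhiCoefR y (m + 1) * x ^ (m + 1)) (Finset.Ico ν M)
  have htail := abs_re_Phifun_sub_sum_range_le y hR hx (max ν M)
  have hpow : (1 / 4 : ℝ) ^ max ν M ≤ (1 / 4) ^ M :=
    pow_le_pow_of_le_one (by norm_num) (by norm_num) (le_max_right _ _)
  rw [hsplit] at htail
  calc _ = |∑ m ∈ Finset.Ico ν M, PhiCoefR y (m + 1) * x ^ (m + 1) + ((Phifun y x).re -
          (∑ n ∈ Finset.range (ν + 1), PhiCoefR y n * x ^ n +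
            ∑ m ∈ Finset.Ico ν M, PhiCoefR y (m + 1) * x ^ (m + 1)))| := by
        congr 1
        ring
    _ ≤ _ := (abs_add_le _ _).trans (add_le_add hmiddle (htail.trans (by gcongr)))

lemma exp_mul_abs_re_Phifun_sub_sum_le {y Λ ξ : ℝ} (hσ : 0 < sigmay y) (hΛ : 0 < Λ)
    (hξ : |ξ| ≤ Λ) (ν M : ℕ) :
    Real.exp (-ξ ^ 2 / 2) * |(Phifun y (-ξ ^ 2 / (2 * sigmay y) : ℝ)).re -
        ∑ n ∈ Finset.range (ν + 1), PhiCoefR y n * (-ξ ^ 2 / (2 * sigmay y)) ^ n| ≤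
      |ξ| * truncationMajorant y ν M Λ ξ := by
  set σ := sigmay y
  have hx : |-ξ ^ 2 / (2 * σ)| = ξ ^ 2 / (2 * σ) := by
    rw [neg_div, abs_neg, abs_of_nonneg (by positivity)]
  have hsq : ξ ^ 2 ≤ Λ ^ 2 := sq_le_sq' (neg_le_of_abs_le hξ) (le_of_abs_le hξ)
  have hratio : (|ξ| / Λ) ^ 2 ≤ |ξ| / Λ :=
    pow_le_of_le_one (by positivity) ((div_le_one hΛ).2 hξ) two_ne_zero
  have htail := abs_re_Phifun_sub_sum_range_le_sum_Ico y (R := 2 * Λ ^ 2 / σ)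
    (by positivity) (by rw [hx]; field_simp; linarith) ν M
  rw [hx, show 4 * (ξ ^ 2 / (2 * σ)) / (2 * Λ ^ 2 / σ) = (|ξ| / Λ) ^ 2 by
    rw [div_pow, sq_abs]; field_simp; ring, div_mul_cancel₀ _ hσ.ne'] at htail
  have hexp : Real.exp (-ξ ^ 2 / 2) ≤ 1 := Real.exp_le_one_iff.2 (by linarith [sq_nonneg ξ])
  calc _ ≤ Real.exp (-ξ ^ 2 / 2) *
          (∑ m ∈ Finset.Ico ν M, |PhiCoefR y (m + 1)| * (ξ ^ 2 / (2 * σ)) ^ (m + 1)) +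
        1 * (|ξ| / Λ * (Real.exp (2 * Λ ^ 2) * (1 / 4) ^ M)) := by
        refine (mul_le_mul_of_nonneg_left htail (Real.exp_pos _).le).trans ?_
        rw [mul_add]
        gcongr
    _ = |ξ| * truncationMajorant y ν M Λ ξ := by
        rw [truncationMajorant, mul_add, Finset.mul_sum, Finset.mul_sum]
        congr 1
        · refine Finset.sum_congr rfl fun m _ ↦ ?_
          rw [div_pow, ← sq_abs ξ, ← pow_mul]
          ring
        · ring

lemma exists_integral_truncationMajorant_le :
    ∃ C : ℝ, 0 < C ∧ ∀ (y Λ : ℝ) (ν M : ℕ), 0 < sigmay y → 0 < Λ →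
      logLogAddOne (M + 1) ≤ sigmay y / 200 →
      ∫ ξ in (-Λ)..Λ, truncationMajorant y ν M Λ ξ ≤
        C * truncationError (sigmay y) ν + 2 * (Real.exp (2 * Λ ^ 2) * (1 / 4) ^ M) := by
  obtain ⟨C, hC, hcoef⟩ := exists_factorial_mul_abs_PhiCoefR_le
  refine ⟨C * 2, by positivity, fun y Λ ν M hσ hΛ hM ↦ ?_⟩
  set σ := sigmay y
  have hterm (m : ℕ) : ∫ ξ in (-Λ)..Λ, |PhiCoefR y (m + 1)| / (2 * σ) ^ (m + 1) *
      (|ξ| ^ (2 * m + 1) * Real.exp (-ξ ^ 2 / 2)) ≤ C * truncationError σ m := by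
    rw [intervalIntegral.integral_const_mul]
    calc _ ≤ |PhiCoefR y (m + 1)| / (2 * σ) ^ (m + 1) * (2 ^ (m + 1) * m.factorial) := by
          gcongr
          exact intervalIntegral_abs_pow_odd_mul_exp_le m hΛ.le
      _ = (m + 1).factorial * |PhiCoefR y (m + 1)| / ((m + 1) * σ ^ (m + 1)) := by
          rw [Nat.factorial_succ, mul_pow]
          push_cast
          field_simp
      _ ≤ C * logLogAddOne (m + 1) ^ (m + 1) / ((m + 1) * σ ^ (m + 1)) := by
          gcongr ?_ / _
          exact hcoef _ m.succ_pos y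
      _ = C * truncationError σ m := by
          rw [truncationError, div_pow]
          field_simp
  unfold truncationMajorant
  rw [intervalIntegral.integral_add (Continuous.intervalIntegrable (by fun_prop) _ _)
    intervalIntegrable_const, intervalIntegral.integral_finsetSum fun m _ ↦
      Continuous.intervalIntegrable (by fun_prop) _ _, intervalIntegral.integral_const]
  refine add_le_add ?_ (le_of_eq ?_)
  · calc _ ≤ ∑ m ∈ Finset.Ico ν M, C * truncationError σ m := by
          gcongr with m
          exact hterm m
      _ ≤ C * 2 * truncationError σ ν := by
          rw [← Finset.mul_sum, mul_assoc]
          gcongr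
          exact sum_Ico_truncationError_le hσ hM ν
  · rw [smul_eq_mul]
    field_simp
    ring

/-! ### The approximating density -/

/-- The density `e^{-u²/2} ∑_{n ≤ ν} Φ_n / (2σ)ⁿ H_{2n}(u) / √(2π)` of Edgeworth type that
approximates the distribution of `V_y(t) √(2/σ)`. -/
noncomputable def edgeworthDensity (y : ℝ) (ν : ℕ) (u : ℝ) : ℝ :=
  ∑ n ∈ Finset.range (ν + 1),
    (√(2 * π))⁻¹ * (PhiCoefR y n / (2 * sigmay y) ^ n) * hermiteFun (2 * n) u

lemma integrable_edgeworthDensity (y : ℝ) (ν : ℕ) : Integrable (edgeworthDensity y ν) :=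
  integrable_finsetSum _ fun _ _ ↦ (integrable_hermiteFun _).const_mul _

lemma integral_exp_mul_mul_I_mul_edgeworthDensity (y : ℝ) (ν : ℕ) (ξ : ℝ) :
    ∫ u : ℝ, Complex.exp (ξ * u * I) * edgeworthDensity y ν u =
      (Real.exp (-ξ ^ 2 / 2) *
        ∑ n ∈ Finset.range (ν + 1), PhiCoefR y n * (-ξ ^ 2 / (2 * sigmay y)) ^ n : ℝ) := by
  have hpi : ((√(2 * π) : ℝ) : ℂ) ≠ 0 := mod_cast (by positivity : √(2 * π) ≠ 0)
  have hexpand (u : ℝ) : Complex.exp (ξ * u * I) * edgeworthDensity y ν u =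
      ∑ n ∈ Finset.range (ν + 1), (√(2 * π) : ℂ)⁻¹ * (PhiCoefR y n / (2 * sigmay y) ^ n) *
        (Complex.exp (ξ * u * I) * hermiteFun (2 * n) u) := by
    rw [edgeworthDensity]
    push_cast
    rw [Finset.mul_sum]
    exact Finset.sum_congr rfl fun n _ ↦ by ring
  have hint (n : ℕ) : Integrable fun u : ℝ ↦ Complex.exp (ξ * u * I) * hermiteFun (2 * n) u :=
    integrable_exp_mul_mul_I_mul (integrable_hermiteFun _).ofReal ξ
  simp_rw [hexpand]
  rw [integral_finsetSum _ fun n _ ↦ (hint n).const_mul _]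
  push_cast
  rw [Finset.mul_sum]
  refine Finset.sum_congr rfl fun n _ ↦ ?_
  rw [integral_const_mul, integral_exp_mul_mul_I_mul_hermiteFun, pow_mul, mul_pow (ξ : ℂ),
    Complex.I_sq, div_pow]
  push_cast
  field_simp

lemma setIntegral_Icc_hermiteFun_succ (m : ℕ) {a b : ℝ} (hab : a ≤ b) :
    ∫ u in Set.Icc a b, hermiteFun (m + 1) u = hermiteFun m a - hermiteFun m b := by
  rw [integral_Icc_eq_integral_Ioc, ← intervalIntegral.integral_of_le hab,
    ← neg_sub, ← intervalIntegral.integral_eq_sub_of_hasDerivAt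
      (fun u _ ↦ hasDerivAt_hermiteFun m u) (integrable_hermiteFun _).neg.intervalIntegrable,
    intervalIntegral.integral_neg, neg_neg]

lemma abs_setIntegral_Icc_hermiteFun_two_mul_le (n : ℕ) (a b : ℝ) :
    |∫ u in Set.Icc a b, hermiteFun (2 * n) u| ≤ √(2 * π) * (2 ^ n * n.factorial) := by
  rcases lt_or_ge b a with hba | hab
  · rw [Set.Icc_eq_empty hba.not_ge, setIntegral_empty, abs_zero]
    positivity
  rcases n with _ | n
  · have hle : ∫ u in Set.Icc a b, |hermiteFun 0 u| ≤ ∫ u, |hermiteFun 0 u| :=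
      setIntegral_le_integral (integrable_hermiteFun 0).abs (ae_of_all _ fun u ↦ abs_nonneg _)
    have hgauss := integral_abs_pow_even_mul_exp_le 0
    simp only [hermiteFun_zero, abs_of_pos (Real.exp_pos _)] at hle
    simp only [mul_zero, pow_zero, one_mul] at hgauss
    refine (abs_integral_le_integral_abs).trans ?_
    simp only [mul_zero, hermiteFun_zero, abs_of_pos (Real.exp_pos _), pow_zero, one_mul]
    exact hle.trans hgauss
  · have hbound (u : ℝ) : |hermiteFun (2 * n + 1) u| ≤
        (√(2 * π))⁻¹ * (2 ^ (n + 1) * n.factorial) :=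
      (abs_hermiteFun_le _ u).trans_eq (by rw [integral_abs_pow_odd_mul_exp])
    have hpi : 2 ≤ √(2 * π) ^ 2 := by
      rw [Real.sq_sqrt (by positivity)]
      linarith [Real.two_le_pi]
    have hfac : (n.factorial : ℝ) ≤ (n + 1).factorial := mod_cast Nat.factorial_le n.le_succ
    rw [mul_add_one, setIntegral_Icc_hermiteFun_succ _ hab]
    calc _ ≤ 2 * ((√(2 * π))⁻¹ * (2 ^ (n + 1) * n.factorial)) := by
          exact (abs_sub _ _).trans ((add_le_add (hbound a) (hbound b)).trans_eq (two_mul _).symm)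
      _ ≤ √(2 * π) ^ 2 * ((√(2 * π))⁻¹ * (2 ^ (n + 1) * (n + 1).factorial)) := by gcongr
      _ = √(2 * π) * (2 ^ (n + 1) * (n + 1).factorial) := by field_simp

lemma abs_edgeworthDensity_le {y : ℝ} (hσ : 0 < sigmay y) (ν : ℕ) (u : ℝ) :
    |edgeworthDensity y ν u| ≤
      ∑ n ∈ Finset.range (ν + 1), n.factorial * |PhiCoefR y n| / sigmay y ^ n := by
  have hpi : (√(2 * π))⁻¹ ≤ 1 :=
    inv_le_one_of_one_le₀ (Real.one_le_sqrt.2 (by linarith [Real.two_le_pi]))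
  refine (Finset.abs_sum_le_sum_abs _ _).trans (Finset.sum_le_sum fun n _ ↦ ?_)
  rw [abs_mul, abs_mul, abs_div, abs_of_pos (by positivity : 0 < (√(2 * π))⁻¹),
    abs_of_pos (by positivity : 0 < (2 * sigmay y) ^ n)]
  calc _ ≤ 1 * (|PhiCoefR y n| / (2 * sigmay y) ^ n) * (2 ^ n * n.factorial) := by
        gcongr
        exact abs_hermiteFun_two_mul_le n u
    _ = n.factorial * |PhiCoefR y n| / sigmay y ^ n := by
        rw [mul_pow]
        field_simp

lemma setIntegral_edgeworthDensity (y : ℝ) (ν : ℕ) (s : Set ℝ) :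
    ∫ u in s, edgeworthDensity y ν u = ∑ n ∈ Finset.range (ν + 1),
      (√(2 * π))⁻¹ * (PhiCoefR y n / (2 * sigmay y) ^ n) * ∫ u in s, hermiteFun (2 * n) u := by
  unfold edgeworthDensity
  rw [integral_finsetSum _ fun n _ ↦ ((integrable_hermiteFun _).const_mul _).integrableOn]
  simp_rw [integral_const_mul]

lemma abs_setIntegral_Icc_edgeworthDensity_le {y : ℝ} (hσ : 0 < sigmay y) (ν : ℕ) (a b : ℝ) :
    |∫ u in Set.Icc a b, edgeworthDensity y ν u| ≤
      ∑ n ∈ Finset.range (ν + 1), n.factorial * |PhiCoefR y n| / sigmay y ^ n := by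
  rw [setIntegral_edgeworthDensity]
  refine (Finset.abs_sum_le_sum_abs _ _).trans (Finset.sum_le_sum fun n _ ↦ ?_)
  rw [abs_mul, abs_mul, abs_div, abs_of_pos (by positivity : 0 < (√(2 * π))⁻¹),
    abs_of_pos (by positivity : 0 < (2 * sigmay y) ^ n)]
  calc _ ≤ (√(2 * π))⁻¹ * (|PhiCoefR y n| / (2 * sigmay y) ^ n) *
          (√(2 * π) * (2 ^ n * n.factorial)) := by
        gcongr
        exact abs_setIntegral_Icc_hermiteFun_two_mul_le n a b
    _ = n.factorial * |PhiCoefR y n| / sigmay y ^ n := by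
        rw [mul_pow]
        field_simp

lemma mul_setIntegral_edgeworthDensity (y H : ℝ) (ν : ℕ) {s : Set ℝ} (hs : MeasurableSet s) :
    H * ∫ u in s, edgeworthDensity y ν u =
      H / √(2 * π) * ∑ n ∈ Finset.range (ν + 1), (PhiCoefR y n / (2 * sigmay y) ^ n) *
        ∫ u : ℝ, Real.exp (-u ^ 2 / 2) * hermiteEval (2 * n) u *
          s.indicator (fun _ ↦ (1 : ℝ)) u := by
  have hindicator (n : ℕ) : ∫ u : ℝ, Real.exp (-u ^ 2 / 2) * hermiteEval (2 * n) u *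
      s.indicator (fun _ ↦ (1 : ℝ)) u = ∫ u in s, hermiteFun (2 * n) u := by
    rw [← integral_indicator hs]
    congr 1 with u
    by_cases hu : u ∈ s <;> simp [hu, hermiteFun]
  simp_rw [hindicator, setIntegral_edgeworthDensity, Finset.mul_sum]
  exact Finset.sum_congr rfl fun n _ ↦ by ring

/-! ### Growth of `σ(y)` -/

lemma log_log_sub_one_le_sigmay {y : ℝ} (hy : 1 ≤ y) (hlog : 0 < Real.log y) :
    Real.log (Real.log y) - 1 ≤ sigmay y := by
  have hle : Real.log (Real.log y) ≤ Real.log (Real.log (⌊y⌋₊ + 1)) :=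
    Real.log_le_log hlog (Real.log_le_log (by linarith) (Nat.lt_floor_add_one y).le)
  have hsum : Real.log (Real.log (⌊y⌋₊ + 1)) - 1 ≤ sigmay y :=
    log_log_sub_one_le_sum_primesLE (Nat.one_le_floor_iff _ |>.2 hy)
  linarith

lemma tendsto_log_log_atTop : Tendsto (fun y ↦ Real.log (Real.log y)) atTop atTop :=
  Real.tendsto_log_atTop.comp Real.tendsto_log_atTop

lemma eventually_log_log_sub_one_le_sigmay :
    ∀ᶠ y in atTop, Real.log (Real.log y) - 1 ≤ sigmay y := by
  filter_upwards [eventually_ge_atTop 1, Real.tendsto_log_atTop.eventually_gt_atTop 0]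
    with y hy hlog using log_log_sub_one_le_sigmay hy hlog

lemma tendsto_sigmay_atTop : Tendsto sigmay atTop atTop :=
  tendsto_atTop_mono' _ eventually_log_log_sub_one_le_sigmay
    (tendsto_atTop_add_const_right _ (-1) tendsto_log_log_atTop)

lemma eventually_logLogAddOne_le_half_sigmay :
    ∀ᶠ y in atTop, ∀ ν : ℕ, ν ≤ Real.exp (Real.log y ^ (1 / 4 : ℝ)) →
      logLogAddOne ν ≤ sigmay y / 2 := by
  filter_upwards [eventually_log_log_sub_one_le_sigmay,
    tendsto_log_log_atTop.eventually_ge_atTop 10,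
    Real.tendsto_log_atTop.eventually_ge_atTop 1] with y hσ hloglog hlog ν hν
  have h := logLogAddOne_le_of_le_exp (Real.one_le_rpow hlog (by norm_num)) hν
  rw [Real.log_rpow (by linarith)] at h
  linarith

lemma eventually_logLogAddOne_ceil_le_sigmay_div :
    ∀ᶠ y in atTop, logLogAddOne (⌈Real.log y ^ 2⌉₊ + 1) ≤ sigmay y / 200 := by
  have hsmall : ∀ᶠ x in atTop, Real.log x ≤ 1 / 400 * x := by
    filter_upwards [Real.isLittleO_log_id_atTop.bound (by norm_num : (0 : ℝ) < 1 / 400),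
      eventually_ge_atTop 0] with x hx hx₀
    exact (le_abs_self _).trans (hx.trans_eq (by rw [id, Real.norm_of_nonneg hx₀]))
  filter_upwards [eventually_log_log_sub_one_le_sigmay,
    tendsto_log_log_atTop.eventually_ge_atTop 2000, tendsto_log_log_atTop.eventually hsmall,
    Real.tendsto_log_atTop.eventually_ge_atTop 3] with y hσ hloglog hlogloglog hlog
  have hceil : ((⌈Real.log y ^ 2⌉₊ + 1 : ℕ) : ℝ) ≤ Real.exp (3 * Real.log (Real.log y)) := calc
    ((⌈Real.log y ^ 2⌉₊ + 1 : ℕ) : ℝ) ≤ Real.log y ^ 2 + 2 := by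
      push_cast
      linarith [Nat.ceil_lt_add_one (sq_nonneg (Real.log y))]
    _ ≤ Real.log y ^ 3 := by nlinarith [sq_nonneg (Real.log y)]
    _ = Real.exp (3 * Real.log (Real.log y)) := by
      rw [show (3 : ℝ) = (3 : ℕ) from rfl, Real.exp_nat_mul, Real.exp_log (by linarith)]
  have h := logLogAddOne_le_of_le_exp (by linarith) hceil
  rw [Real.log_mul (by norm_num) (by linarith)] at h
  linarith [Real.log_le_sub_one_of_pos (by norm_num : (0 : ℝ) < 3)]

lemma eventually_sqrt_mul_log_le_half : ∀ᶠ x in atTop, √x * Real.log x ≤ x / 2 := by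
  filter_upwards [(isLittleO_log_rpow_atTop (r := 1 / 2) (by norm_num)).bound
    (by norm_num : (0 : ℝ) < 1 / 2), eventually_ge_atTop 0] with x hx hx₀
  rw [← Real.sqrt_eq_rpow, Real.norm_of_nonneg (Real.sqrt_nonneg x)] at hx
  calc √x * Real.log x ≤ √x * (1 / 2 * √x) := by
        gcongr
        exact (le_abs_self _).trans hx
    _ = x / 2 := by
        rw [mul_left_comm, Real.mul_self_sqrt hx₀]
        ring

lemma exp_two_mul_sq_mul_pow_ceil_le {Λ L : ℝ} (hΛ : 0 < Λ) (hΛL : 2 * Λ ≤ L) :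
    Real.exp (2 * Λ ^ 2) * (1 / 4) ^ ⌈L ^ 2⌉₊ ≤ 1 / Λ := by
  have hquarter : (1 / 4 : ℝ) ≤ Real.exp (-1) := by
    rw [Real.exp_neg, ← one_div]
    gcongr
    linarith [Real.exp_one_lt_d9]
  calc _ ≤ Real.exp (2 * Λ ^ 2) * Real.exp (-1) ^ ⌈L ^ 2⌉₊ := by gcongr
    _ = Real.exp (2 * Λ ^ 2 - ⌈L ^ 2⌉₊) := by
        rw [← Real.exp_nat_mul, ← Real.exp_add]
        ring_nf
    _ ≤ Real.exp (-(2 * Λ ^ 2)) := by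
        gcongr
        nlinarith [Nat.le_ceil (L ^ 2)]
    _ ≤ 1 / Λ := by
        rw [Real.exp_neg, ← one_div]
        gcongr
        nlinarith [Real.add_one_le_exp (2 * Λ ^ 2), sq_nonneg (Λ - 1)]

/-! ### The distribution of `V_y(t) √(2/σ)` -/

/-- The distribution of the normalized value `V_y(t) √(2/σ)` for `t` uniform in `(T, T + H]`. -/
noncomputable def normalizedLawVy (y T H : ℝ) : Measure ℝ :=
  (lawVy y T H).map (√(2 / sigmay y) * ·)

@[fun_prop]
lemma continuous_Vy (y : ℝ) : Continuous (Vy y) := by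
  unfold Vy
  fun_prop

lemma isProbabilityMeasure_normalizedLawVy (y T : ℝ) {H : ℝ} (hH : 0 < H) :
    IsProbabilityMeasure (normalizedLawVy y T H) := by
  have := isProbabilityMeasure_uniformIoc (lt_add_of_pos_right T hH)
  have : IsProbabilityMeasure (lawVy y T H) :=
    Measure.isProbabilityMeasure_map (by fun_prop)
  exact Measure.isProbabilityMeasure_map (by fun_prop)

lemma intervalIntegral_indicator_Vy {y H : ℝ} (hσ : 0 < sigmay y) (hH : 0 < H) (T α β : ℝ) :
    ∫ t in T..(T + H), (Set.Icc α β).indicator (fun _ ↦ (1 : ℝ)) (Vy y t) =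
      H * (normalizedLawVy y T H).real
        (Set.Icc (α * √(2 / sigmay y)) (β * √(2 / sigmay y))) := by
  have hr : 0 < √(2 / sigmay y) := by positivity
  have hpre : (√(2 / sigmay y) * ·) ⁻¹' Set.Icc (α * √(2 / sigmay y)) (β * √(2 / sigmay y)) =
      Set.Icc α β := by
    ext x
    simp only [Set.mem_preimage, Set.mem_Icc, mul_comm _ (√(2 / sigmay y)),
      mul_le_mul_iff_right₀ hr]
  have hreal : (normalizedLawVy y T H).real
      (Set.Icc (α * √(2 / sigmay y)) (β * √(2 / sigmay y))) =
      (uniformIoc T (T + H)).real (Vy y ⁻¹' Set.Icc α β) := by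
    rw [normalizedLawVy, lawVy, map_measureReal_apply (by fun_prop) measurableSet_Icc, hpre,
      map_measureReal_apply (by fun_prop) measurableSet_Icc]
  rw [hreal, ← integral_indicator_one ((continuous_Vy y).measurable measurableSet_Icc),
    integral_uniformIoc (by linarith), add_sub_cancel_left, smul_eq_mul,
    mul_inv_cancel_left₀ hH.ne']
  rfl

lemma Gfun_neg_sq_div_four {y : ℝ} (hσ : 0 < sigmay y) (ξ : ℝ) :
    Gfun y (-((√(2 / sigmay y) * ξ : ℝ) : ℂ) ^ 2 / 4) =
      (Real.exp (-ξ ^ 2 / 2) * (Phifun y (-ξ ^ 2 / (2 * sigmay y) : ℝ)).re : ℝ) := by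
  have harg : -((√(2 / sigmay y) * ξ : ℝ) : ℂ) ^ 2 / 4 = (-ξ ^ 2 / (2 * sigmay y) : ℝ) := by
    rw [← Complex.ofReal_pow, mul_pow, Real.sq_sqrt (by positivity)]
    have : (sigmay y : ℂ) ≠ 0 := mod_cast hσ.ne'
    push_cast
    field_simp
    ring
  rw [harg, Gfun_eq_exp_mul_Phifun, Complex.ofReal_mul, ofReal_re_Phifun, ← Complex.ofReal_mul,
    ← Complex.ofReal_exp]
  congr 3
  field_simp

lemma exp_mul_pow_div_rpow_le {y N x : ℝ} (hy : Real.exp 1 ≤ y) (hN : 0 < N) {K : ℕ}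
    (hK : K ≤ N / 8) (hx : x ≤ N / 4) : Real.exp x * (2 * y ^ (2 * K) / y ^ N) ≤ 4 / N := by
  have hy₀ : 0 < y := (Real.exp_pos 1).trans_le hy
  have hpow : y ^ (2 * K) / y ^ N ≤ Real.exp (-(3 * N / 4)) := calc
    y ^ (2 * K) / y ^ N = y ^ (((2 * K : ℕ) : ℝ) - N) := by
      rw [Real.rpow_sub hy₀, Real.rpow_natCast]
    _ ≤ Real.exp 1 ^ (((2 * K : ℕ) : ℝ) - N) :=
      Real.rpow_le_rpow_of_nonpos (Real.exp_pos 1) hy (by push_cast; linarith)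
    _ ≤ Real.exp (-(3 * N / 4)) := by
      rw [Real.exp_one_rpow]
      gcongr
      push_cast
      linarith
  calc Real.exp x * (2 * y ^ (2 * K) / y ^ N) = 2 * (Real.exp x * (y ^ (2 * K) / y ^ N)) := by ring
    _ ≤ 2 * (Real.exp (N / 4) * Real.exp (-(3 * N / 4))) := by gcongr
    _ = 2 / Real.exp (N / 2) := by
      rw [← Real.exp_add, div_eq_mul_inv 2, ← Real.exp_neg]
      ring_nf
    _ ≤ 2 / (N / 2) := by
      gcongr
      linarith [Real.add_one_le_exp (N / 2)]
    _ = 4 / N := by ring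

lemma div_pow_mul_exp_le {Λ x : ℝ} (hΛ : 0 < Λ) (hx : 0 ≤ x) (hxΛ : x ≤ Λ) {K : ℕ} (hK : K ≠ 0)
    (hΛK : 16 * Λ ^ 2 ≤ K) : (x / (4 * Λ)) ^ K * Real.exp (8 * Λ ^ 2) ≤ x / (K * Λ) := by
  have hexp : Real.exp (1 / 2) ≤ 2 := by
    rw [← Real.le_log_iff_exp_le two_pos]
    linarith [Real.log_two_gt_d9]
  have hexpK : Real.exp (8 * Λ ^ 2) ≤ 2 ^ K := calc
    Real.exp (8 * Λ ^ 2) ≤ Real.exp (K * (1 / 2)) := Real.exp_le_exp.2 (by linarith)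
    _ = Real.exp (1 / 2) ^ K := Real.exp_nat_mul _ K
    _ ≤ 2 ^ K := by gcongr
  have : (0 : ℝ) < K := mod_cast hK.bot_lt
  have hKpow : (K : ℝ) ≤ 2 ^ K := mod_cast K.lt_two_pow_self.le
  calc (x / (4 * Λ)) ^ K * Real.exp (8 * Λ ^ 2) ≤ (x / (4 * Λ)) ^ K * 2 ^ K := by gcongr
    _ = (x / Λ) ^ K / 2 ^ K := by
      rw [← mul_pow, ← div_pow]
      congr 1
      field_simp
      norm_num
    _ ≤ (x / Λ) / K := by
      gcongr
      exact pow_le_of_le_one (by positivity) ((div_le_one hΛ).2 hxΛ) hK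
    _ = x / (K * Λ) := by field_simp

theorem norm_charFun_normalizedLawVy_sub_le {y N Λ ξ : ℝ} (hy : Real.exp 1 ≤ y)
    (hσ : 2 ≤ sigmay y) (hN : 32 ≤ N) (hΛ : 0 < Λ) (hΛN : 256 * Λ ^ 2 ≤ N) (hξ : |ξ| ≤ Λ) (T : ℝ) :
    ‖charFun (normalizedLawVy y T (y ^ N)) ξ -
      (Real.exp (-ξ ^ 2 / 2) * (Phifun y (-ξ ^ 2 / (2 * sigmay y) : ℝ)).re : ℝ)‖ ≤
      |ξ| * (4 / N + 64 / (N * Λ)) := by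
  have hy₁ : 1 ≤ y := (Real.one_le_exp zero_le_one).trans hy
  have hN₀ : 0 < N := by linarith
  obtain ⟨K, hKeven, hKN, hNK⟩ : ∃ K : ℕ, Even K ∧ K ≤ N / 8 ∧ N / 16 ≤ K := by
    refine ⟨2 * ⌊N / 16⌋₊, even_two_mul _, ?_, ?_⟩ <;> push_cast
    · linarith [Nat.floor_le (by positivity : 0 ≤ N / 16)]
    · linarith [Nat.lt_floor_add_one (N / 16)]
  have hK : K ≠ 0 := by
    rintro rfl
    norm_num at hNK
    linarith
  set r := √(2 / sigmay y) with hr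
  have hr₀ : 0 < r := by positivity
  have hr₁ : r ≤ 1 := Real.sqrt_le_one.2 ((div_le_one (by linarith)).2 hσ)
  have hξr : r * |ξ| ≤ |ξ| := mul_le_of_le_one_left (abs_nonneg ξ) hr₁
  have hscale : (4 * Λ * r) ^ 2 / 4 * sigmay y = 8 * Λ ^ 2 := by
    rw [mul_pow, hr, Real.sq_sqrt (by positivity)]
    field_simp
    ring
  have hlaw := norm_charFun_lawVy_sub_Gfun_le (T := T) (H := y ^ N) hy₁ (by positivity) hK
    hKeven (by positivity : 0 < 4 * Λ * r) (r * ξ)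
  rw [Gfun_neg_sq_div_four (by linarith), hscale, abs_mul, abs_of_pos hr₀,
    show r * |ξ| / (4 * Λ * r) = |ξ| / (4 * Λ) by field_simp] at hlaw
  rw [normalizedLawVy, charFun_map_mul]
  calc _ ≤ |ξ| * (Real.exp (r * |ξ|) * (2 * y ^ (2 * K) / y ^ N)) +
          4 * ((|ξ| / (4 * Λ)) ^ K * Real.exp (8 * Λ ^ 2)) := by
        refine hlaw.trans (add_le_add ?_ (mul_assoc _ _ _).le)
        rw [mul_assoc]
        gcongr
    _ ≤ |ξ| * (4 / N) + 4 * (|ξ| / (N / 16 * Λ)) := by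
        gcongr
        · exact exp_mul_pow_div_rpow_le hy hN₀ hKN (by nlinarith)
        · refine (div_pow_mul_exp_le hΛ (abs_nonneg ξ) hξ hK (by linarith)).trans ?_
          gcongr
    _ = |ξ| * (4 / N + 64 / (N * Λ)) := by
        field_simp
        ring

/-! ### Comparing the distribution with the density -/

lemma norm_charFun_normalizedLawVy_sub_integral_edgeworthDensity_le {y N Λ ξ : ℝ}
    (hy : Real.exp 1 ≤ y) (hσ : 2 ≤ sigmay y) (hN : 32 ≤ N) (hΛ : 0 < Λ)
    (hΛN : 256 * Λ ^ 2 ≤ N) (hξ : |ξ| ≤ Λ) (T : ℝ) (ν M : ℕ) :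
    ‖charFun (normalizedLawVy y T (y ^ N)) ξ -
      ∫ u : ℝ, Complex.exp (ξ * u * I) * edgeworthDensity y ν u‖ ≤
      |ξ| * (truncationMajorant y ν M Λ ξ + (4 / N + 64 / (N * Λ))) := by
  have htrunc := exp_mul_abs_re_Phifun_sub_sum_le (by linarith : 0 < sigmay y) hΛ hξ ν M
  rw [← abs_of_pos (Real.exp_pos (-ξ ^ 2 / 2)), ← abs_mul, mul_sub, ← Real.norm_eq_abs,
    ← Complex.norm_real, Complex.ofReal_sub] at htrunc
  rw [integral_exp_mul_mul_I_mul_edgeworthDensity, mul_add, add_comm (|ξ| * _)]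
  exact (norm_sub_le_norm_sub_add_norm_sub _ _ _).trans
    (add_le_add (norm_charFun_normalizedLawVy_sub_le hy hσ hN hΛ hΛN hξ T) htrunc)

lemma intervalIntegral_four_div_add_le {N Λ : ℝ} (hN : 32 ≤ N) (hΛ : 0 < Λ)
    (hΛN : 256 * Λ ^ 2 ≤ N) : ∫ _ξ in (-Λ)..Λ, (4 / N + 64 / (N * Λ)) ≤ 9 * (1 / Λ) := by
  have hΛN' : 16 * Λ ≤ N := by nlinarith [sq_nonneg (32 * Λ - 1)]
  have hN₀ : 0 < N := by linarith
  rw [intervalIntegral.integral_const, smul_eq_mul]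
  calc (Λ - -Λ) * (4 / N + 64 / (N * Λ)) = (8 * Λ + 128) / N := by
        field_simp
        ring
    _ ≤ 9 / Λ := by
        rw [div_le_div_iff₀ hN₀ hΛ]
        nlinarith
    _ = 9 * (1 / Λ) := div_eq_mul_one_div _ _

lemma exists_abs_intervalDiscrepancy_le_add_one_div :
    ∃ C : ℝ, 0 < C ∧ ∀ᶠ y in atTop, ∀ ν : ℕ, ν ≤ Real.exp (Real.log y ^ (1 / 4 : ℝ)) →
      ∀ T N Λ : ℝ, 32 ≤ N → 0 < Λ → 256 * Λ ^ 2 ≤ N → 2 * Λ ≤ Real.log y → ∀ a b,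
        |intervalDiscrepancy (normalizedLawVy y T (y ^ N)) (edgeworthDensity y ν) a b| ≤
          C * (truncationError (sigmay y) ν + 1 / Λ) := by
  obtain ⟨C₀, hC₀, hsmooth⟩ := exists_abs_intervalDiscrepancy_le
  obtain ⟨C₁, hC₁, hmajorant⟩ := exists_integral_truncationMajorant_le
  obtain ⟨C₂, hC₂, hcoef⟩ := exists_sum_factorial_mul_abs_PhiCoefR_div_le
  refine ⟨C₀ * (C₁ + 11 + C₂), by positivity, ?_⟩
  filter_upwards [eventually_ge_atTop (Real.exp 1), tendsto_sigmay_atTop.eventually_ge_atTop 2,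
    eventually_logLogAddOne_le_half_sigmay, eventually_logLogAddOne_ceil_le_sigmay_div]
    with y hy hσ hhalf hceil ν hν T N Λ hN hΛ hΛN hΛy a b
  have hσ₀ : 0 < sigmay y := by linarith
  have hy₀ : 0 < y := (Real.exp_pos 1).trans_le hy
  have hprob := isProbabilityMeasure_normalizedLawVy y T (Real.rpow_pos_of_pos hy₀ N)
  set M := ⌈Real.log y ^ 2⌉₊
  have hmain := hsmooth (normalizedLawVy y T (y ^ N)) (edgeworthDensity y ν)
    (fun ξ ↦ truncationMajorant y ν M Λ ξ + (4 / N + 64 / (N * Λ))) C₂ Λ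
    (integrable_edgeworthDensity y ν)
    (fun u ↦ (abs_edgeworthDensity_le hσ₀ ν u).trans (hcoef y ν hσ₀ (hhalf ν hν))) hΛ
    (Continuous.intervalIntegrable (by fun_prop) _ _)
    (fun ξ hξ ↦ norm_charFun_normalizedLawVy_sub_integral_edgeworthDensity_le hy hσ hN hΛ hΛN hξ
      T ν M) a b
  have hconst := intervalIntegral_four_div_add_le hN hΛ hΛN
  have htrunc := hmajorant y Λ ν M hσ₀ hΛ hceil
  have htail := exp_two_mul_sq_mul_pow_ceil_le hΛ hΛy
  have herror := truncationError_nonneg hσ₀.le ν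
  rw [intervalIntegral.integral_add (Continuous.intervalIntegrable (by fun_prop) _ _)
    intervalIntegrable_const] at hmain
  calc _ ≤ C₀ * (C₁ * truncationError (sigmay y) ν + 2 * (1 / Λ) + 9 * (1 / Λ) + C₂ * (1 / Λ)) := by
        refine hmain.trans ?_
        rw [div_eq_mul_one_div C₂]
        gcongr
        linarith
    _ ≤ C₀ * ((C₁ + 11 + C₂) * truncationError (sigmay y) ν + (C₁ + 11 + C₂) * (1 / Λ)) := by
        refine mul_le_mul_of_nonneg_left ?_ hC₀.le
        nlinarith [mul_nonneg hC₂.le herror, mul_pos hC₁ (one_div_pos.mpr hΛ)]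
    _ = C₀ * (C₁ + 11 + C₂) * (truncationError (sigmay y) ν + 1 / Λ) := by ring

lemma exists_abs_intervalDiscrepancy_normalizedLawVy_le :
    ∃ C : ℝ, 0 < C ∧ ∀ᶠ y in atTop, ∀ ν : ℕ, ν ≤ Real.exp (Real.log y ^ (1 / 4 : ℝ)) →
      ∀ T N : ℝ, 32 ≤ N → ∀ a b,
        |intervalDiscrepancy (normalizedLawVy y T (y ^ N)) (edgeworthDensity y ν) a b| ≤
          C * (1 / (√(Real.log y) * Real.log (Real.log y)) + 1 / √N +
            truncationError (sigmay y) ν) := by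
  obtain ⟨C, hC, hmain⟩ := exists_abs_intervalDiscrepancy_le_add_one_div
  refine ⟨16 * C, by positivity, ?_⟩
  filter_upwards [hmain, tendsto_sigmay_atTop.eventually_ge_atTop 0,
    Real.tendsto_log_atTop.eventually_gt_atTop 0, tendsto_log_log_atTop.eventually_gt_atTop 0,
    Real.tendsto_log_atTop.eventually eventually_sqrt_mul_log_le_half]
    with y hmain hσ hlog hloglog hhalf ν hν T N hN a b
  set L := Real.log y
  have : 0 < √N := by positivity
  have : 0 < √L * Real.log L := by positivity
  set Λ := min (√N / 16) (√L * Real.log L)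
  have hΛ : 0 < Λ := by positivity
  have hΛN : 256 * Λ ^ 2 ≤ N := calc
    256 * Λ ^ 2 ≤ 256 * (√N / 16) ^ 2 := by
      gcongr
      exact min_le_left _ _
    _ = N := by
      rw [div_pow, Real.sq_sqrt (by linarith)]
      ring
  have hΛL : 2 * Λ ≤ L := by linarith [min_le_right (√N / 16) (√L * Real.log L)]
  have hinv : 1 / Λ ≤ 16 * (1 / (√L * Real.log L) + 1 / √N) := by
    have h₁ : 0 ≤ 1 / (√L * Real.log L) := by positivity
    have h₂ : 0 ≤ 1 / √N := by positivity
    rcases min_choice (√N / 16) (√L * Real.log L) with h | h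
    · rw [show Λ = √N / 16 from h, one_div_div, div_eq_mul_one_div]
      linarith
    · rw [show Λ = √L * Real.log L from h]
      linarith
  have herror := truncationError_nonneg hσ ν
  calc _ ≤ C * (truncationError (sigmay y) ν + 1 / Λ) := hmain ν hν T N Λ hN hΛ hΛN hΛL a b
    _ ≤ C * (16 * (1 / (√L * Real.log L) + 1 / √N + truncationError (sigmay y) ν)) := by
        gcongr
        linarith
    _ = _ := by ring

lemma exists_abs_intervalDiscrepancy_normalizedLawVy_le_const :
    ∃ C : ℝ, 0 < C ∧ ∀ᶠ y in atTop, ∀ ν : ℕ, ν ≤ Real.exp (Real.log y ^ (1 / 4 : ℝ)) →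
      ∀ T H : ℝ, 0 < H → ∀ a b,
        |intervalDiscrepancy (normalizedLawVy y T H) (edgeworthDensity y ν) a b| ≤ C := by
  obtain ⟨C, hC, hcoef⟩ := exists_sum_factorial_mul_abs_PhiCoefR_div_le
  refine ⟨1 + C, by positivity, ?_⟩
  filter_upwards [tendsto_sigmay_atTop.eventually_gt_atTop 0,
    eventually_logLogAddOne_le_half_sigmay] with y hσ hhalf ν hν T H hH a b
  have := isProbabilityMeasure_normalizedLawVy y T hH
  have hlaw : |(normalizedLawVy y T H).real (Set.Icc a b)| ≤ 1 := by
    rw [abs_of_nonneg measureReal_nonneg]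
    exact measureReal_le_one
  exact (abs_sub _ _).trans (add_le_add hlaw
    ((abs_setIntegral_Icc_edgeworthDensity_le hσ ν a b).trans (hcoef y ν hσ (hhalf ν hν))))

/-! ### The asymptotic formula -/

lemma exists_abs_intervalDiscrepancy_normalizedLawVy_le_of_pos :
    ∃ C : ℝ, 0 < C ∧ ∀ᶠ y in atTop, ∀ ν : ℕ, ν ≤ Real.exp (Real.log y ^ (1 / 4 : ℝ)) →
      ∀ T N : ℝ, 0 < N → ∀ a b,
        |intervalDiscrepancy (normalizedLawVy y T (y ^ N)) (edgeworthDensity y ν) a b| ≤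
          C * (1 / (√(Real.log y) * Real.log (Real.log y)) + 1 / √N +
            truncationError (sigmay y) ν) := by
  obtain ⟨C₁, hC₁, hlong⟩ := exists_abs_intervalDiscrepancy_normalizedLawVy_le
  obtain ⟨C₂, hC₂, hshort⟩ := exists_abs_intervalDiscrepancy_normalizedLawVy_le_const
  refine ⟨C₁ + 6 * C₂, by positivity, ?_⟩
  filter_upwards [hlong, hshort, tendsto_sigmay_atTop.eventually_ge_atTop 0,
    tendsto_log_log_atTop.eventually_ge_atTop 0, eventually_gt_atTop 0]
    with y hlong hshort hσ hloglog hy ν hν T N hN a b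
  have herror := truncationError_nonneg hσ ν
  have hmiddle : 0 ≤ 1 / (√(Real.log y) * Real.log (Real.log y)) := by positivity
  rcases le_or_gt 32 N with h32 | h32
  · refine (hlong ν hν T N h32 a b).trans ?_
    gcongr
    linarith
  · have hsqrt : 1 / 6 ≤ 1 / √N := by
      gcongr
      exact (Real.sqrt_le_left (by norm_num)).2 (by linarith)
    have hN' : (1 / 6 : ℝ) ≤ 1 / (√(Real.log y) * Real.log (Real.log y)) + 1 / √N +
        truncationError (sigmay y) ν := by linarith
    calc _ ≤ C₂ := hshort ν hν T (y ^ N) (Real.rpow_pos_of_pos hy N) a b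
      _ ≤ (C₁ + 6 * C₂) * (1 / 6) := by linarith
      _ ≤ _ := by gcongr

lemma rpow_neg_one_div_two_div_eq {x : ℝ} (hx : 0 ≤ x) (z : ℝ) :
    x ^ (-(1 : ℝ) / 2) / z = 1 / (√x * z) := by
  rw [neg_div, Real.rpow_neg hx, ← Real.sqrt_eq_rpow, ← one_div, div_div]

theorem indicator_Vy_asymptotic_general :
    ∃ C y₀ : ℝ, 0 < C ∧ 2 < y₀ ∧
      ∀ H y : ℝ, 1 < H → y₀ < y →
        ∀ ν : ℕ, (ν : ℝ) ≤ Real.exp ((Real.log y) ^ ((1 : ℝ) / 4)) →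
        ∀ T α β : ℝ,
          |(∫ t in T..(T + H), (Set.Icc α β).indicator (fun _ => (1 : ℝ)) (Vy y t))
            - H / Real.sqrt (2 * π) * ∑ n ∈ Finset.range (ν + 1),
                (PhiCoefR y n / (2 * sigmay y) ^ n) *
                  ∫ u : ℝ, Real.exp (-u ^ 2 / 2) * hermiteEval (2 * n) u *
                    (Set.Icc (α * Real.sqrt (2 / sigmay y))
                      (β * Real.sqrt (2 / sigmay y))).indicator (fun _ => (1 : ℝ)) u|
          ≤ C * H * ((Real.log y) ^ (-(1 : ℝ) / 2) / Real.log (Real.log y)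
              + (Real.log y / Real.log H) ^ ((1 : ℝ) / 2)
              + (1 / ((ν : ℝ) + 1)) *
                  ((Real.log (Real.log ((ν : ℝ) + 2)) + 1) / sigmay y) ^ (ν + 1)) := by
  obtain ⟨C, hC, hmain⟩ := exists_abs_intervalDiscrepancy_normalizedLawVy_le_of_pos
  obtain ⟨y₁, hy₁⟩ := eventually_atTop.1
    (hmain.and (tendsto_sigmay_atTop.eventually_gt_atTop 0))
  refine ⟨C, max y₁ 3, hC, lt_max_of_lt_right (by norm_num),
    fun H y hH hy ν hν T α β ↦ ?_⟩
  obtain ⟨hmain, hσ⟩ := hy₁ y ((le_max_left _ _).trans hy.le)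
  have hy_one : 1 < y := by linarith [le_max_right y₁ 3]
  have hlogy : 0 < Real.log y := Real.log_pos hy_one
  have hlogH : 0 < Real.log H := Real.log_pos hH
  have hpow : y ^ (Real.log H / Real.log y) = H :=
    Real.rpow_logb (by linarith) hy_one.ne' (by linarith)
  have hbound := hmain ν hν T _ (div_pos hlogH hlogy) (α * √(2 / sigmay y)) (β * √(2 / sigmay y))
  rw [hpow, ← rpow_neg_one_div_two_div_eq hlogy.le, one_div (√_), ← Real.sqrt_inv,
    inv_div, Real.sqrt_eq_rpow (_ / Real.log H), truncationError_eq] at hbound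
  rw [intervalIntegral_indicator_Vy hσ (by linarith) T α β,
    ← mul_setIntegral_edgeworthDensity y H ν measurableSet_Icc, ← mul_sub, abs_mul,
    abs_of_pos (by linarith), mul_comm C, mul_assoc]
  gcongr
  exact hbound

/-- **Corollary 1** (Ivić–Korolev). Under the hypotheses of Theorem 3, for `α < β`,
`∫_T^{T+H} χ_{α,β}(V_y(t)) dt = (H/√(2π)) ∑_{n=0}^{ν} (Φ_n/(2σ)ⁿ)
  ∫_{-∞}^{∞} e^{-u²/2} H_{2n}(u) χ_{a,b}(u) du + O(HΔ)`,
where `a = α√(2/σ)`, `b = β√(2/σ)`, with an absolute `O`-constant. -/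
theorem indicator_Vy_asymptotic :
    ∃ C y₀ : ℝ, 0 < C ∧ 2 < y₀ ∧
      ∀ H₀ H y : ℝ, 1 < H₀ → H₀ < H →
        y₀ < y → y ≤ Real.exp (Real.log H / (14000 * Real.log (Real.log H))) →
        ∀ ν : ℕ, (ν : ℝ) ≤ Real.exp ((Real.log y) ^ ((1 : ℝ) / 4)) →
        ∀ T α β : ℝ, α < β →
          |(∫ t in T..(T + H), (Set.Icc α β).indicator (fun _ => (1 : ℝ)) (Vy y t))
            - H / Real.sqrt (2 * π) * ∑ n ∈ Finset.range (ν + 1),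
                (PhiCoefR y n / (2 * sigmay y) ^ n) *
                  ∫ u : ℝ, Real.exp (-u ^ 2 / 2) * hermiteEval (2 * n) u *
                    (Set.Icc (α * Real.sqrt (2 / sigmay y))
                      (β * Real.sqrt (2 / sigmay y))).indicator (fun _ => (1 : ℝ)) u|
          ≤ C * H * ((Real.log y) ^ (-(1 : ℝ) / 2) / Real.log (Real.log y)
              + (Real.log y / Real.log H) ^ ((1 : ℝ) / 2)
              + (1 / ((ν : ℝ) + 1)) *
                  ((Real.log (Real.log ((ν : ℝ) + 2)) + 1) / sigmay y) ^ (ν + 1)) := by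
  obtain ⟨C, y₀, hC, hy₀, h⟩ := indicator_Vy_asymptotic_general
  exact ⟨C, y₀, hC, hy₀, fun _ H y hH₀ hH hy _ ν hν T α β _ ↦
    h H y (hH₀.trans hH) hy ν hν T α β⟩
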